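/- Let p be an odd prime, e = p, I = Z/pZ, and take the multicharge κ = (0) (level ℓ = 1, Λ = Λ_0). Then the group algebra Z_(p)S_n of the symmetric group S_n over the localisation Z_(p) of Z at the prime p is generated as a Z_(p)-algebra by elements f_i (i ∈ I^n), ψ_1,…,ψ_{n−1}, y_1,…,y_n subject only to the relations: y_1 f_i = 0 if i_1 = 0 and f_i = 0 if i_1 ≠ 0 (the cyclotomic relation (y_1)^{(Λ,α_{i_1})} f_i = 0); f_i f_j = δ_{ij} f_i; Σ_{i∈I^n} f_i = 1; y_r f_i = f_i y_r; ψ_r f_i = f_{s_r·i} ψ_r; y_r y_s = y_s y_r; ψ_r y_{r+1} f_i = (y_r ψ_r + δ_{i_r i_{r+1}}) f_i; y_{r+1} ψ_r f_i = (ψ_r y_r + δ_{i_r i_{r+1}}) f_i; ψ_r y_s = y_s ψ_r for s ≠ r,r+1; ψ_r ψ_s = ψ_s ψ_r for |r−s| > 1; ψ_r² f_i equals (y_r − y_{r+1}) f_i if i_r → i_{r+1} ≠ 0, (y_r + p − y_{r+1}) f_i if i_r → i_{r+1} = 0, (y_{r+1} − y_r) f_i if 0 ≠ i_r ← i_{r+1},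 (y_{r+1} + p − y_r) f_i if 0 = i_r ← i_{r+1}, 0 if i_r = i_{r+1}, and f_i otherwise; and (ψ_r ψ_{r+1} ψ_r − ψ_{r+1} ψ_r ψ_{r+1}) f_i equals −f_i if i_{r+2} = i_r → i_{r+1}, f_i if i_{r+2} = i_r ← i_{r+1}, and 0 otherwise. That is, Z_(p)S_n is isomorphic as a Z_(p)-algebra to the algebra presented by these generators and relations. -/

import Mathlib

open scoped BigOperators
open scoped Classical

namespace Paper

/-! ## Quantum integers -/

/-- The quantum integer `[d]_x` in a field, for `d ∈ ℤ`. -/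
noncomputable def qint {K : Type*} [Field K] (x : K) (d : ℤ) : K :=
  if 0 ≤ d then ∑ k ∈ Finset.range d.toNat, x ^ k
  else -∑ k ∈ Finset.range (-d).toNat, x ^ (-((k : ℤ) + 1))

/-- The quantum integer `[d]_t` in a commutative ring, for an invertible `t` and `d ∈ ℤ`. -/
def qintU {O : Type*} [CommRing O] (t : Oˣ) (d : ℤ) : O :=
  if 0 ≤ d then ∑ k ∈ Finset.range d.toNat, (t : O) ^ k
  else -∑ k ∈ Finset.range (-d).toNat, ((t ^ (-((k : ℤ) + 1)) : Oˣ) : O)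

/-! ## Nodes, multipartitions and standard tableaux -/

/-- A node `(l, r, c)`: component `l`, row `r`, column `c` (all `0`-based). -/
abbrev Node : Type := ℕ × ℕ × ℕ

/-- `nodeBelow A B` holds when `B` is strictly below `A`, i.e. `A < B` lexicographically. -/
def nodeBelow (A B : Node) : Prop :=
  A.1 < B.1 ∨ (A.1 = B.1 ∧ (A.2.1 < B.2.1 ∨ (A.2.1 = B.2.1 ∧ A.2.2 < B.2.2)))

/-- An `ℓ`-multipartition of `n`. -/
structure Multipartition (ℓ n : ℕ) : Type where
  part : ℕ → ℕ → ℕ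
  comp_bound : ∀ l, ℓ ≤ l → ∀ r, part l r = 0
  antitone : ∀ l, Antitone (part l)
  row_bound : ∀ l r, n ≤ r → part l r = 0
  size : (∑ l ∈ Finset.range ℓ, ∑ r ∈ Finset.range n, part l r) = n

/-- The diagram of a multipartition. -/
def Multipartition.diagram {ℓ n : ℕ} (μ : Multipartition ℓ n) : Set Node :=
  {A | A.2.2 < μ.part A.1 A.2.1}

/-- A standard tableau: a bijection from the diagram of its shape onto `{1, …, n}`
that increases along rows and down columns of each component (it takes the value
`0` off the diagram, so that it is determined by its entries). -/
structure StdTableau (ℓ n : ℕ) : Type where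
  shape : Multipartition ℓ n
  entry : Node → ℕ
  entry_zero : ∀ A, A ∉ shape.diagram → entry A = 0
  bijOn : Set.BijOn entry shape.diagram (Set.Icc 1 n)
  row_inc : ∀ l r c, (l, r, c + 1) ∈ shape.diagram → entry (l, r, c) < entry (l, r, c + 1)
  col_inc : ∀ l r c, (l, r + 1, c) ∈ shape.diagram → entry (l, r, c) < entry (l, r + 1, c)

/-- The node of a standard tableau containing the entry `k`. -/
noncomputable def StdTableau.node {ℓ n : ℕ} (T : StdTableau ℓ n) (k : ℕ) : Node :=
  Function.invFunOn T.entry T.shape.diagram k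

/-- The content `c_k(T) = κ_l + c - r` of the entry `k` in the tableau `T`
(`1 ≤ k ≤ n`). -/
noncomputable def content {ℓ n : ℕ} (κ : ℕ → ℤ) (T : StdTableau ℓ n) (k : ℕ) : ℤ :=
  κ (T.node k).1 + ((T.node k).2.2 : ℤ) - ((T.node k).2.1 : ℤ)

/-- The residue sequence of a standard tableau, in `I^n` with `I = ℤ/eℤ`. -/
noncomputable def resSeq {ℓ n : ℕ} (e : ℕ) (κ : ℕ → ℤ) (T : StdTableau ℓ n) :
    Fin n → ZMod e :=
  fun k => ((content κ T (k.1 + 1) : ℤ) : ZMod e)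

/-- The residue of a node. -/
def resNode (e : ℕ) (κ : ℕ → ℤ) (A : Node) : ZMod e :=
  ((κ A.1 + (A.2.2 : ℤ) - (A.2.1 : ℤ) : ℤ) : ZMod e)

/-- A set of nodes is the diagram of a multipartition (with at most `ℓ` components)
iff it is finite and downward closed in rows and columns. -/
def IsDiagramSet (ℓ : ℕ) (S : Set Node) : Prop :=
  S.Finite ∧ (∀ A ∈ S, A.1 < ℓ) ∧
    (∀ l r c, (l, r, c + 1) ∈ S → (l, r, c) ∈ S) ∧
    (∀ l r c, (l, r + 1, c) ∈ S → (l, r, c) ∈ S)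

/-- `A` is an addable node of the diagram `S`. -/
def Addable (ℓ : ℕ) (S : Set Node) (A : Node) : Prop :=
  A ∉ S ∧ IsDiagramSet ℓ (S ∪ {A})

/-- `A` is a removable node of the diagram `S`. -/
def Removable (ℓ : ℕ) (S : Set Node) (A : Node) : Prop :=
  A ∈ S ∧ IsDiagramSet ℓ (S \ {A})

/-- `d_A(S)`: the number of addable nodes of `S` of the same residue as `A` strictly
below `A`, minus the number of removable ones. -/
noncomputable def dNode (ℓ e : ℕ) (κ : ℕ → ℤ) (S : Set Node) (A : Node) : ℤ :=
  (Set.ncard {B | Addable ℓ S B ∧ resNode e κ B = resNode e κ A ∧ nodeBelow A B} : ℤ) -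
    (Set.ncard {B | Removable ℓ S B ∧ resNode e κ B = resNode e κ A ∧ nodeBelow A B} : ℤ)

/-- The Brundan–Kleshchev–Wang degree `deg_e(T)` of a standard tableau, written as the
telescoping sum of the recursion `deg_e(T) = deg_e(T↓(n-1)) + d_A(Shape(T))`. -/
noncomputable def degE {ℓ n : ℕ} (e : ℕ) (κ : ℕ → ℤ) (T : StdTableau ℓ n) : ℤ :=
  ∑ m ∈ Finset.Icc 1 n,
    dNode ℓ e κ {A | A ∈ T.shape.diagram ∧ T.entry A ≤ m} (T.node m)

/-- The restriction of the diagram of `T` to entries `≤ m` (the diagram of `Shape(T↓m)`). -/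
def restDiag {ℓ n : ℕ} (T : StdTableau ℓ n) (m : ℕ) : Set Node :=
  {A | A ∈ T.shape.diagram ∧ T.entry A ≤ m}

/-- Dominance order on standard tableaux: `domTab S T` iff `S ⊵ T`. -/
def domTab {ℓ n : ℕ} (S T : StdTableau ℓ n) : Prop :=
  ∀ m l i : ℕ,
    Set.ncard {A | A ∈ restDiag T m ∧ (A.1 < l ∨ (A.1 = l ∧ A.2.1 ≤ i))} ≤
      Set.ncard {A | A ∈ restDiag S m ∧ (A.1 < l ∨ (A.1 = l ∧ A.2.1 ≤ i))}

/-- Interchange the entries `r` and `r + 1` in an entry function. -/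
def swapEntry (f : Node → ℕ) (r : ℕ) : Node → ℕ :=
  fun A => if f A = r then r + 1 else if f A = r + 1 then r else f A

/-- `ρ_r(T) = c_r(T) - c_{r+1}(T)`, the axial distance. -/
noncomputable def rhoTab {ℓ n : ℕ} (κ : ℕ → ℤ) (T : StdTableau ℓ n) (r : ℕ) : ℤ :=
  content κ T r - content κ T (r + 1)

/-- The entry function of the row-reading initial tableau `t^λ`. -/
noncomputable def tlamEntry {ℓ n : ℕ} (μ : Multipartition ℓ n) (A : Node) : ℕ :=
  if A ∈ μ.diagram then
    (∑ l ∈ Finset.range A.1, ∑ r ∈ Finset.range n, μ.part l r) +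
      (∑ r ∈ Finset.range A.2.1, μ.part A.1 r) + A.2.2 + 1
  else 0

/-- The finite set of possible contents of standard tableaux of size `n`. -/
noncomputable def contFinset (ℓ n : ℕ) (κ : ℕ → ℤ) : Finset ℤ :=
  ((Finset.range ℓ ×ˢ Finset.range n ×ˢ Finset.range n).image
      (fun x => κ x.1 + (x.2.2 : ℤ) - (x.2.1 : ℤ))).filter
    (fun c => ∃ T : StdTableau ℓ n, ∃ k, 1 ≤ k ∧ k ≤ n ∧ content κ T k = c)

/-- The standard tableau (if any) obtained from `T` by interchanging the entries
`r` and `r + 1`; i.e. `T·s_r` if it is standard, and `none` otherwise. -/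
noncomputable def oSwapO {ℓ n : ℕ} (T : StdTableau ℓ n) (r : ℕ) :
    Option (StdTableau ℓ n) :=
  if h : ∃ V : StdTableau ℓ n, V.entry = swapEntry T.entry r then some (Classical.choose h)
  else none

/-- `oSwap` extended to `Option`. -/
noncomputable def oSwap {ℓ n : ℕ} (X : Option (StdTableau ℓ n)) (r : ℕ) :
    Option (StdTableau ℓ n) :=
  X.bind fun T => oSwapO T r

/-- Evaluate a seminormal coefficient system on an optional tableau (by `0` if none). -/
noncomputable def aE {ℓ n : ℕ} {K : Type*} [Field K] (α : ℕ → StdTableau ℓ n → K) (r : ℕ)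
    (X : Option (StdTableau ℓ n)) : K :=
  X.elim 0 (α r)

/-! ## Separation and idempotent subrings -/

/-- `(K, t)` separates `Std(P_n)` (field version):
`[n]!_t ∏_{1 ≤ l < m ≤ ℓ} ∏_{-n < d < n} [κ_l - κ_m + d]_t ≠ 0`. -/
def SeparatesF {K : Type*} [Field K] (t : Kˣ) (n ℓ : ℕ) (κ : ℕ → ℤ) : Prop :=
  ((∏ d ∈ Finset.Icc 1 n, qint (t : K) (d : ℤ)) *
      ∏ l ∈ Finset.range ℓ, ∏ m ∈ Finset.Ioo l ℓ,
        ∏ d ∈ Finset.Ioo (-(n : ℤ)) (n : ℤ), qint (t : K) (κ l - κ m + d)) ≠ 0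

/-- `(O, t)` separates `Std(P_n)` (subring version): the separation element is a unit. -/
def SeparatesU {O : Type*} [CommRing O] (t : Oˣ) (n ℓ : ℕ) (κ : ℕ → ℤ) : Prop :=
  IsUnit ((∏ d ∈ Finset.Icc 1 n, qintU t (d : ℤ)) *
      ∏ l ∈ Finset.range ℓ, ∏ m ∈ Finset.Ioo l ℓ,
        ∏ d ∈ Finset.Ioo (-(n : ℤ)) (n : ℤ), qintU t (κ l - κ m + d))

/-- `(O, t)` is an `e`-idempotent subring of the field `K`. -/
def IsIdempotentSubring {K : Type*} [Field K] (O : Subring K) (t : Oˣ) (e n ℓ : ℕ)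
    (κ : ℕ → ℤ) : Prop :=
  SeparatesU t n ℓ κ ∧
    (∀ k : ℤ, ¬(e : ℤ) ∣ k → IsUnit (qintU t k)) ∧
    (∀ k : ℤ, (e : ℤ) ∣ k → qintU t k ∈ Ideal.jacobson (⊥ : Ideal O))

/-! ## The cyclotomic Hecke algebra, by generators and relations -/

/-- Generators `L_1, …, L_n`, `T_1, …, T_{n-1}` (here `0`-based). -/
inductive HeckeGen (n : ℕ) : Type
  | L : Fin n → HeckeGen n
  | T : Fin (n - 1) → HeckeGen n

/-- The position `r` of the pair `(r, r+1)` interchanged by the `r`-th transposition. -/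
def pL {n : ℕ} (r : Fin (n - 1)) : Fin n := ⟨r.1, by have := r.2; omega⟩

/-- The position `r + 1` of the pair interchanged by the `r`-th transposition. -/
def pR {n : ℕ} (r : Fin (n - 1)) : Fin n := ⟨r.1 + 1, by have := r.2; omega⟩

/-- The position `r + 2`, used in braid relations. -/
def pM {n : ℕ} (r : Fin (n - 1)) (hr : r.1 + 1 < n - 1) : Fin n := ⟨r.1 + 2, by omega⟩

/-- The free algebra generator `L_k`. -/
def hL (R : Type*) [CommRing R] {n : ℕ} (k : Fin n) : FreeAlgebra R (HeckeGen n) :=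
  FreeAlgebra.ι R (HeckeGen.L k)

/-- The free algebra generator `T_r`. -/
def hT (R : Type*) [CommRing R] {n : ℕ} (r : Fin (n - 1)) : FreeAlgebra R (HeckeGen n) :=
  FreeAlgebra.ι R (HeckeGen.T r)

/-- The defining relations of the integral cyclotomic Hecke algebra `H_n(R, t, κ)`. -/
inductive HeckeRel (R : Type*) [CommRing R] (t : Rˣ) (n ℓ : ℕ) (κ : ℕ → ℤ) :
    FreeAlgebra R (HeckeGen n) → FreeAlgebra R (HeckeGen n) → Prop
  | cyc (h : 0 < n) :
      HeckeRel R t n ℓ κ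
        (((List.range ℓ).map fun l =>
          hL R (⟨0, h⟩ : Fin n) - algebraMap R _ (qintU t (κ l))).prod) 0
  | quad (r : Fin (n - 1)) :
      HeckeRel R t n ℓ κ ((hT R r + 1) * (hT R r - algebraMap R _ (t : R))) 0
  | LL (k m : Fin n) : HeckeRel R t n ℓ κ (hL R k * hL R m) (hL R m * hL R k)
  | TTfar (r s : Fin (n - 1)) (h : r.1 + 1 < s.1 ∨ s.1 + 1 < r.1) :
      HeckeRel R t n ℓ κ (hT R r * hT R s) (hT R s * hT R r)
  | braid (r s : Fin (n - 1)) (h : s.1 = r.1 + 1) :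
      HeckeRel R t n ℓ κ (hT R r * hT R s * hT R r) (hT R s * hT R r * hT R s)
  | TL (r : Fin (n - 1)) (k : Fin n) (h : k.1 ≠ r.1 ∧ k.1 ≠ r.1 + 1) :
      HeckeRel R t n ℓ κ (hT R r * hL R k) (hL R k * hT R r)
  | LT (r : Fin (n - 1)) :
      HeckeRel R t n ℓ κ (hL R (pR r) * (hT R r - algebraMap R _ (t : R) + 1))
        (hT R r * hL R (pL r) + 1)

/-- The integral cyclotomic Hecke algebra of type `A`, `H_n(R, t, κ)`. -/
noncomputable abbrev CycHecke (R : Type*) [CommRing R] (t : Rˣ) (n ℓ : ℕ) (κ : ℕ → ℤ) :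
    Type _ :=
  RingQuot (HeckeRel R t n ℓ κ)

/-- The generator `L_k` of the cyclotomic Hecke algebra. -/
noncomputable def Lgen (R : Type*) [CommRing R] (t : Rˣ) (n ℓ : ℕ) (κ : ℕ → ℤ)
    (k : Fin n) : CycHecke R t n ℓ κ :=
  RingQuot.mkAlgHom R (HeckeRel R t n ℓ κ) (hL R k)

/-- The generator `T_r` of the cyclotomic Hecke algebra. -/
noncomputable def Tgen (R : Type*) [CommRing R] (t : Rˣ) (n ℓ : ℕ) (κ : ℕ → ℤ)
    (r : Fin (n - 1)) : CycHecke R t n ℓ κ :=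
  RingQuot.mkAlgHom R (HeckeRel R t n ℓ κ) (hT R r)

end Paper
/-! ## Quiver Hecke (KLR) algebras, by generators and relations -/

namespace Paper

/-- Generators `e(i)` (`i ∈ I^n`), `ψ_1, …, ψ_{n-1}`, `y_1, …, y_n` (here `0`-based). -/
inductive KLRGen (n e : ℕ) : Type
  | idem : (Fin n → ZMod e) → KLRGen n e
  | psi : Fin (n - 1) → KLRGen n e
  | y : Fin n → KLRGen n e

/-- The free algebra generator `e(i)`. -/
def kE (R : Type*) [CommRing R] {n e : ℕ} (i : Fin n → ZMod e) :
    FreeAlgebra R (KLRGen n e) :=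
  FreeAlgebra.ι R (KLRGen.idem i)

/-- The free algebra generator `ψ_r`. -/
def kPsi (R : Type*) [CommRing R] {n e : ℕ} (r : Fin (n - 1)) :
    FreeAlgebra R (KLRGen n e) :=
  FreeAlgebra.ι R (KLRGen.psi r)

/-- The free algebra generator `y_k`. -/
def kY (R : Type*) [CommRing R] {n e : ℕ} (k : Fin n) : FreeAlgebra R (KLRGen n e) :=
  FreeAlgebra.ι R (KLRGen.y k)

/-- `s_r · i`: interchange the entries of `i` at positions `r` and `r + 1`. -/
def swapSeq {n e : ℕ} (i : Fin n → ZMod e) (r : Fin (n - 1)) : Fin n → ZMod e :=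
  fun k => if k = pL r then i (pR r) else if k = pR r then i (pL r) else i k

/-- The defining relations of the cyclotomic quiver Hecke algebra `R_n^Λ(R)` where
`Λ = Σ_l Λ_{κ_l mod e}`. -/
inductive KLRRel (R : Type*) [CommRing R] (n e ℓ : ℕ) [NeZero e] (κ : ℕ → ℤ) :
    FreeAlgebra R (KLRGen n e) → FreeAlgebra R (KLRGen n e) → Prop
  | cyc (h : 0 < n) (i : Fin n → ZMod e) :
      KLRRel R n e ℓ κ
        ((kY R (⟨0, h⟩ : Fin n)) ^
            (((Finset.range ℓ).filter fun l => ((κ l : ZMod e) = i ⟨0, h⟩)).card) *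
          kE R i) 0
  | orth (i j : Fin n → ZMod e) (h : i ≠ j) : KLRRel R n e ℓ κ (kE R i * kE R j) 0
  | idem (i : Fin n → ZMod e) : KLRRel R n e ℓ κ (kE R i * kE R i) (kE R i)
  | complete : KLRRel R n e ℓ κ (∑ i : Fin n → ZMod e, kE R i) 1
  | yE (k : Fin n) (i : Fin n → ZMod e) :
      KLRRel R n e ℓ κ (kY R k * kE R i) (kE R i * kY R k)
  | psiE (r : Fin (n - 1)) (i : Fin n → ZMod e) :
      KLRRel R n e ℓ κ (kPsi R r * kE R i) (kE R (swapSeq i r) * kPsi R r)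
  | yy (k m : Fin n) : KLRRel R n e ℓ κ (kY R k * kY R m) (kY R m * kY R k)
  | psiyEq (r : Fin (n - 1)) (i : Fin n → ZMod e) (h : i (pL r) = i (pR r)) :
      KLRRel R n e ℓ κ (kPsi R r * kY R (pR r) * kE R i)
        ((kY R (pL r) * kPsi R r + 1) * kE R i)
  | psiyNe (r : Fin (n - 1)) (i : Fin n → ZMod e) (h : i (pL r) ≠ i (pR r)) :
      KLRRel R n e ℓ κ (kPsi R r * kY R (pR r) * kE R i)
        (kY R (pL r) * kPsi R r * kE R i)
  | ypsiEq (r : Fin (n - 1)) (i : Fin n → ZMod e) (h : i (pL r) = i (pR r)) :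
      KLRRel R n e ℓ κ (kY R (pR r) * kPsi R r * kE R i)
        ((kPsi R r * kY R (pL r) + 1) * kE R i)
  | ypsiNe (r : Fin (n - 1)) (i : Fin n → ZMod e) (h : i (pL r) ≠ i (pR r)) :
      KLRRel R n e ℓ κ (kY R (pR r) * kPsi R r * kE R i)
        (kPsi R r * kY R (pL r) * kE R i)
  | psiyFar (r : Fin (n - 1)) (k : Fin n) (h : k.1 ≠ r.1 ∧ k.1 ≠ r.1 + 1) :
      KLRRel R n e ℓ κ (kPsi R r * kY R k) (kY R k * kPsi R r)
  | psipsiFar (r s : Fin (n - 1)) (h : r.1 + 1 < s.1 ∨ s.1 + 1 < r.1) :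
      KLRRel R n e ℓ κ (kPsi R r * kPsi R s) (kPsi R s * kPsi R r)
  | quadEq (r : Fin (n - 1)) (i : Fin n → ZMod e) (h : i (pL r) = i (pR r)) :
      KLRRel R n e ℓ κ (kPsi R r ^ 2 * kE R i) 0
  | quadR (r : Fin (n - 1)) (i : Fin n → ZMod e)
      (h1 : i (pR r) = i (pL r) + 1) (h2 : i (pL r) ≠ i (pR r) + 1) :
      KLRRel R n e ℓ κ (kPsi R r ^ 2 * kE R i) ((kY R (pL r) - kY R (pR r)) * kE R i)
  | quadL (r : Fin (n - 1)) (i : Fin n → ZMod e)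
      (h1 : i (pL r) = i (pR r) + 1) (h2 : i (pR r) ≠ i (pL r) + 1) :
      KLRRel R n e ℓ κ (kPsi R r ^ 2 * kE R i) ((kY R (pR r) - kY R (pL r)) * kE R i)
  | quadBoth (r : Fin (n - 1)) (i : Fin n → ZMod e)
      (h1 : i (pR r) = i (pL r) + 1) (h2 : i (pL r) = i (pR r) + 1) :
      KLRRel R n e ℓ κ (kPsi R r ^ 2 * kE R i)
        ((kY R (pR r) - kY R (pL r)) * (kY R (pL r) - kY R (pR r)) * kE R i)
  | quadNone (r : Fin (n - 1)) (i : Fin n → ZMod e) (h1 : i (pL r) ≠ i (pR r))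
      (h2 : i (pR r) ≠ i (pL r) + 1) (h3 : i (pL r) ≠ i (pR r) + 1) :
      KLRRel R n e ℓ κ (kPsi R r ^ 2 * kE R i) (kE R i)
  | braidR (r : Fin (n - 1)) (hr : r.1 + 1 < n - 1) (i : Fin n → ZMod e)
      (h0 : i (pM r hr) = i (pL r)) (h1 : i (pR r) = i (pL r) + 1)
      (h2 : i (pL r) ≠ i (pR r) + 1) :
      KLRRel R n e ℓ κ (kPsi R r * kPsi R ⟨r.1 + 1, hr⟩ * kPsi R r * kE R i)
        ((kPsi R ⟨r.1 + 1, hr⟩ * kPsi R r * kPsi R ⟨r.1 + 1, hr⟩ - 1) * kE R i)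
  | braidL (r : Fin (n - 1)) (hr : r.1 + 1 < n - 1) (i : Fin n → ZMod e)
      (h0 : i (pM r hr) = i (pL r)) (h1 : i (pL r) = i (pR r) + 1)
      (h2 : i (pR r) ≠ i (pL r) + 1) :
      KLRRel R n e ℓ κ (kPsi R r * kPsi R ⟨r.1 + 1, hr⟩ * kPsi R r * kE R i)
        ((kPsi R ⟨r.1 + 1, hr⟩ * kPsi R r * kPsi R ⟨r.1 + 1, hr⟩ + 1) * kE R i)
  | braidBoth (r : Fin (n - 1)) (hr : r.1 + 1 < n - 1) (i : Fin n → ZMod e)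
      (h0 : i (pM r hr) = i (pL r)) (h1 : i (pR r) = i (pL r) + 1)
      (h2 : i (pL r) = i (pR r) + 1) :
      KLRRel R n e ℓ κ (kPsi R r * kPsi R ⟨r.1 + 1, hr⟩ * kPsi R r * kE R i)
        ((kPsi R ⟨r.1 + 1, hr⟩ * kPsi R r * kPsi R ⟨r.1 + 1, hr⟩ +
            kY R (pL r) - 2 * kY R (pR r) + kY R (pM r hr)) * kE R i)
  | braidNone (r : Fin (n - 1)) (hr : r.1 + 1 < n - 1) (i : Fin n → ZMod e)
      (h : ¬(i (pM r hr) = i (pL r) ∧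
        (i (pR r) = i (pL r) + 1 ∨ i (pL r) = i (pR r) + 1))) :
      KLRRel R n e ℓ κ (kPsi R r * kPsi R ⟨r.1 + 1, hr⟩ * kPsi R r * kE R i)
        (kPsi R ⟨r.1 + 1, hr⟩ * kPsi R r * kPsi R ⟨r.1 + 1, hr⟩ * kE R i)

/-- The cyclotomic quiver Hecke algebra `R_n^Λ(R)`, `Λ = Σ_l Λ_{κ_l mod e}`. -/
noncomputable abbrev KLR (R : Type*) [CommRing R] (n e ℓ : ℕ) [NeZero e] (κ : ℕ → ℤ) :
    Type _ :=
  RingQuot (KLRRel R n e ℓ κ)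

/-- The generator `e(i)` of the cyclotomic quiver Hecke algebra. -/
noncomputable def KeGen (R : Type*) [CommRing R] (n e ℓ : ℕ) [NeZero e] (κ : ℕ → ℤ)
    (i : Fin n → ZMod e) : KLR R n e ℓ κ :=
  RingQuot.mkAlgHom R (KLRRel R n e ℓ κ) (kE R i)

/-- The generator `ψ_r` of the cyclotomic quiver Hecke algebra. -/
noncomputable def KpsiGen (R : Type*) [CommRing R] (n e ℓ : ℕ) [NeZero e] (κ : ℕ → ℤ)
    (r : Fin (n - 1)) : KLR R n e ℓ κ :=
  RingQuot.mkAlgHom R (KLRRel R n e ℓ κ) (kPsi R r)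

/-- The generator `y_k` of the cyclotomic quiver Hecke algebra. -/
noncomputable def KyGen (R : Type*) [CommRing R] (n e ℓ : ℕ) [NeZero e] (κ : ℕ → ℤ)
    (k : Fin n) : KLR R n e ℓ κ :=
  RingQuot.mkAlgHom R (KLRRel R n e ℓ κ) (kY R k)

end Paper
/-! ## The deformed cyclotomic quiver Hecke algebra -/

namespace Paper

/-- `y_k^⟨d⟩ = t^d y_k + [d]_t` in the free algebra. -/
def ydot (R : Type*) [CommRing R] (t : Rˣ) {n e : ℕ} (d : ℤ) (k : Fin n) :
    FreeAlgebra R (KLRGen n e) :=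
  algebraMap R _ ((t ^ d : Rˣ) : R) * kY R k + algebraMap R _ (qintU t d)

/-- `ρ_r(i) = î_r - î_{r+1}` for `i ∈ I^n`. -/
def rhoI {n e : ℕ} (i : Fin n → ZMod e) (r : Fin (n - 1)) : ℤ :=
  ((i (pL r)).val : ℤ) - ((i (pR r)).val : ℤ)

/-- The defining relations of the deformed cyclotomic quiver Hecke algebra `R_n(O)`. -/
inductive DefKLRRel (R : Type*) [CommRing R] (t : Rˣ) (n e ℓ : ℕ) [NeZero e] (κ : ℕ → ℤ) :
    FreeAlgebra R (KLRGen n e) → FreeAlgebra R (KLRGen n e) → Prop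
  | cyc (h : 0 < n) (i : Fin n → ZMod e) :
      DefKLRRel R t n e ℓ κ
        ((((List.range ℓ).map fun l =>
            if ((κ l : ZMod e) = i ⟨0, h⟩) then
              kY R (⟨0, h⟩ : Fin n) -
                algebraMap R _ (qintU t (κ l - ((i ⟨0, h⟩).val : ℤ)))
            else 1).prod) * kE R i) 0
  | orth (i j : Fin n → ZMod e) (h : i ≠ j) : DefKLRRel R t n e ℓ κ (kE R i * kE R j) 0
  | idem (i : Fin n → ZMod e) : DefKLRRel R t n e ℓ κ (kE R i * kE R i) (kE R i)
  | complete : DefKLRRel R t n e ℓ κ (∑ i : Fin n → ZMod e, kE R i) 1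
  | yE (k : Fin n) (i : Fin n → ZMod e) :
      DefKLRRel R t n e ℓ κ (kY R k * kE R i) (kE R i * kY R k)
  | psiE (r : Fin (n - 1)) (i : Fin n → ZMod e) :
      DefKLRRel R t n e ℓ κ (kPsi R r * kE R i) (kE R (swapSeq i r) * kPsi R r)
  | yy (k m : Fin n) : DefKLRRel R t n e ℓ κ (kY R k * kY R m) (kY R m * kY R k)
  | psiyEq (r : Fin (n - 1)) (i : Fin n → ZMod e) (h : i (pL r) = i (pR r)) :
      DefKLRRel R t n e ℓ κ (kPsi R r * kY R (pR r) * kE R i)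
        ((kY R (pL r) * kPsi R r + 1) * kE R i)
  | psiyNe (r : Fin (n - 1)) (i : Fin n → ZMod e) (h : i (pL r) ≠ i (pR r)) :
      DefKLRRel R t n e ℓ κ (kPsi R r * kY R (pR r) * kE R i)
        (kY R (pL r) * kPsi R r * kE R i)
  | ypsiEq (r : Fin (n - 1)) (i : Fin n → ZMod e) (h : i (pL r) = i (pR r)) :
      DefKLRRel R t n e ℓ κ (kY R (pR r) * kPsi R r * kE R i)
        ((kPsi R r * kY R (pL r) + 1) * kE R i)
  | ypsiNe (r : Fin (n - 1)) (i : Fin n → ZMod e) (h : i (pL r) ≠ i (pR r)) :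
      DefKLRRel R t n e ℓ κ (kY R (pR r) * kPsi R r * kE R i)
        (kPsi R r * kY R (pL r) * kE R i)
  | psiyFar (r : Fin (n - 1)) (k : Fin n) (h : k.1 ≠ r.1 ∧ k.1 ≠ r.1 + 1) :
      DefKLRRel R t n e ℓ κ (kPsi R r * kY R k) (kY R k * kPsi R r)
  | psipsiFar (r s : Fin (n - 1)) (h : r.1 + 1 < s.1 ∨ s.1 + 1 < r.1) :
      DefKLRRel R t n e ℓ κ (kPsi R r * kPsi R s) (kPsi R s * kPsi R r)
  | quadEq (r : Fin (n - 1)) (i : Fin n → ZMod e) (h : i (pL r) = i (pR r)) :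
      DefKLRRel R t n e ℓ κ (kPsi R r ^ 2 * kE R i) 0
  | quadR (r : Fin (n - 1)) (i : Fin n → ZMod e)
      (h1 : i (pR r) = i (pL r) + 1) (h2 : i (pL r) ≠ i (pR r) + 1) :
      DefKLRRel R t n e ℓ κ (kPsi R r ^ 2 * kE R i)
        ((ydot R t (1 + rhoI i r) (pL r) - kY R (pR r)) * kE R i)
  | quadL (r : Fin (n - 1)) (i : Fin n → ZMod e)
      (h1 : i (pL r) = i (pR r) + 1) (h2 : i (pR r) ≠ i (pL r) + 1) :
      DefKLRRel R t n e ℓ κ (kPsi R r ^ 2 * kE R i)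
        ((ydot R t (1 - rhoI i r) (pR r) - kY R (pL r)) * kE R i)
  | quadBoth (r : Fin (n - 1)) (i : Fin n → ZMod e)
      (h1 : i (pR r) = i (pL r) + 1) (h2 : i (pL r) = i (pR r) + 1) :
      DefKLRRel R t n e ℓ κ (kPsi R r ^ 2 * kE R i)
        ((ydot R t (1 + rhoI i r) (pL r) - kY R (pR r)) *
          (ydot R t (1 - rhoI i r) (pR r) - kY R (pL r)) * kE R i)
  | quadNone (r : Fin (n - 1)) (i : Fin n → ZMod e) (h1 : i (pL r) ≠ i (pR r))
      (h2 : i (pR r) ≠ i (pL r) + 1) (h3 : i (pL r) ≠ i (pR r) + 1) :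
      DefKLRRel R t n e ℓ κ (kPsi R r ^ 2 * kE R i) (kE R i)
  | braidBoth (r : Fin (n - 1)) (hr : r.1 + 1 < n - 1) (i : Fin n → ZMod e)
      (h0 : i (pM r hr) = i (pL r)) (h1 : i (pR r) = i (pL r) + 1)
      (h2 : i (pL r) = i (pR r) + 1) :
      DefKLRRel R t n e ℓ κ
        ((kPsi R r * kPsi R ⟨r.1 + 1, hr⟩ * kPsi R r -
            kPsi R ⟨r.1 + 1, hr⟩ * kPsi R r * kPsi R ⟨r.1 + 1, hr⟩) * kE R i)
        ((ydot R t (1 + rhoI i r) (pL r) + ydot R t (1 + rhoI i r) (pM r hr) -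
            ydot R t (1 + rhoI i r) (pR r) - ydot R t (1 - rhoI i r) (pR r)) * kE R i)
  | braidR (r : Fin (n - 1)) (hr : r.1 + 1 < n - 1) (i : Fin n → ZMod e)
      (h0 : i (pM r hr) = i (pL r)) (h1 : i (pR r) = i (pL r) + 1)
      (h2 : i (pL r) ≠ i (pR r) + 1) :
      DefKLRRel R t n e ℓ κ
        ((kPsi R r * kPsi R ⟨r.1 + 1, hr⟩ * kPsi R r -
            kPsi R ⟨r.1 + 1, hr⟩ * kPsi R r * kPsi R ⟨r.1 + 1, hr⟩) * kE R i)
        (algebraMap R _ (-(((t ^ (1 + rhoI i r) : Rˣ) : R))) * kE R i)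
  | braidL (r : Fin (n - 1)) (hr : r.1 + 1 < n - 1) (i : Fin n → ZMod e)
      (h0 : i (pM r hr) = i (pL r)) (h1 : i (pL r) = i (pR r) + 1)
      (h2 : i (pR r) ≠ i (pL r) + 1) :
      DefKLRRel R t n e ℓ κ
        ((kPsi R r * kPsi R ⟨r.1 + 1, hr⟩ * kPsi R r -
            kPsi R ⟨r.1 + 1, hr⟩ * kPsi R r * kPsi R ⟨r.1 + 1, hr⟩) * kE R i)
        (kE R i)
  | braidNone (r : Fin (n - 1)) (hr : r.1 + 1 < n - 1) (i : Fin n → ZMod e)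
      (h : ¬(i (pM r hr) = i (pL r) ∧
        (i (pR r) = i (pL r) + 1 ∨ i (pL r) = i (pR r) + 1))) :
      DefKLRRel R t n e ℓ κ
        ((kPsi R r * kPsi R ⟨r.1 + 1, hr⟩ * kPsi R r -
            kPsi R ⟨r.1 + 1, hr⟩ * kPsi R r * kPsi R ⟨r.1 + 1, hr⟩) * kE R i) 0

/-- The deformed cyclotomic quiver Hecke algebra `R_n(R)`. -/
noncomputable abbrev DefKLR (R : Type*) [CommRing R] (t : Rˣ) (n e ℓ : ℕ) [NeZero e]
    (κ : ℕ → ℤ) : Type _ :=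
  RingQuot (DefKLRRel R t n e ℓ κ)

/-- The generator `f_i` of the deformed cyclotomic quiver Hecke algebra. -/
noncomputable def DfGen (R : Type*) [CommRing R] (t : Rˣ) (n e ℓ : ℕ) [NeZero e]
    (κ : ℕ → ℤ) (i : Fin n → ZMod e) : DefKLR R t n e ℓ κ :=
  RingQuot.mkAlgHom R (DefKLRRel R t n e ℓ κ) (kE R i)

/-- The generator `ψ_r` of the deformed cyclotomic quiver Hecke algebra. -/
noncomputable def DpsiGen (R : Type*) [CommRing R] (t : Rˣ) (n e ℓ : ℕ) [NeZero e]
    (κ : ℕ → ℤ) (r : Fin (n - 1)) : DefKLR R t n e ℓ κ :=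
  RingQuot.mkAlgHom R (DefKLRRel R t n e ℓ κ) (kPsi R r)

/-- The generator `y_k` of the deformed cyclotomic quiver Hecke algebra. -/
noncomputable def DyGen (R : Type*) [CommRing R] (t : Rˣ) (n e ℓ : ℕ) [NeZero e]
    (κ : ℕ → ℤ) (k : Fin n) : DefKLR R t n e ℓ κ :=
  RingQuot.mkAlgHom R (DefKLRRel R t n e ℓ κ) (kY R k)

/-! ## Seminormal idempotents -/

/-- The seminormal idempotent `F_T` of the semisimple cyclotomic Hecke algebra:
`F_T = ∏_{k=1}^n ∏_{c ∈ Cont(n), [c_k(T)] ≠ [c]} (L_k - [c]) / ([c_k(T)] - [c])`. -/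
noncomputable def Fidem (K : Type*) [Field K] (tK : Kˣ) (n ℓ : ℕ) (κ : ℕ → ℤ)
    (T : StdTableau ℓ n) : CycHecke K tK n ℓ κ :=
  ((List.finRange n).map (fun k =>
    (((contFinset ℓ n κ).sort (· ≤ ·)).map (fun c =>
      if qint (tK : K) (content κ T (k.1 + 1)) ≠ qint (tK : K) c then
        (Lgen K tK n ℓ κ k - algebraMap K _ (qint (tK : K) c)) *
          algebraMap K _ ((qint (tK : K) (content κ T (k.1 + 1)) - qint (tK : K) c)⁻¹)
      else 1)).prod)).prod

/-- The residue idempotent `f_i = Σ_{T ∈ Std(i)} F_T`. -/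
noncomputable def fres (K : Type*) [Field K] (tK : Kˣ) (n ℓ e : ℕ) (κ : ℕ → ℤ)
    (i : Fin n → ZMod e) : CycHecke K tK n ℓ κ :=
  ∑ᶠ T : {T : StdTableau ℓ n // resSeq e κ T = i}, Fidem K tK n ℓ κ T.1

/-- The simultaneous two-sided eigenspace `H_{S,T}` of the Jucys–Murphy elements. -/
noncomputable def eigSub (K : Type*) [Field K] (tK : Kˣ) (n ℓ : ℕ) (κ : ℕ → ℤ)
    (S T : StdTableau ℓ n) : Submodule K (CycHecke K tK n ℓ κ) where
  carrier := {h | ∀ k : Fin n,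
      Lgen K tK n ℓ κ k * h = qint (tK : K) (content κ S (k.1 + 1)) • h ∧
      h * Lgen K tK n ℓ κ k = qint (tK : K) (content κ T (k.1 + 1)) • h}
  add_mem' := by
    intro a b ha hb
    intro k
    obtain ⟨h1, h2⟩ := ha k
    obtain ⟨h3, h4⟩ := hb k
    exact ⟨by rw [mul_add, h1, h3, smul_add], by rw [add_mul, h2, h4, smul_add]⟩
  zero_mem' := by intro k; simp
  smul_mem' := by
    intro c a ha
    intro k
    obtain ⟨h1, h2⟩ := ha k
    constructor
    · rw [mul_smul_comm, h1, smul_comm]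
    · rw [smul_mul_assoc, h2, smul_comm]

end Paper

namespace Paper

/-- The defining relations, over `ℤ_(p)`, of the KLR-style presentation of the group
algebra of the symmetric group (level `ℓ = 1`, multicharge `κ = (0)`, `Λ = Λ_0`,
`e = p` an odd prime). -/
inductive S1Rel (R : Type*) [CommRing R] (n p : ℕ) [NeZero p] :
    FreeAlgebra R (KLRGen n p) → FreeAlgebra R (KLRGen n p) → Prop
  | cyc0 (h : 0 < n) (i : Fin n → ZMod p) (hi : i ⟨0, h⟩ = 0) :
      S1Rel R n p (kY R (⟨0, h⟩ : Fin n) * kE R i) 0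
  | cyc1 (h : 0 < n) (i : Fin n → ZMod p) (hi : i ⟨0, h⟩ ≠ 0) :
      S1Rel R n p (kE R i) 0
  | orth (i j : Fin n → ZMod p) (h : i ≠ j) : S1Rel R n p (kE R i * kE R j) 0
  | idem (i : Fin n → ZMod p) : S1Rel R n p (kE R i * kE R i) (kE R i)
  | complete : S1Rel R n p (∑ i : Fin n → ZMod p, kE R i) 1
  | yE (k : Fin n) (i : Fin n → ZMod p) : S1Rel R n p (kY R k * kE R i) (kE R i * kY R k)
  | psiE (r : Fin (n - 1)) (i : Fin n → ZMod p) :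
      S1Rel R n p (kPsi R r * kE R i) (kE R (swapSeq i r) * kPsi R r)
  | yy (k m : Fin n) : S1Rel R n p (kY R k * kY R m) (kY R m * kY R k)
  | psiyEq (r : Fin (n - 1)) (i : Fin n → ZMod p) (h : i (pL r) = i (pR r)) :
      S1Rel R n p (kPsi R r * kY R (pR r) * kE R i) ((kY R (pL r) * kPsi R r + 1) * kE R i)
  | psiyNe (r : Fin (n - 1)) (i : Fin n → ZMod p) (h : i (pL r) ≠ i (pR r)) :
      S1Rel R n p (kPsi R r * kY R (pR r) * kE R i) (kY R (pL r) * kPsi R r * kE R i)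
  | ypsiEq (r : Fin (n - 1)) (i : Fin n → ZMod p) (h : i (pL r) = i (pR r)) :
      S1Rel R n p (kY R (pR r) * kPsi R r * kE R i) ((kPsi R r * kY R (pL r) + 1) * kE R i)
  | ypsiNe (r : Fin (n - 1)) (i : Fin n → ZMod p) (h : i (pL r) ≠ i (pR r)) :
      S1Rel R n p (kY R (pR r) * kPsi R r * kE R i) (kPsi R r * kY R (pL r) * kE R i)
  | psiyFar (r : Fin (n - 1)) (k : Fin n) (h : k.1 ≠ r.1 ∧ k.1 ≠ r.1 + 1) :
      S1Rel R n p (kPsi R r * kY R k) (kY R k * kPsi R r)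
  | psipsiFar (r s : Fin (n - 1)) (h : r.1 + 1 < s.1 ∨ s.1 + 1 < r.1) :
      S1Rel R n p (kPsi R r * kPsi R s) (kPsi R s * kPsi R r)
  | quadEq (r : Fin (n - 1)) (i : Fin n → ZMod p) (h : i (pL r) = i (pR r)) :
      S1Rel R n p (kPsi R r ^ 2 * kE R i) 0
  | quadRne (r : Fin (n - 1)) (i : Fin n → ZMod p)
      (h1 : i (pR r) = i (pL r) + 1) (h2 : i (pR r) ≠ 0) :
      S1Rel R n p (kPsi R r ^ 2 * kE R i) ((kY R (pL r) - kY R (pR r)) * kE R i)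
  | quadR0 (r : Fin (n - 1)) (i : Fin n → ZMod p)
      (h1 : i (pR r) = i (pL r) + 1) (h2 : i (pR r) = 0) :
      S1Rel R n p (kPsi R r ^ 2 * kE R i)
        ((kY R (pL r) + (p : FreeAlgebra R (KLRGen n p)) - kY R (pR r)) * kE R i)
  | quadLne (r : Fin (n - 1)) (i : Fin n → ZMod p)
      (h1 : i (pL r) = i (pR r) + 1) (h2 : i (pL r) ≠ 0) :
      S1Rel R n p (kPsi R r ^ 2 * kE R i) ((kY R (pR r) - kY R (pL r)) * kE R i)
  | quadL0 (r : Fin (n - 1)) (i : Fin n → ZMod p)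
      (h1 : i (pL r) = i (pR r) + 1) (h2 : i (pL r) = 0) :
      S1Rel R n p (kPsi R r ^ 2 * kE R i)
        ((kY R (pR r) + (p : FreeAlgebra R (KLRGen n p)) - kY R (pL r)) * kE R i)
  | quadNone (r : Fin (n - 1)) (i : Fin n → ZMod p) (h1 : i (pL r) ≠ i (pR r))
      (h2 : i (pR r) ≠ i (pL r) + 1) (h3 : i (pL r) ≠ i (pR r) + 1) :
      S1Rel R n p (kPsi R r ^ 2 * kE R i) (kE R i)
  | braidR (r : Fin (n - 1)) (hr : r.1 + 1 < n - 1) (i : Fin n → ZMod p)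
      (h0 : i (pM r hr) = i (pL r)) (h1 : i (pR r) = i (pL r) + 1) :
      S1Rel R n p
        ((kPsi R r * kPsi R ⟨r.1 + 1, hr⟩ * kPsi R r -
            kPsi R ⟨r.1 + 1, hr⟩ * kPsi R r * kPsi R ⟨r.1 + 1, hr⟩) * kE R i)
        (-(kE R i))
  | braidL (r : Fin (n - 1)) (hr : r.1 + 1 < n - 1) (i : Fin n → ZMod p)
      (h0 : i (pM r hr) = i (pL r)) (h1 : i (pL r) = i (pR r) + 1) :
      S1Rel R n p
        ((kPsi R r * kPsi R ⟨r.1 + 1, hr⟩ * kPsi R r -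
            kPsi R ⟨r.1 + 1, hr⟩ * kPsi R r * kPsi R ⟨r.1 + 1, hr⟩) * kE R i)
        (kE R i)
  | braidNone (r : Fin (n - 1)) (hr : r.1 + 1 < n - 1) (i : Fin n → ZMod p)
      (h : ¬(i (pM r hr) = i (pL r) ∧
        (i (pR r) = i (pL r) + 1 ∨ i (pL r) = i (pR r) + 1))) :
      S1Rel R n p
        ((kPsi R r * kPsi R ⟨r.1 + 1, hr⟩ * kPsi R r -
            kPsi R ⟨r.1 + 1, hr⟩ * kPsi R r * kPsi R ⟨r.1 + 1, hr⟩) * kE R i) 0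

/-!
The group algebra contains the commutative subring generated by the Jucys–Murphy elements `x_k`, the
presented algebra the one generated by the `y_k`, corrected by residues, and the `f_i`. Both are
images of one universal ring `B`, in which every `x_k` is a root of the same product of factors
`X - c` with integers `c`. Since `p` lies in the Jacobson radical of the base ring, differences of
integers with distinct residues modulo `p` are units, so `B` splits into components indexed by
residue sequences `i`, and `x_k - x_l` is invertible where `i_k ≠ i_l`.

For any homomorphism from `B`, `s_r = ψ_r w_r - c_r` with `w_r` a unit and `c_r` in the commutative
subring is a bijection between the possible values of `ψ_r` and `s_r`. It turns the relations of the
quiver Hecke generators into those of the simple transpositions, and the cyclotomic relation is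
equivalent to `x_1 = 0`. Each presentation therefore gives a homomorphism to the other algebra, and
these are mutually inverse because the correspondence is a bijection.
-/

/-! ## The Coxeter presentation of the symmetric group -/

section Coxeter

variable {M : Type*} [Monoid M]

/-- The Coxeter relations of type `A_m` for `t 0, …, t (m - 1)`; later values of `t` are ignored. -/
structure CoxeterRelations (m : ℕ) (t : ℕ → M) : Prop where
  sq : ∀ r < m, t r * t r = 1
  braid : ∀ r, r + 1 < m → t r * t (r + 1) * t r = t (r + 1) * t r * t (r + 1)
  far : ∀ r u, r + 1 < u → u < m → Commute (t r) (t u)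

theorem CoxeterRelations.mono {m m' : ℕ} {t : ℕ → M} (ht : CoxeterRelations m' t) (h : m ≤ m') :
    CoxeterRelations m t where
  sq r hr := ht.sq r (hr.trans_le h)
  braid r hr := ht.braid r (hr.trans_le h)
  far r u hru hu := ht.far r u hru (hu.trans_le h)

/-- The descending word `t (k + l - 1) * ⋯ * t (k + 1) * t k`, a minimal coset representative. -/
def descWord (t : ℕ → M) (k : ℕ) : ℕ → M
  | 0 => 1
  | l + 1 => t (k + l) * descWord t k l

theorem descWord_succ_left (t : ℕ → M) (k l : ℕ) :
    descWord t k (l + 1) = descWord t (k + 1) l * t k := by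
  induction l with
  | zero => simp [descWord]
  | succ l ih =>
    rw [descWord, ih, descWord, ← mul_assoc]
    congr 3
    omega

theorem descWord_add (t : ℕ → M) (k l m : ℕ) :
    descWord t k (l + m) = descWord t (k + l) m * descWord t k l := by
  induction m with
  | zero => simp [descWord]
  | succ m ih => rw [← add_assoc, descWord, ih, descWord, mul_assoc, add_assoc]

theorem commute_descWord {t : ℕ → M} {k l : ℕ} {g : M}
    (h : ∀ j, k ≤ j → j < k + l → Commute g (t j)) : Commute g (descWord t k l) := by
  induction l with
  | zero => exact Commute.one_right g
  | succ l ih =>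
    exact (h (k + l) (by omega) (by omega)).mul_right (ih fun j hk hj => h j hk (by omega))

theorem CoxeterRelations.descWord_mul {m : ℕ} {t : ℕ → M} (ht : CoxeterRelations m t)
    {k l j : ℕ} (hkj : k ≤ j) (hjl : j + 1 < k + l) (hm : k + l ≤ m) :
    descWord t k l * t (j + 1) = t j * descWord t k l := by
  obtain ⟨d, rfl⟩ := Nat.exists_eq_add_of_le hkj
  obtain ⟨b, rfl⟩ : ∃ b, l = d + 1 + 1 + b := ⟨l - (d + 2), by omega⟩
  have low : Commute (t (k + d + 1)) (descWord t k d) :=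
    commute_descWord fun i _ hi => (ht.far i (k + d + 1) (by omega) (by omega)).symm
  have high : Commute (t (k + d)) (descWord t (k + (d + 1 + 1)) b) :=
    commute_descWord fun i hi _ => ht.far (k + d) i (by omega) (by omega)
  have braid := ht.braid (k + d) (by omega)
  calc descWord t k (d + 1 + 1 + b) * t (k + d + 1)
      = descWord t (k + (d + 1 + 1)) b * (t (k + d + 1) * t (k + d) * t (k + d + 1)) *
          descWord t k d := by
        simp only [descWord_add, descWord, ← add_assoc, mul_assoc, low.eq]
    _ = t (k + d) * descWord t k (d + 1 + 1 + b) := by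
        rw [← braid]
        simp only [descWord_add t k (d + 1 + 1), descWord, mul_assoc, ← high.left_comm]
        simp only [add_assoc]

/-- Normal forms in the monoid generated by `t 0, …, t (m - 1)`: products of one descending word
ending at each level. -/
noncomputable def normalForms (t : ℕ → M) : ℕ → Finset M
  | 0 => {1}
  | m + 1 => Finset.image₂ (fun a kl => a * descWord t kl.1 kl.2) (normalForms t m)
      (Finset.HasAntidiagonal.antidiagonal (m + 1))

theorem mem_normalForms_succ {t : ℕ → M} {m : ℕ} {g : M} :
    g ∈ normalForms t (m + 1) ↔
      ∃ a ∈ normalForms t m, ∃ k l, k + l = m + 1 ∧ a * descWord t k l = g := by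
  simp [normalForms, Finset.mem_image₂]

theorem card_normalForms_le (t : ℕ → M) (m : ℕ) :
    (normalForms t m).card ≤ (m + 1).factorial := by
  induction m with
  | zero => simp [normalForms]
  | succ m ih =>
    calc (normalForms t (m + 1)).card
        ≤ (normalForms t m).card * (Finset.HasAntidiagonal.antidiagonal (m + 1)).card :=
          Finset.card_image₂_le _ _ _
      _ ≤ (m + 1).factorial * (m + 2) := by
          rw [Finset.Nat.card_antidiagonal]
          exact Nat.mul_le_mul_right _ ih
      _ = (m + 2).factorial := by rw [Nat.factorial_succ (m + 1), mul_comm]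

theorem one_mem_normalForms (t : ℕ → M) (m : ℕ) : (1 : M) ∈ normalForms t m := by
  induction m with
  | zero => simp [normalForms]
  | succ m ih => exact mem_normalForms_succ.2 ⟨1, ih, m + 1, 0, rfl, by simp [descWord]⟩

theorem CoxeterRelations.mul_mem_normalForms {m : ℕ} {t : ℕ → M} (ht : CoxeterRelations m t)
    {g : M} (hg : g ∈ normalForms t m) {j : ℕ} (hj : j < m) : g * t j ∈ normalForms t m := by
  induction m generalizing g j with
  | zero => omega
  | succ m ih =>
    obtain ⟨a, ha, k, l, hkl, rfl⟩ := mem_normalForms_succ.1 hg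
    have ih := @ih (ht.mono m.le_succ) a ha
    rw [mem_normalForms_succ]
    rcases lt_trichotomy k j with hkj | rfl | hjk
    · obtain ⟨j, rfl⟩ := Nat.exists_eq_add_of_lt hkj
      refine ⟨a * t (k + j), ih (by omega), k, l, hkl, ?_⟩
      rw [mul_assoc, mul_assoc, ht.descWord_mul (by omega) (by omega) hkl.le]
    · obtain ⟨l, rfl⟩ : ∃ l', l = l' + 1 := ⟨l - 1, by omega⟩
      refine ⟨a, ha, k + 1, l, by omega, ?_⟩
      rw [descWord_succ_left, mul_assoc, mul_assoc, ht.sq k hj, mul_one]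
    · obtain hjk | rfl := (Nat.succ_le_of_lt hjk).lt_or_eq
      · refine ⟨a * t j, ih (by omega), k, l, hkl, ?_⟩
        have : Commute (t j) (descWord t k l) :=
          commute_descWord fun i hki hi => ht.far j i (by omega) (by omega)
        rw [mul_assoc, mul_assoc, this.eq]
      · exact ⟨a, ha, j, l + 1, by omega, by rw [descWord_succ_left, mul_assoc]⟩

theorem CoxeterRelations.closure_subset_normalForms {m : ℕ} {t : ℕ → M}
    (ht : CoxeterRelations m t) :
    (Submonoid.closure (t '' Set.Iio m) : Set M) ⊆ normalForms t m := by
  intro x hx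
  induction hx using Submonoid.closure_induction_right with
  | one => exact one_mem_normalForms t m
  | mul_right x _ y hy ih =>
    obtain ⟨j, hj, rfl⟩ := hy
    exact ht.mul_mem_normalForms ih hj

/-- The adjacent transposition interchanging the positions `r` and `r + 1`. -/
def simpleReflection {n : ℕ} (r : Fin (n - 1)) : Equiv.Perm (Fin n) :=
  Equiv.swap (pL r) (pR r)

theorem closure_range_simpleReflection (n : ℕ) :
    Submonoid.closure (Set.range (simpleReflection (n := n))) = ⊤ := by
  cases n with
  | zero => exact Subsingleton.elim _ _
  | succ n => exact Equiv.Perm.mclosure_swap_castSucc_succ n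

theorem swap_braid {α : Type*} [DecidableEq α] {a b c : α} (hab : a ≠ b) (hac : a ≠ c)
    (hbc : b ≠ c) :
    Equiv.swap a b * Equiv.swap b c * Equiv.swap a b =
      Equiv.swap b c * Equiv.swap a b * Equiv.swap b c := by
  rw [Equiv.swap_mul_swap_mul_swap hab hac, Equiv.swap_comm a b, Equiv.swap_comm b c,
    Equiv.swap_mul_swap_mul_swap hbc.symm hac.symm, Equiv.swap_comm]

/-- The Coxeter relations of the symmetric group `S_n`, for a family indexed like
`simpleReflection`. -/
structure SymmetricRelations {n : ℕ} (s : Fin (n - 1) → M) : Prop where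
  sq : ∀ r, s r * s r = 1
  braid : ∀ (r : Fin (n - 1)) (hr : r.1 + 1 < n - 1),
    s r * s ⟨r.1 + 1, hr⟩ * s r = s ⟨r.1 + 1, hr⟩ * s r * s ⟨r.1 + 1, hr⟩
  far : ∀ r u : Fin (n - 1), r.1 + 1 < u.1 → Commute (s r) (s u)

theorem symmetricRelations_simpleReflection (n : ℕ) :
    SymmetricRelations (simpleReflection (n := n)) where
  sq r := Equiv.swap_mul_self _ _
  braid r hr := by
    refine swap_braid (a := pL r) (b := pR r) (c := pM r hr) ?_ ?_ ?_ <;>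
      simp [pL, pR, pM, Fin.ext_iff]
  far r u hru := by
    refine Equiv.Perm.Disjoint.commute fun x => ?_
    by_cases hx : x.1 = r.1 ∨ x.1 = r.1 + 1
    · right
      apply Equiv.swap_apply_of_ne_of_ne <;> simp only [pL, pR, ne_eq, Fin.ext_iff] <;> omega
    · left
      apply Equiv.swap_apply_of_ne_of_ne <;> simp only [pL, pR, ne_eq, Fin.ext_iff] <;> omega

theorem SymmetricRelations.prod {N : Type*} [Monoid N] {n : ℕ} {s : Fin (n - 1) → M}
    {u : Fin (n - 1) → N} (hs : SymmetricRelations s) (hu : SymmetricRelations u) :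
    SymmetricRelations fun r => (s r, u r) where
  sq r := Prod.ext (hs.sq r) (hu.sq r)
  braid r hr := Prod.ext (hs.braid r hr) (hu.braid r hr)
  far r v hrv := (hs.far r v hrv).prod (hu.far r v hrv)

theorem SymmetricRelations.coxeterRelations {n : ℕ} {s : Fin (n - 1) → M}
    (hs : SymmetricRelations s) :
    CoxeterRelations (n - 1) fun r => if hr : r < n - 1 then s ⟨r, hr⟩ else 1 where
  sq r hr := by simpa only [dif_pos hr] using hs.sq ⟨r, hr⟩
  braid r hr := by
    simpa only [dif_pos hr, dif_pos (Nat.lt_of_succ_lt hr)] using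
      hs.braid ⟨r, Nat.lt_of_succ_lt hr⟩ hr
  far r u hru hu := by
    have hr : r < n - 1 := by omega
    simpa only [dif_pos hr, dif_pos hu] using hs.far ⟨r, hr⟩ ⟨u, hu⟩ hru

theorem SymmetricRelations.closure_subset {n : ℕ} {s : Fin (n - 1) → M}
    (hs : SymmetricRelations s) :
    ∃ F : Finset M, F.card ≤ n.factorial ∧ (Submonoid.closure (Set.range s) : Set M) ⊆ F := by
  refine ⟨_, (card_normalForms_le _ (n - 1)).trans ?_,
    Set.Subset.trans ?_ hs.coxeterRelations.closure_subset_normalForms⟩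
  · cases n <;> simp
  · refine Submonoid.closure_mono ?_
    rintro _ ⟨r, rfl⟩
    exact ⟨r.1, r.2, dif_pos r.2⟩

/- Inside `M × S_n`, the submonoid generated by the pairs `(s r, simpleReflection r)` has at most
`n!` elements and surjects onto `S_n`, so it is the graph of a homomorphism `S_n → M`. -/
theorem SymmetricRelations.exists_monoidHom {n : ℕ} {s : Fin (n - 1) → M}
    (hs : SymmetricRelations s) :
    ∃ φ : Equiv.Perm (Fin n) →* M, ∀ r, φ (simpleReflection r) = s r := by
  have ht := hs.prod (symmetricRelations_simpleReflection n)
  set t : Fin (n - 1) → M × Equiv.Perm (Fin n) := fun r => (s r, simpleReflection r)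
  let Γ := Submonoid.closure (Set.range t)
  have mem_Γ (r) : t r ∈ Γ := Submonoid.subset_closure ⟨r, rfl⟩
  obtain ⟨F, hF, hΓ⟩ := ht.closure_subset
  have : Fintype Γ := (F.finite_toSet.subset hΓ).fintype
  let π : Γ →* Equiv.Perm (Fin n) := (MonoidHom.snd _ _).comp Γ.subtype
  have surjective : Function.Surjective π := by
    rw [← MonoidHom.mrange_eq_top, eq_top_iff, ← closure_range_simpleReflection,
      Submonoid.closure_le]
    rintro _ ⟨r, rfl⟩
    exact ⟨⟨t r, mem_Γ r⟩, rfl⟩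
  have card_le : Fintype.card Γ ≤ Fintype.card (Equiv.Perm (Fin n)) := by
    rw [Fintype.card_perm, Fintype.card_fin, ← Nat.card_eq_fintype_card]
    exact ((Set.ncard_le_ncard hΓ).trans_eq (Set.ncard_coe_finset F)).trans hF
  let e := MulEquiv.ofBijective π <| (Fintype.bijective_iff_surjective_and_card π).2
    ⟨surjective, card_le.antisymm (Fintype.card_le_of_surjective π surjective)⟩
  refine ⟨((MonoidHom.fst _ _).comp Γ.subtype).comp e.symm.toMonoidHom, fun r => ?_⟩
  have : e.symm (simpleReflection r) = ⟨t r, mem_Γ r⟩ := (MulEquiv.symm_apply_eq e).2 rfl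
  simp [this, t]

end Coxeter

/-! ## Straightening through a commutative subring -/

section Straightening

variable {A B : Type*} [Ring A] [CommRing B] {f : B →+* A} {ψ φ : A}

/-- The rule `u ψ = ψ v + t` for moving the element `u` of a commutative ring mapped to `A` by `f`
past `ψ`; the term `t` is called the defect. -/
def Straightens (f : B →+* A) (ψ : A) (u v t : B) : Prop :=
  f u * ψ = ψ * f v + f t

namespace Straightens

variable {u u' v v' t t' : B}

theorem eq (h : Straightens f ψ u v t) : f u * ψ = ψ * f v + f t := h

theorem one : Straightens f ψ 1 1 0 := by
  simp [Straightens]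

theorem add (h : Straightens f ψ u v t) (h' : Straightens f ψ u' v' t') :
    Straightens f ψ (u + u') (v + v') (t + t') := by
  simp only [Straightens, map_add, add_mul, h.eq, h'.eq]
  noncomm_ring

theorem neg (h : Straightens f ψ u v t) : Straightens f ψ (-u) (-v) (-t) := by
  simp only [Straightens, map_neg, neg_mul, h.eq]
  noncomm_ring

theorem sub (h : Straightens f ψ u v t) (h' : Straightens f ψ u' v' t') :
    Straightens f ψ (u - u') (v - v') (t - t') := by
  simpa only [sub_eq_add_neg] using h.add h'.neg

theorem mul (h : Straightens f ψ u v t) (h' : Straightens f ψ u' v' t') :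
    Straightens f ψ (u * u') (v * v') (t * v' + u * t') := by
  simp only [Straightens, map_mul, map_add, mul_assoc, h'.eq, mul_add]
  simp only [← mul_assoc, h.eq, add_mul, add_assoc]

/- Multiply the rule for `D` by `P` on the left and by `P'` on the right. -/
theorem partialInverse {D D' P P' d d' : B} (hD : Straightens f ψ D D' t)
    (hd : Straightens f ψ d d' 0) (hPD : P * D = 1 - d) (hPd : P * d = 0)
    (hPD' : P' * D' = 1 - d') (hPd' : P' * d' = 0) : Straightens f ψ P P' (-(P * t * P')) := by
  have move_compl : f (1 - d) * ψ = ψ * f (1 - d') := by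
    simpa [Straightens] using one.sub hd
  have left : f (P * D) * ψ * f P' = ψ * f P' := by
    rw [hPD, move_compl, mul_assoc, ← map_mul, mul_comm, mul_sub, hPd', mul_one, sub_zero]
  have right : f P * ψ * f (P' * D') = f P * ψ := by
    rw [hPD', mul_assoc, ← move_compl, ← mul_assoc, ← map_mul, mul_sub, hPd, mul_one, sub_zero]
  have move : f (P * D) * ψ * f P' = f P * ψ * f (P' * D') + f (P * t * P') := by
    rw [map_mul, mul_assoc (f P), hD.eq, mul_comm P' D']
    simp only [map_mul]
    noncomm_ring
  rw [left, right] at move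
  rw [Straightens, move, map_neg, add_neg_cancel_right]

end Straightens

/-- The element `ψ w - c`; the simple transpositions of the symmetric group have this shape over
the quiver Hecke generators. -/
def reflection (f : B →+* A) (ψ : A) (w c : B) : A :=
  ψ * f w - f c

theorem reflection_mul_reflection {w c w₁ c₁ w' c' a b : B} (hw : Straightens f ψ w w' a)
    (hc : Straightens f ψ c c' b) :
    reflection f φ w c * reflection f ψ w₁ c₁ =
      φ * ψ * f (w' * w₁) + φ * f (a * w₁ - w * c₁) - ψ * f (c' * w₁) + f (c * c₁ - b * w₁) := by
  calc reflection f φ w c * reflection f ψ w₁ c₁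
      = φ * (f w * ψ) * f w₁ - φ * (f w * f c₁) - f c * ψ * f w₁ + f c * f c₁ := by
        simp only [reflection]
        noncomm_ring
    _ = _ := by
        rw [hw.eq, hc.eq]
        simp only [map_mul, map_sub]
        noncomm_ring

/- The coefficients `α, β, γ, δ` are those of `reflection_mul_reflection`. -/
theorem reflection_mul_expansion {w c w' c' a b w'' c'' e e' a'' b'' w₁ c₁ t u Q α β γ δ : B}
    (hw : Straightens f φ w w' a) (hc : Straightens f φ c c' b)
    (hw' : Straightens f ψ w' w'' e) (hc' : Straightens f ψ c' c'' e')
    (ha : Straightens f ψ a a'' 0) (hb : Straightens f ψ b b'' 0)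
    (hw₁ : Straightens f ψ w w₁ t) (hc₁ : Straightens f ψ c c₁ u) (hQ : ψ * ψ = f Q) :
    reflection f ψ w c * (φ * ψ * f α + φ * f β - ψ * f γ + f δ) =
      ψ * φ * ψ * f (w'' * α) + ψ * φ * f (e * α + w' * β) - φ * ψ * f (c'' * α)
        + ψ * f (a * β - b'' * α + (c₁ - t) * γ + w * δ) - φ * f (e' * α + c' * β)
        + f (Q * (a'' * α - w₁ * γ) - b * β + u * γ - c * δ) := by
  have ha := ha.eq
  have hb := hb.eq
  rw [map_zero, add_zero] at ha hb
  calc reflection f ψ w c * (φ * ψ * f α + φ * f β - ψ * f γ + f δ)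
      = ψ * ((f w * φ) * ψ) * f α + ψ * (f w * φ) * f β - ψ * (f w * ψ) * f γ + ψ * (f w * f δ)
        - (f c * φ) * ψ * f α - (f c * φ) * f β + (f c * ψ) * f γ - f c * f δ := by
        simp only [reflection]
        noncomm_ring
    _ = ψ * (φ * (f w' * ψ) + f a * ψ) * f α + ψ * (φ * f w' + f a) * f β
        - (ψ * ψ * f w₁ + ψ * f t) * f γ + ψ * (f w * f δ)
        - (φ * (f c' * ψ) + f b * ψ) * f α - (φ * f c' + f b) * f β + (ψ * f c₁ + f u) * f γ
        - f c * f δ := by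
        rw [hw.eq, hc.eq, hw₁.eq, hc₁.eq]
        noncomm_ring
    _ = ψ * φ * ψ * (f w'' * f α) + ψ * φ * (f e * f α + f w' * f β) - φ * ψ * (f c'' * f α)
        + ψ * (f a * f β - f b'' * f α + (f c₁ - f t) * f γ + f w * f δ)
        - φ * (f e' * f α + f c' * f β)
        + (ψ * ψ * (f a'' * f α - f w₁ * f γ) - f b * f β + f u * f γ - f c * f δ) := by
        rw [hw'.eq, hc'.eq, ha, hb]
        noncomm_ring
    _ = _ := by
        rw [hQ]
        simp only [← map_mul, ← map_add, ← map_sub]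

end Straightening

/-! ## Commutative rings graded by residue sequences -/

section ResidueData

section Odd

variable {p : ℕ} [Fact (2 < p)]

theorem add_one_ne_self (a : ZMod p) : a + 1 ≠ a := by
  have : Fact (1 < p) := ⟨one_lt_two.trans Fact.out⟩
  simp

theorem add_one_add_one_ne_self (a : ZMod p) : a + 1 + 1 ≠ a := by
  have two_ne_zero : (2 : ZMod p) ≠ 0 := fun h =>
    Nat.not_dvd_of_pos_of_lt two_pos Fact.out ((ZMod.natCast_eq_zero_iff 2 p).1 h)
  simpa [add_assoc, one_add_one_eq_two] using two_ne_zero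

end Odd

universe u

variable {ι : Type*} {p : ℕ} {B : Type u} [CommRing B]

/-- Elements `x k` of a commutative ring together with a decomposition of the ring into components
labelled by residue sequences: `T g` is the element equal to `g i` on the `i`-th component. -/
structure ResidueGrading (ι : Type*) (p : ℕ) (B : Type*) [CommRing B] where
  T : ((ι → ZMod p) → ℤ) →+* B
  x : ι → B

namespace ResidueGrading

variable (b : ResidueGrading ι p B)

/-- The idempotent of the `i`-th component. -/
noncomputable def E (i : ι → ZMod p) : B :=
  b.T (Pi.single i 1)

/-- The idempotent `[i_k = i_l]`. -/
noncomputable def d (k l : ι) : B :=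
  b.T fun i => if i k = i l then 1 else 0

/-- The idempotent `[i_k = i_l + 1]`. -/
noncomputable def adj (k l : ι) : B :=
  b.T fun i => if i k = i l + 1 then 1 else 0

/-- The quiver Hecke polynomial: the square of the generator exchanging `k` and `l`. -/
noncomputable def Q (k l : ι) : B :=
  1 - b.d k l + (b.adj l k - b.adj k l) * (b.x k - b.x l)

theorem T_mul_E (g : (ι → ZMod p) → ℤ) (i : ι → ZMod p) : b.T g * b.E i = g i * b.E i := by
  have : g * Pi.single i 1 = (g i : (ι → ZMod p) → ℤ) * Pi.single i 1 := by
    ext j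
    by_cases h : j = i <;> simp [h]
  rw [E, ← map_mul, this, map_mul, map_intCast]

theorem E_mul_self (i : ι → ZMod p) : b.E i * b.E i = b.E i := by
  simpa [E] using b.T_mul_E (Pi.single i 1) i

theorem E_mul_E_of_ne {i j : ι → ZMod p} (h : i ≠ j) : b.E i * b.E j = 0 := by
  simpa [E, h.symm] using b.T_mul_E (Pi.single i 1) j

/-- The ring homomorphism `g` factors through the `i`-th component. -/
def IsComponent {K : Type*} [CommRing K] (i : ι → ZMod p) (g : B →+* K) : Prop :=
  ∀ t, g (b.T t) = t i

namespace IsComponent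

variable {b} {K : Type*} [CommRing K] {i : ι → ZMod p} {g : B →+* K}

theorem map_d (hg : b.IsComponent i g) (k l : ι) : g (b.d k l) = if i k = i l then 1 else 0 := by
  rw [d, hg, Int.cast_ite, Int.cast_one, Int.cast_zero]

theorem map_adj (hg : b.IsComponent i g) (k l : ι) :
    g (b.adj k l) = if i k = i l + 1 then 1 else 0 := by
  rw [adj, hg, Int.cast_ite, Int.cast_one, Int.cast_zero]

end IsComponent

section Fintype

variable [DecidableEq ι] [Fintype ι] [NeZero p]

theorem T_eq_sum (g : (ι → ZMod p) → ℤ) : b.T g = ∑ i, (g i : B) * b.E i := by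
  have single (i : ι → ZMod p) : Pi.single i (g i) = g * Pi.single i 1 := by
    ext j
    by_cases h : j = i <;> simp [h]
  conv_lhs => rw [← Finset.univ_sum_single g, map_sum]
  exact Finset.sum_congr rfl fun i _ => by
    rw [single, map_mul, ← b.T_mul_E, E]
    congr!

theorem sum_E : ∑ i, b.E i = 1 := by
  simpa using (b.T_eq_sum 1).symm

end Fintype

section Finite

variable [Finite ι] [NeZero p]

theorem ext_mul_map_E {A : Type*} [Ring A] (f : B →+* A) {u v : A}
    (h : ∀ i, u * f (b.E i) = v * f (b.E i)) : u = v := by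
  have := Fintype.ofFinite ι
  rw [← mul_one u, ← mul_one v, ← map_one f, ← b.sum_E, map_sum, Finset.mul_sum, Finset.mul_sum]
  exact Finset.sum_congr rfl fun i _ => h i

theorem ext_map_E_mul {A : Type*} [Ring A] (f : B →+* A) {u v : A}
    (h : ∀ i, f (b.E i) * u = f (b.E i) * v) : u = v := by
  have := Fintype.ofFinite ι
  rw [← one_mul u, ← one_mul v, ← map_one f, ← b.sum_E, map_sum, Finset.sum_mul, Finset.sum_mul]
  exact Finset.sum_congr rfl fun i _ => h i

theorem ext_component {u v : B}
    (h : ∀ (i : ι → ZMod p) (K : Type u) [CommRing K] (g : B →+* K),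
      b.IsComponent i g → g u = g v) : u = v := by
  refine b.ext_mul_map_E (RingHom.id B) fun i => ?_
  rw [RingHom.id_apply]
  let π := Ideal.Quotient.mk (Ideal.span {1 - b.E i})
  have π_E : π (b.E i) = 1 := by
    rw [← map_one π, eq_comm, Ideal.Quotient.eq]
    exact Ideal.mem_span_singleton_self _
  have π_T (t : (ι → ZMod p) → ℤ) : π (b.T t) = t i := by
    simpa [π_E] using congrArg π (b.T_mul_E t i)
  obtain ⟨a, ha⟩ := Ideal.mem_span_singleton'.1 (Ideal.Quotient.eq.1 (h i _ π π_T))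
  linear_combination (-b.E i) * ha - a * b.E_mul_self i

end Finite

theorem d_symm (k l : ι) : b.d k l = b.d l k := by
  simp only [d, eq_comm]

theorem d_mul_self (k l : ι) : b.d k l * b.d k l = b.d k l := by
  rw [d, ← map_mul]
  congr 1
  ext i
  simp

theorem adj_mul_self (k l : ι) : b.adj k l * b.adj k l = b.adj k l := by
  rw [adj, ← map_mul]
  congr 1
  ext i
  simp

theorem adj_mul_d [Fact (2 < p)] (k l : ι) : b.adj k l * b.d k l = 0 := by
  rw [d, adj, ← map_mul, ← map_zero b.T]
  congr 1
  ext i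
  by_cases h : i k = i l <;> simp [h, (add_one_ne_self _).symm]

theorem adj_mul_adj_swap [Fact (2 < p)] (k l : ι) : b.adj k l * b.adj l k = 0 := by
  rw [adj, adj, ← map_mul, ← map_zero b.T]
  congr 1
  ext i
  by_cases h : i k = i l + 1
  · simp [h, (add_one_add_one_ne_self _).symm]
  · simp [h]

theorem d_mul_d_comm (j k l : ι) : b.d j k * b.d k l = b.d j k * b.d j l := by
  simp only [d, ← map_mul]
  congr 1
  ext i
  by_cases h : i j = i k <;> simp [h]

/-- The grading obtained by negating both `x` and the residues. -/
noncomputable def dual : ResidueGrading ι p B where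
  T := b.T.comp (RingHom.pi fun i => Pi.evalRingHom _ (-i))
  x := -b.x

theorem dual_x (k : ι) : b.dual.x k = -b.x k := rfl

theorem dual_T (g : (ι → ZMod p) → ℤ) : b.dual.T g = b.T fun i => g (-i) := rfl

theorem dual_d (k l : ι) : b.dual.d k l = b.d k l := by
  simp only [d, dual_T, Pi.neg_apply, neg_inj]

theorem dual_adj (k l : ι) : b.dual.adj k l = b.adj l k := by
  have (i : ι → ZMod p) : -i k = -i l + 1 ↔ i l = i k + 1 := by
    rw [neg_add_eq_sub, neg_eq_iff_eq_neg, neg_sub, eq_sub_iff_add_eq, eq_comm]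
  simp only [adj, dual_T, Pi.neg_apply, this]

theorem dual_Q (k l : ι) : b.dual.Q k l = b.Q l k := by
  simp only [Q, dual_x, dual_d, dual_adj, b.d_symm l k]
  ring

end ResidueGrading

/-- A residue grading for which `x k - x l` is invertible, with inverse `P k l`, on the components
where `i_k ≠ i_l`, and the elements `w k l` defined below are units. -/
structure ResidueData (ι : Type*) (p : ℕ) (B : Type*) [CommRing B] extends
    ResidueGrading ι p B where
  P : ι → ι → B
  P_mul_sub : ∀ k l, P k l * (x k - x l) = 1 - toResidueGrading.d k l
  P_mul_d : ∀ k l, P k l * toResidueGrading.d k l = 0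
  isUnit_w : ∀ k l, IsUnit
    (1 - toResidueGrading.adj k l - P k l - (x k - x l) * toResidueGrading.d k l)

namespace ResidueData

variable (b : ResidueData ι p B)

/-- The unit relating a simple transposition to the corresponding quiver Hecke generator. -/
noncomputable def w (k l : ι) : B :=
  1 - b.adj k l - b.P k l - (b.x k - b.x l) * b.d k l

/-- The commutative part of a simple transposition: `(x k - x l)⁻¹` where `i_k ≠ i_l`, and `1`
where `i_k = i_l`. -/
noncomputable def c (k l : ι) : B :=
  b.P k l + b.d k l

theorem P_anti (k l : ι) : b.P l k = -b.P k l := by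
  have hkl := b.P_mul_sub k l
  have hlk := b.P_mul_sub l k
  have hkl' := b.P_mul_d k l
  have hlk' := b.P_mul_d l k
  rw [← b.d_symm] at hlk hlk'
  linear_combination (-b.P l k) * hkl - b.P k l * hlk + hkl' + hlk'

/-- The data obtained by negating both `x` and the residues; this interchanges the two indices of
`P`, `w`, `c` and `Q`, and so halves the computation of the braid relation. -/
noncomputable def dual : ResidueData ι p B where
  toResidueGrading := b.toResidueGrading.dual
  P := -b.P
  P_mul_sub k l := by
    simp only [ResidueGrading.dual_x, ResidueGrading.dual_d, ← b.P_mul_sub, Pi.neg_apply]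
    ring
  P_mul_d k l := by simp [ResidueGrading.dual_d, b.P_mul_d]
  isUnit_w k l := by
    convert b.isUnit_w l k using 1
    simp only [ResidueGrading.dual_x, ResidueGrading.dual_d, ResidueGrading.dual_adj, Pi.neg_apply,
      b.P_anti l k, b.d_symm l k]
    ring

theorem dual_P (k l : ι) : b.dual.P k l = b.P l k :=
  (b.P_anti k l).symm

theorem dual_toResidueGrading : b.dual.toResidueGrading = b.toResidueGrading.dual := rfl

theorem dual_w (k l : ι) : b.dual.w k l = b.w l k := by
  simp only [w, dual_P, dual_toResidueGrading, ResidueGrading.dual_x, ResidueGrading.dual_d,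
    ResidueGrading.dual_adj, b.d_symm l k]
  ring

theorem dual_c (k l : ι) : b.dual.c k l = b.c l k := by
  simp only [c, dual_P, dual_toResidueGrading, ResidueGrading.dual_d, b.d_symm l k]

theorem c_mul_sub [Fact (2 < p)] (k l : ι) :
    b.c k l * (b.x k - b.x l) = 1 - b.d k l * b.w k l := by
  rw [c, w]
  linear_combination b.P_mul_sub k l - b.adj_mul_d k l - b.P_mul_d k l -
    (b.x k - b.x l) * b.d_mul_self k l

theorem Q_mul_add_c_mul_c [Fact (2 < p)] (k l : ι) :
    b.Q k l * (b.w l k * b.w k l) + b.c k l * b.c k l = 1 := by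
  have P_mul_sub := b.P_mul_sub k l
  have P_mul_d := b.P_mul_d k l
  have adj_mul_d := b.adj_mul_d k l
  have adj_swap_mul_d := b.adj_mul_d l k
  have adj_mul_adj := b.adj_mul_adj_swap k l
  have adj_sq := b.adj_mul_self k l
  have adj_swap_sq := b.adj_mul_self l k
  have d_sq := b.d_mul_self k l
  simp only [ResidueGrading.Q, w, c, b.P_anti k l, b.d_symm l k] at *
  grind

end ResidueData

end ResidueData

/-! ## The exchange of the two presentations -/

section Intertwines

variable {ι : Type*} {p : ℕ} {A B : Type*} [Ring A] [CommRing B] {b : ResidueData ι p B}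
  {f : B →+* A} {ψ φ : A} {j k l : ι}

/-- The reflection attached to the exchange of `j` and `k`. -/
noncomputable def ResidueData.reflect (b : ResidueData ι p B) (f : B →+* A) (ψ : A) (j k : ι) : A :=
  reflection f ψ (b.w j k) (b.c j k)

theorem ResidueData.dual_reflect (b : ResidueData ι p B) (f : B →+* A) (ψ : A) (j k : ι) :
    b.dual.reflect f ψ j k = b.reflect f ψ k j := by
  rw [reflect, reflect, b.dual_w, b.dual_c]

variable [DecidableEq ι]

/-- The defect of `x m` at a generator exchanging `j` and `k`: it is `[i_j = i_k]` at `m = k`, its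
negative at `m = j`, and zero elsewhere. -/
noncomputable def ResidueGrading.ε (b : ResidueGrading ι p B) (j k m : ι) : B :=
  (Pi.single k 1 - Pi.single j 1 : ι → B) m * b.d j k

theorem ResidueGrading.ε_left (b : ResidueGrading ι p B) (hjk : j ≠ k) : b.ε j k j = -b.d j k := by
  simp [ε, hjk]

theorem ResidueGrading.ε_right (b : ResidueGrading ι p B) (hjk : j ≠ k) : b.ε j k k = b.d j k := by
  simp [ε, hjk.symm]

theorem ResidueGrading.ε_of_ne (b : ResidueGrading ι p B) {m : ι} (hj : m ≠ j) (hk : m ≠ k) :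
    b.ε j k m = 0 := by
  simp [ε, hj, hk]

/-- `ψ` satisfies the quiver Hecke relations with the commutative generators for the exchange of
`j` and `k`. -/
structure Intertwines (b : ResidueGrading ι p B) (f : B →+* A) (ψ : A) (j k : ι) : Prop where
  T : ∀ g, Straightens f ψ (b.T g) (b.T fun i => g (i ∘ Equiv.swap j k)) 0
  x : ∀ m, Straightens f ψ (b.x m) (b.x (Equiv.swap j k m)) (b.ε j k m)

namespace Intertwines

theorem dual (h : Intertwines b.toResidueGrading f ψ j k) :
    Intertwines b.dual.toResidueGrading f ψ k j where
  T g := by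
    rw [Equiv.swap_comm]
    exact h.T fun i => g (-i)
  x m := by
    have hx := (h.x m).neg
    rw [Equiv.swap_comm]
    have ε_dual : b.dual.ε k j m = -b.ε j k m := by
      simp only [ResidueGrading.ε, ResidueData.dual_toResidueGrading, ResidueGrading.dual_d,
        b.d_symm k j, Pi.sub_apply]
      ring
    rw [ε_dual]
    exact hx

theorem d (h : Intertwines b.toResidueGrading f ψ j k) (m m' : ι) :
    Straightens f ψ (b.d m m') (b.d (Equiv.swap j k m) (Equiv.swap j k m')) 0 :=
  h.T _

theorem adj (h : Intertwines b.toResidueGrading f ψ j k) (m m' : ι) :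
    Straightens f ψ (b.adj m m') (b.adj (Equiv.swap j k m) (Equiv.swap j k m')) 0 :=
  h.T _

theorem P (h : Intertwines b.toResidueGrading f ψ j k) (m m' : ι) :
    Straightens f ψ (b.P m m') (b.P (Equiv.swap j k m) (Equiv.swap j k m'))
      (-(b.P m m' * (b.ε j k m - b.ε j k m') *
        b.P (Equiv.swap j k m) (Equiv.swap j k m'))) :=
  ((h.x m).sub (h.x m')).partialInverse (h.d m m') (b.P_mul_sub m m') (b.P_mul_d m m')
    (b.P_mul_sub _ _) (b.P_mul_d _ _)

theorem c (h : Intertwines b.toResidueGrading f ψ j k) (m m' : ι) :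
    Straightens f ψ (b.c m m') (b.c (Equiv.swap j k m) (Equiv.swap j k m'))
      (-(b.P m m' * (b.ε j k m - b.ε j k m') *
        b.P (Equiv.swap j k m) (Equiv.swap j k m'))) := by
  simpa only [add_zero, ResidueData.c] using (h.P m m').add (h.d m m')

theorem w (h : Intertwines b.toResidueGrading f ψ j k) (m m' : ι) :
    Straightens f ψ (b.w m m') (b.w (Equiv.swap j k m) (Equiv.swap j k m'))
      ((b.ε j k m - b.ε j k m') *
        (b.P m m' * b.P (Equiv.swap j k m) (Equiv.swap j k m') -
          b.d (Equiv.swap j k m) (Equiv.swap j k m'))) := by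
  have hw := ((Straightens.one.sub (h.adj m m')).sub (h.P m m')).sub
    (((h.x m).sub (h.x m')).mul (h.d m m'))
  refine (congrArg (Straightens f ψ _ _) ?_).mp hw
  ring

theorem c_swap (h : Intertwines b.toResidueGrading f ψ j k) (hjk : j ≠ k) :
    Straightens f ψ (b.c j k) (b.c k j) 0 := by
  have hc := h.c j k
  rw [Equiv.swap_apply_left, Equiv.swap_apply_right, b.ε_left hjk, b.ε_right hjk] at hc
  refine (congrArg (Straightens f ψ _ _) ?_).mp hc
  linear_combination 2 * b.P k j * b.P_mul_d j k

theorem w_swap (h : Intertwines b.toResidueGrading f ψ j k) (hjk : j ≠ k) :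
    Straightens f ψ (b.w j k) (b.w k j) (2 * b.d j k) := by
  have hw := h.w j k
  rw [Equiv.swap_apply_left, Equiv.swap_apply_right, b.ε_left hjk, b.ε_right hjk] at hw
  refine (congrArg (Straightens f ψ _ _) ?_).mp hw
  rw [b.d_symm k j]
  linear_combination -2 * b.P k j * b.P_mul_d j k + 2 * b.d_mul_self j k

variable {m : ι}

theorem c_left (h : Intertwines b.toResidueGrading f ψ j k) (hjk : j ≠ k) (hj : m ≠ j)
    (hk : m ≠ k) :
    Straightens f ψ (b.c j m) (b.c k m) (b.P j m * b.P k m * b.d j k) := by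
  have hc := h.c j m
  rw [Equiv.swap_apply_left, Equiv.swap_apply_of_ne_of_ne hj hk, b.ε_left hjk,
    b.ε_of_ne hj hk] at hc
  refine (congrArg (Straightens f ψ _ _) ?_).mp hc
  ring

theorem w_left (h : Intertwines b.toResidueGrading f ψ j k) (hjk : j ≠ k) (hj : m ≠ j)
    (hk : m ≠ k) :
    Straightens f ψ (b.w j m) (b.w k m) (b.d j k * (b.d k m - b.P j m * b.P k m)) := by
  have hw := h.w j m
  rw [Equiv.swap_apply_left, Equiv.swap_apply_of_ne_of_ne hj hk, b.ε_left hjk,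
    b.ε_of_ne hj hk] at hw
  refine (congrArg (Straightens f ψ _ _) ?_).mp hw
  ring

theorem c_right (h : Intertwines b.toResidueGrading f ψ j k) (hjk : j ≠ k) (hj : m ≠ j)
    (hk : m ≠ k) :
    Straightens f ψ (b.c k m) (b.c j m) (-(b.P k m * b.P j m * b.d j k)) := by
  have hc := h.c k m
  rw [Equiv.swap_apply_right, Equiv.swap_apply_of_ne_of_ne hj hk, b.ε_right hjk,
    b.ε_of_ne hj hk] at hc
  refine (congrArg (Straightens f ψ _ _) ?_).mp hc
  ring

theorem w_right (h : Intertwines b.toResidueGrading f ψ j k) (hjk : j ≠ k) (hj : m ≠ j)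
    (hk : m ≠ k) :
    Straightens f ψ (b.w k m) (b.w j m) (b.d j k * (b.P k m * b.P j m - b.d j m)) := by
  have hw := h.w k m
  rw [Equiv.swap_apply_right, Equiv.swap_apply_of_ne_of_ne hj hk, b.ε_right hjk,
    b.ε_of_ne hj hk] at hw
  refine (congrArg (Straightens f ψ _ _) ?_).mp hw
  ring

/- The defect vanishes because `P j k` is supported where `i_j ≠ i_k`. -/
theorem P_mul_P (h : Intertwines b.toResidueGrading f ψ j k) (hjk : j ≠ k) (hj : m ≠ j)
    (hk : m ≠ k) :
    Straightens f ψ (b.P j k * b.P j m) (b.P k j * b.P k m) 0 := by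
  have hP := (h.P j k).mul (h.P j m)
  rw [Equiv.swap_apply_left, Equiv.swap_apply_right, Equiv.swap_apply_of_ne_of_ne hj hk,
    b.ε_left hjk, b.ε_right hjk, b.ε_of_ne hj hk] at hP
  refine (congrArg (Straightens f ψ _ _) ?_).mp hP
  linear_combination (2 * b.P k j + b.P j m) * b.P k m * b.P_mul_d j k

theorem d_left (h : Intertwines b.toResidueGrading f ψ j k) (hj : m ≠ j) (hk : m ≠ k) :
    Straightens f ψ (b.d j m) (b.d k m) 0 := by
  simpa [Equiv.swap_apply_of_ne_of_ne hj hk] using h.d j m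

theorem d_right (h : Intertwines b.toResidueGrading f ψ j k) (hj : m ≠ j) (hk : m ≠ k) :
    Straightens f ψ (b.d k m) (b.d j m) 0 := by
  simpa [Equiv.swap_apply_of_ne_of_ne hj hk] using h.d k m

theorem c_of_ne {m' : ι} (h : Intertwines b.toResidueGrading f ψ j k) (hj : m ≠ j) (hk : m ≠ k)
    (hj' : m' ≠ j) (hk' : m' ≠ k) : Straightens f ψ (b.c m m') (b.c m m') 0 := by
  simpa [Equiv.swap_apply_of_ne_of_ne, b.ε_of_ne, *] using h.c m m'

theorem w_of_ne {m' : ι} (h : Intertwines b.toResidueGrading f ψ j k) (hj : m ≠ j) (hk : m ≠ k)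
    (hj' : m' ≠ j) (hk' : m' ≠ k) : Straightens f ψ (b.w m m') (b.w m m') 0 := by
  simpa [Equiv.swap_apply_of_ne_of_ne, b.ε_of_ne, *] using h.w m m'

end Intertwines

theorem ResidueData.c_mul_sub_swap_add [Fact (2 < p)] (b : ResidueData ι p B) (j k m : ι) :
    b.c j k * (b.x m - b.x (Equiv.swap j k m)) + (Pi.single k 1 - Pi.single j 1 : ι → B) m =
      b.ε j k m * b.w j k := by
  have h := b.c_mul_sub j k
  rw [ResidueGrading.ε]
  by_cases hj : m = j
  · subst hj
    by_cases hk : m = k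
    · simp [hk]
    · simp only [Equiv.swap_apply_left, Pi.sub_apply, Pi.single_eq_same, Pi.single_eq_of_ne hk]
      linear_combination h
  · by_cases hk : m = k
    · subst hk
      simp only [Equiv.swap_apply_right, Pi.sub_apply, Pi.single_eq_same, Pi.single_eq_of_ne hj]
      linear_combination -h
    · simp [Equiv.swap_apply_of_ne_of_ne hj hk, hj, hk]

theorem straightens_reflect_iff [Fact (2 < p)] (m : ι) :
    Straightens f (b.reflect f ψ j k) (b.x m) (b.x (Equiv.swap j k m))
        ((Pi.single k 1 - Pi.single j 1 : ι → B) m) ↔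
      Straightens f ψ (b.x m) (b.x (Equiv.swap j k m)) (b.ε j k m) := by
  have hw : IsUnit (f (b.w j k)) := (b.isUnit_w j k).map f
  have key : f (b.x m) * b.reflect f ψ j k - (b.reflect f ψ j k * f (b.x (Equiv.swap j k m)) +
        f ((Pi.single k 1 - Pi.single j 1 : ι → B) m)) =
      (f (b.x m) * ψ - (ψ * f (b.x (Equiv.swap j k m)) + f (b.ε j k m))) * f (b.w j k) := by
    have hc := congrArg f (b.c_mul_sub_swap_add j k m)
    rw [mul_sub, mul_comm _ (b.x m)] at hc
    have hcomm := congrArg f (mul_comm (b.w j k) (b.x (Equiv.swap j k m)))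
    simp only [map_add, map_sub, map_mul] at hc hcomm
    simp only [ResidueData.reflect, reflection, mul_sub, sub_mul, add_mul, mul_assoc, hcomm, ← hc]
    abel
  rw [Straightens, ← sub_eq_zero, key, hw.mul_left_eq_zero, sub_eq_zero, Straightens]

theorem reflect_mul_self_iff [Fact (2 < p)] (h : Intertwines b.toResidueGrading f ψ j k)
    (hjk : j ≠ k) :
    b.reflect f ψ j k * b.reflect f ψ j k = 1 ↔ ψ * ψ = f (b.Q j k) := by
  have hw : IsUnit (f (b.w k j * b.w j k)) := ((b.isUnit_w k j).mul (b.isUnit_w j k)).map f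
  have key : b.reflect f ψ j k * b.reflect f ψ j k - 1 =
      (ψ * ψ - f (b.Q j k)) * f (b.w k j * b.w j k) := by
    have ψ_coeff : 2 * b.d j k * b.w j k - b.w j k * b.c j k - b.c k j * b.w j k = 0 := by
      rw [ResidueData.c, ResidueData.c, b.P_anti j k, b.d_symm k j]
      ring
    have hc := congrArg f (b.Q_mul_add_c_mul_c j k)
    have hψ := congrArg (ψ * f ·) ψ_coeff
    simp only [map_add, map_sub, map_mul, map_one, map_zero, mul_sub, mul_zero] at hc hψ
    rw [ResidueData.reflect, reflection_mul_reflection (h.w_swap hjk) (h.c_swap hjk)]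
    simp only [map_sub, map_mul, zero_mul, sub_zero, mul_sub, sub_mul, ← hc]
    rw [← sub_eq_zero, ← hψ]
    noncomm_ring
  rw [← sub_eq_zero, key, hw.mul_left_eq_zero, sub_eq_zero]

theorem commute_reflect_iff {l m : ι} (hψ : Intertwines b.toResidueGrading f ψ j k)
    (hφ : Intertwines b.toResidueGrading f φ l m)
    (hjl : j ≠ l) (hjm : j ≠ m) (hkl : k ≠ l) (hkm : k ≠ m) :
    Commute (b.reflect f ψ j k) (b.reflect f φ l m) ↔ Commute ψ φ := by
  have hw : IsUnit (f (b.w j k * b.w l m)) := ((b.isUnit_w j k).mul (b.isUnit_w l m)).map f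
  have key : b.reflect f ψ j k * b.reflect f φ l m - b.reflect f φ l m * b.reflect f ψ j k =
      (ψ * φ - φ * ψ) * f (b.w j k * b.w l m) := by
    have hwφ := hφ.w_of_ne hjl hjm hkl hkm
    have hcφ := hφ.c_of_ne hjl hjm hkl hkm
    have hwψ := hψ.w_of_ne hjl.symm hkl.symm hjm.symm hkm.symm
    have hcψ := hψ.c_of_ne hjl.symm hkl.symm hjm.symm hkm.symm
    rw [ResidueData.reflect, ResidueData.reflect, reflection_mul_reflection hwφ hcφ,
      reflection_mul_reflection hwψ hcψ, mul_comm (b.w j k) (b.w l m), mul_comm (b.c l m) (b.w j k),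
      mul_comm (b.c l m) (b.c j k), mul_comm (b.c j k) (b.w l m)]
    simp only [zero_mul, zero_sub, sub_zero, map_neg, mul_neg]
    noncomm_ring
  rw [Commute, SemiconjBy, ← sub_eq_zero, key, hw.mul_left_eq_zero, sub_eq_zero, Commute,
    SemiconjBy]

end Intertwines

/-! ## The braid relation -/

section Braid

variable {ι : Type*} {p : ℕ} {A B : Type*} [Ring A] [CommRing B] {b : ResidueData ι p B}
  {f : B →+* A} {ψ φ : A} {j k l : ι}

namespace ResidueData

variable (b : ResidueData ι p B)

theorem dual_dual : b.dual.dual = b := by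
  have hT : b.dual.dual.T = b.T := by
    ext g
    simp [dual_toResidueGrading, ResidueGrading.dual_T]
  have hx : b.dual.dual.x = b.x := neg_neg b.x
  have hP : b.dual.dual.P = b.P := neg_neg b.P
  rcases hb : b.dual.dual with ⟨⟨T, x⟩, P, _, _, _⟩
  rw [hb] at hT hx hP
  subst hT hx hP
  rfl

/-- The defect of `c j l` at a generator exchanging `j` and `k`. -/
noncomputable def defectCoeff (j k l : ι) : B :=
  b.P k l * b.P j l * b.d j k

/-- Write `ψ`, `φ` for the generators exchanging `j, k` and `k, l`, and `s`, `t` for the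
reflections they define. This is the coefficient of `φ` in `t s`. -/
noncomputable def mixedCoeff (j k l : ι) : B :=
  (b.defectCoeff j k l - b.d j k * b.d j l) * b.w j k - b.w k l * b.c j k

/-- The coefficient of `ψ` in `s t s`. -/
noncomputable def outerCoeff (j k l : ι) : B :=
  (b.P j k * b.P j l * b.d k l - b.d k l * b.d j l) * b.mixedCoeff j k l
    + b.P k j * b.P k l * b.d j l * b.w j l * b.w j k
    + (b.c k j - 2 * b.d j k) * b.c j l * b.w j k
    + b.w j k * (b.c k l * b.c j k + b.defectCoeff j k l * b.w j k)

/-- The coefficient of `φ` in `s t s`. -/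
noncomputable def innerCoeff (j k l : ι) : B :=
  -(b.defectCoeff j k l * b.w j l * b.w j k + b.c j l * b.mixedCoeff j k l)

/-- The constant coefficient of `s t s`. -/
noncomputable def constCoeff (j k l : ι) : B :=
  b.Q j k * ((b.P k j * b.P k l * b.d j l - b.d j l * b.d k l) * b.w j l * b.w j k
    - b.w k j * b.c j l * b.w j k) + b.P j k * b.P j l * b.d k l * b.mixedCoeff j k l
    - b.c j k * (b.c k l * b.c j k + b.defectCoeff j k l * b.w j k)

theorem component_cases [Fact (2 < p)] {K : Type*} [CommRing K] {i : ι → ZMod p} {g : B →+* K}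
    (hg : b.IsComponent i g) (j k l : ι) :
    (g (b.d j k) = 0 ∧ g (b.d j l) = 0 ∧ g (b.d k l) = 0) ∨
    (g (b.d j k) = 1 ∧ g (b.d j l) = 0 ∧ g (b.d k l) = 0 ∧ g (b.adj j k) = 0 ∧
      g (b.adj k j) = 0 ∧ g (b.adj j l) = g (b.adj k l)) ∨
    (g (b.d j k) = 0 ∧ g (b.d j l) = 0 ∧ g (b.d k l) = 1 ∧ g (b.adj k l) = 0 ∧
      g (b.adj l k) = 0 ∧ g (b.adj j k) = g (b.adj j l)) ∨
    (g (b.d j k) = 0 ∧ g (b.d j l) = 1 ∧ g (b.d k l) = 0 ∧ g (b.adj j l) = 0 ∧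
      g (b.adj j k) = g (b.adj l k) ∧ g (b.adj k j) = g (b.adj k l)) ∨
    (g (b.d j k) = 1 ∧ g (b.d j l) = 1 ∧ g (b.d k l) = 1 ∧ g (b.adj j k) = 0 ∧
      g (b.adj k j) = 0 ∧ g (b.adj k l) = 0 ∧ g (b.adj l k) = 0 ∧ g (b.adj j l) = 0) := by
  have : Fact (1 < p) := ⟨one_lt_two.trans Fact.out⟩
  simp only [hg.map_d, hg.map_adj]
  by_cases hjk : i j = i k
  · by_cases hkl : i k = i l <;> simp [hjk, hkl]
  · by_cases hkl : i k = i l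
    · simp [hjk, ← hkl]
    · by_cases hjl : i j = i l <;> simp [hjk, hkl, hjl, Ne.symm hkl]

variable [Finite ι] [NeZero p] [Fact (2 < p)]

theorem outerCoeff_eq (j k l : ι) : b.outerCoeff j k l = b.dual.innerCoeff l k j := by
  refine b.ext_component fun i K _ g hg => ?_
  have hjk := congrArg g (b.P_mul_sub j k)
  have hkl := congrArg g (b.P_mul_sub k l)
  have hjl := congrArg g (b.P_mul_sub j l)
  have hjk' := congrArg g (b.P_mul_d j k)
  have hkl' := congrArg g (b.P_mul_d k l)
  have hjl' := congrArg g (b.P_mul_d j l)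
  simp only [outerCoeff, innerCoeff, mixedCoeff, defectCoeff, dual_w, dual_c, dual_P,
    dual_toResidueGrading, ResidueGrading.dual_d, b.d_symm l k, b.d_symm l j]
  simp only [w, c, b.P_anti j k, b.d_symm k j, map_add, map_sub, map_mul, map_neg, map_one,
    map_zero, map_ofNat] at *
  rcases b.component_cases hg j k l with h | h | h | h | h <;> grind

theorem constCoeff_sub (j k l : ι) : b.constCoeff j k l - b.dual.constCoeff l k j =
    -(b.d j l * (b.adj j k - b.adj k j)) * (b.w j k * b.w j l * b.w k l) := by
  have adj_mul_adj := b.adj_mul_adj_swap j k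
  have adj_sq := b.adj_mul_self j k
  have adj_sq' := b.adj_mul_self k j
  have sq_jk := b.Q_mul_add_c_mul_c j k
  have sq_kl := b.Q_mul_add_c_mul_c k l
  refine b.ext_component fun i K _ g hg => ?_
  have hjk := congrArg g (b.P_mul_sub j k)
  have hkl := congrArg g (b.P_mul_sub k l)
  have hjl := congrArg g (b.P_mul_sub j l)
  have hjk' := congrArg g (b.P_mul_d j k)
  have hkl' := congrArg g (b.P_mul_d k l)
  have hjl' := congrArg g (b.P_mul_d j l)
  apply_fun g at adj_mul_adj adj_sq adj_sq' sq_jk sq_kl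
  simp only [constCoeff, mixedCoeff, defectCoeff, dual_w, dual_P, dual_toResidueGrading,
    ResidueGrading.dual_d, ResidueGrading.dual_Q, c, b.P_anti j k, b.P_anti k l, b.d_symm k j,
    b.d_symm l k, b.d_symm l j, map_add, map_sub, map_mul, map_neg, map_one, map_zero] at *
  rcases b.component_cases hg j k l with h | h
  · grind
  simp only [w, ResidueGrading.Q, b.P_anti j k, b.P_anti k l, b.d_symm k j, b.d_symm l k, map_add,
    map_sub, map_mul, map_one] at *
  rcases h with h | h | h | h <;>
    simp only [h, mul_zero, mul_one, zero_mul, one_mul, add_zero, zero_add, sub_zero, zero_sub,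
      sub_self, neg_zero] at * <;>
    grind

end ResidueData

variable [DecidableEq ι]

theorem reflect_braid_expansion (hψ : Intertwines b.toResidueGrading f ψ j k)
    (hφ : Intertwines b.toResidueGrading f φ k l) (hjk : j ≠ k) (hjl : j ≠ l) (hkl : k ≠ l)
    (hQ : ψ * ψ = f (b.Q j k)) :
    b.reflect f ψ j k * (b.reflect f φ k l * b.reflect f ψ j k) =
      ψ * φ * ψ * f (b.w j k * b.w j l * b.w k l) - ψ * φ * f (b.c j k * b.w j l * b.w k l)
        - φ * ψ * f (b.c k l * b.w j l * b.w j k) + ψ * f (b.outerCoeff j k l)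
        + φ * f (b.innerCoeff j k l) + f (b.constCoeff j k l) := by
  have w_past_φ := hφ.dual.w_right hkl.symm hjl hjk
  have c_past_φ := hφ.dual.c_right hkl.symm hjl hjk
  simp only [ResidueData.dual_w, ResidueData.dual_c, ResidueData.dual_P,
    ResidueData.dual_toResidueGrading, ResidueGrading.dual_d, b.d_symm l k, b.d_symm l j]
    at w_past_φ c_past_φ
  have defects_past_ψ : Straightens f ψ (b.d k l * (b.P j k * b.P j l - b.d j l))
        (b.d j l * (b.P k j * b.P k l - b.d k l)) 0 ∧
      Straightens f ψ (-(b.P j k * b.P j l * b.d k l)) (-(b.P k j * b.P k l * b.d j l)) 0 := by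
    have hP := hψ.P_mul_P hjk hjl.symm hkl.symm
    have hd := hψ.d_right hjl.symm hkl.symm
    constructor
    · simpa using hd.mul (hP.sub (hψ.d_left hjl.symm hkl.symm))
    · simpa using (hP.mul hd).neg
  rw [ResidueData.reflect, ResidueData.reflect,
    reflection_mul_reflection (hψ.w_right hjk hjl.symm hkl.symm)
      (hψ.c_right hjk hjl.symm hkl.symm),
    reflection_mul_expansion w_past_φ c_past_φ (hψ.w_left hjk hjl.symm hkl.symm)
      (hψ.c_left hjk hjl.symm hkl.symm) defects_past_ψ.1 defects_past_ψ.2 (hψ.w_swap hjk)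
      (hψ.c_swap hjk) hQ]
  have ψφ_coeff : b.d j k * (b.d k l - b.P j l * b.P k l) * (b.w j l * b.w j k) +
      b.w j l * (b.d j k * (b.P k l * b.P j l - b.d j l) * b.w j k - b.w k l * b.c j k) =
      -(b.c j k * b.w j l * b.w k l) := by
    linear_combination b.w j l * b.w j k * b.d_mul_d_comm j k l
  rw [ψφ_coeff, ResidueData.outerCoeff, ResidueData.innerCoeff, ResidueData.constCoeff,
    ResidueData.mixedCoeff, ResidueData.defectCoeff]
  simp only [map_neg, mul_neg, ← sub_eq_add_neg]
  ring_nf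

theorem reflect_braid_iff [Finite ι] [NeZero p] [Fact (2 < p)]
    (hψ : Intertwines b.toResidueGrading f ψ j k)
    (hφ : Intertwines b.toResidueGrading f φ k l) (hjk : j ≠ k) (hjl : j ≠ l) (hkl : k ≠ l)
    (hψ_sq : ψ * ψ = f (b.Q j k)) (hφ_sq : φ * φ = f (b.Q k l)) :
    b.reflect f ψ j k * (b.reflect f φ k l * b.reflect f ψ j k) =
        b.reflect f φ k l * (b.reflect f ψ j k * b.reflect f φ k l) ↔
      ψ * φ * ψ - φ * ψ * φ = f (b.d j l * (b.adj j k - b.adj k j)) := by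
  have hw : IsUnit (f (b.w j k * b.w j l * b.w k l)) :=
    (((b.isUnit_w j k).mul (b.isUnit_w j l)).mul (b.isUnit_w k l)).map f
  have opposite := reflect_braid_expansion hφ.dual hψ.dual hkl.symm hjl.symm hjk.symm
    (hφ_sq.trans (by rw [b.dual_toResidueGrading, ResidueGrading.dual_Q]))
  have outer := b.outerCoeff_eq j k l
  have inner := b.dual.outerCoeff_eq l k j
  rw [b.dual_dual] at inner
  have const := sub_eq_iff_eq_add.1 (b.constCoeff_sub j k l)
  have reverse : b.w k l * b.w j l * b.w j k = b.w j k * b.w j l * b.w k l := by ring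
  have key : b.reflect f ψ j k * (b.reflect f φ k l * b.reflect f ψ j k) -
        b.reflect f φ k l * (b.reflect f ψ j k * b.reflect f φ k l) =
      (ψ * φ * ψ - φ * ψ * φ - f (b.d j l * (b.adj j k - b.adj k j))) *
        f (b.w j k * b.w j l * b.w k l) := by
    simp only [ResidueData.dual_reflect, ResidueData.dual_w, ResidueData.dual_c, inner,
      ← outer] at opposite
    rw [reflect_braid_expansion hψ hφ hjk hjl hkl hψ_sq, opposite, sub_mul, sub_mul, ← map_mul,
      const, map_add, reverse, neg_mul, map_neg]
    abel
  rw [← sub_eq_zero, key, hw.mul_left_eq_zero, sub_eq_zero]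

end Braid

/-! ## Polynomials with integral roots -/

section LinearProduct

open Polynomial

variable (R : Type*) [CommRing R]

/-- The monic polynomial over `R` whose roots are the integers in `cs`, with multiplicity. -/
noncomputable def linearProduct (cs : Multiset ℤ) : R[X] :=
  (cs.map fun c : ℤ => X - C (c : R)).prod

theorem monic_linearProduct (cs : Multiset ℤ) : (linearProduct R cs).Monic :=
  monic_multiset_prod_of_monic _ _ fun _ _ => monic_X_sub_C _

theorem linearProduct_add (cs ds : Multiset ℤ) :
    linearProduct R (cs + ds) = linearProduct R cs * linearProduct R ds := by
  rw [linearProduct, Multiset.map_add, Multiset.prod_add, linearProduct, linearProduct]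

theorem linearProduct_cons (c : ℤ) (cs : Multiset ℤ) :
    linearProduct R (c ::ₘ cs) = (X - C (c : R)) * linearProduct R cs := by
  rw [linearProduct, Multiset.map_cons, Multiset.prod_cons, linearProduct]

theorem linearProduct_dvd_of_le {cs ds : Multiset ℤ} (h : cs ≤ ds) :
    linearProduct R cs ∣ linearProduct R ds :=
  Multiset.prod_dvd_prod_of_le (Multiset.map_le_map h)

theorem linearProduct_singleton_zero : linearProduct R {0} = X := by
  simp [linearProduct]

theorem aeval_linearProduct {B : Type*} [CommRing B] [Algebra R B] (cs : Multiset ℤ) (x : B) :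
    aeval x (linearProduct R cs) = (cs.map fun c : ℤ => x - c).prod := by
  rw [linearProduct, map_multiset_prod, Multiset.map_map]
  simp

/-- The elements of `cs` in the residue class `a`. -/
def residuePart {p : ℕ} (cs : Multiset ℤ) (a : ZMod p) : Multiset ℤ :=
  cs.filter fun c => (c : ZMod p) = a

theorem mem_residuePart {p : ℕ} {cs : Multiset ℤ} {a : ZMod p} {c : ℤ} :
    c ∈ residuePart cs a ↔ c ∈ cs ∧ (c : ZMod p) = a :=
  Multiset.mem_filter

theorem prod_linearProduct_residuePart (p : ℕ) [NeZero p] (cs : Multiset ℤ) :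
    ∏ a : ZMod p, linearProduct R (residuePart cs a) = linearProduct R cs := by
  induction cs using Multiset.induction_on with
  | empty => simp [residuePart, linearProduct]
  | cons c cs ih =>
    have split (a : ZMod p) :
        linearProduct R (residuePart (c ::ₘ cs) a) =
          (if (c : ZMod p) = a then X - C (c : R) else 1) *
            linearProduct R (residuePart cs a) := by
      by_cases h : (c : ZMod p) = a <;> simp [residuePart, h, linearProduct_cons]
    rw [Finset.prod_congr rfl fun a _ => split a, Finset.prod_mul_distrib, ih, linearProduct_cons]
    simp

variable {R} {p : ℕ} (hp : p.Prime) (hR : (p : R) ∈ Ideal.jacobson (⊥ : Ideal R))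

include hp hR

theorem isUnit_intCast_of_zmod_ne_zero {a : ℤ} (ha : (a : ZMod p) ≠ 0) : IsUnit (a : R) := by
  have coprime : IsCoprime (p : ℤ) a := by
    rw [(Nat.prime_iff_prime_int.1 hp).irreducible.coprime_iff_not_dvd]
    rwa [Ne, ZMod.intCast_zmod_eq_zero_iff_dvd] at ha
  obtain ⟨u, v, huv⟩ := coprime
  have hva : (v * a : R) = 1 - u * p := by
    rw [eq_sub_iff_add_eq, add_comm]
    exact_mod_cast congrArg (Int.cast : ℤ → R) huv
  have hunit := Ideal.mem_jacobson_bot.1 hR (-u : R)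
  rw [mul_neg, neg_add_eq_sub, mul_comm, ← hva] at hunit
  exact isUnit_of_mul_isUnit_right hunit

theorem isCoprime_linearProduct {cs ds : Multiset ℤ}
    (h : ∀ c ∈ cs, ∀ d ∈ ds, (c : ZMod p) ≠ d) :
    IsCoprime (linearProduct R cs) (linearProduct R ds) := by
  have linear {c d : ℤ} (hcd : (c : ZMod p) ≠ d) : IsCoprime (X - C (c : R)) (X - C (d : R)) := by
    refine isCoprime_X_sub_C_of_isUnit_sub ?_
    have := isUnit_intCast_of_zmod_ne_zero hp hR (a := c - d) (by simpa [sub_eq_zero] using hcd)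
    exact_mod_cast this
  have prod {f : R[X]} {es : Multiset ℤ} (hf : ∀ e ∈ es, IsCoprime f (X - C (e : R))) :
      IsCoprime f (linearProduct R es) := by
    induction es using Multiset.induction_on with
    | empty => simpa [linearProduct] using isCoprime_one_right
    | cons e es ih =>
      rw [linearProduct_cons]
      exact (hf e (es.mem_cons_self e)).mul_right (ih fun e' he' => hf e' (es.mem_cons_of_mem he'))
  exact prod fun d hd => (prod fun c hc => (linear (h c hc d hd)).symm).symm

theorem isCoprime_residuePart {cs ds : Multiset ℤ} {a a' : ZMod p} (h : a ≠ a') :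
    IsCoprime (linearProduct R (residuePart cs a)) (linearProduct R (residuePart ds a')) := by
  refine isCoprime_linearProduct hp hR fun c hc d hd => ?_
  rwa [(mem_residuePart.1 hc).2, (mem_residuePart.1 hd).2]

end LinearProduct

/-! ## Spectral gradings -/

section Spectral

open Polynomial

variable {R : Type*} [CommRing R]

theorem semiconjBy_aeval {A : Type*} [Ring A] [Algebra R A] {v x y : A} (h : SemiconjBy v x y)
    (P : R[X]) : SemiconjBy v (aeval x P) (aeval y P) := by
  induction P using Polynomial.induction_on' with
  | add P Q hP hQ => simpa only [map_add] using hP.add_right hQ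
  | monomial n a =>
    rw [aeval_monomial, aeval_monomial]
    have scalar : SemiconjBy v (algebraMap R A a) (algebraMap R A a) := (Algebra.commutes a v).symm
    exact scalar.mul_right (h.pow_right n)

theorem eq_zero_of_isCoprime {A : Type*} [Ring A] [Algebra R A] {v x y : A} {P Q : R[X]}
    (h : IsCoprime P Q) (hv : SemiconjBy v x y) (hP : aeval y P * v = 0)
    (hQ : v * aeval x Q = 0) : v = 0 := by
  obtain ⟨a, b, hab⟩ := h
  have hQ' : aeval y Q * v = 0 := (semiconjBy_aeval hv Q).eq.symm.trans hQ
  rw [← one_mul v, ← map_one (aeval (R := R) y), ← hab, map_add, map_mul, map_mul, add_mul,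
    mul_assoc, mul_assoc, hP, hQ', mul_zero, mul_zero, add_zero]

variable {ι A B : Type*} {p : ℕ} [Ring A] [CommRing B] [Algebra R A] [Algebra R B]

/-- On the `i`-th component, `x k` is a root of the polynomial whose roots are the elements of `cs`
congruent to `i k`. -/
def ResidueGrading.IsSpectral (b : ResidueGrading ι p B) (R : Type*) [CommRing R] [Algebra R B]
    (cs : Multiset ℤ) : Prop :=
  ∀ i k, aeval (b.x k) (linearProduct R (residuePart cs (i k))) * b.E i = 0

theorem ResidueGrading.E_mul_ε_mul_E [DecidableEq ι] (b : ResidueGrading ι p B)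
    {i i' : ι → ZMod p} {j k : ι} (h : i' ≠ i ∘ Equiv.swap j k) (m : ι) :
    b.E i' * b.ε j k m * b.E i = 0 := by
  by_cases hi : i' = i
  · have hjk : i j ≠ i k := fun hjk => h <| by
      rw [hi, Equiv.comp_swap_eq_update, hjk, Function.update_eq_self, ← hjk,
        Function.update_eq_self]
    rw [mul_assoc, ε, mul_assoc, d, b.T_mul_E]
    simp [hjk]
  · rw [mul_right_comm, b.E_mul_E_of_ne hi, zero_mul]

namespace ResidueGrading.IsSpectral

variable {b : ResidueGrading ι p B} {cs : Multiset ℤ}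

theorem aeval_mul_map_E (hb : b.IsSpectral R cs) (f : B →ₐ[R] A) (i : ι → ZMod p) (k : ι) :
    aeval (f (b.x k)) (linearProduct R (residuePart cs (i k))) * f (b.E i) = 0 := by
  rw [aeval_algHom_apply, ← map_mul, hb i k, map_zero]

theorem map_E_mul_aeval (hb : b.IsSpectral R cs) (f : B →ₐ[R] A) (i : ι → ZMod p) (k : ι) :
    f (b.E i) * aeval (f (b.x k)) (linearProduct R (residuePart cs (i k))) = 0 := by
  rw [aeval_algHom_apply, ← map_mul, mul_comm, hb i k, map_zero]

variable (hp : p.Prime) (hR : (p : R) ∈ Ideal.jacobson (⊥ : Ideal R))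

include hp hR

theorem map_E_eq_zero (hb : b.IsSpectral R cs) {f : B →ₐ[R] A} {k : ι} (hk : f (b.x k) = 0)
    {i : ι → ZMod p} (hi : i k ≠ 0) : f (b.E i) = 0 := by
  have coprime : IsCoprime (linearProduct R (residuePart cs (i k)))
      (linearProduct R {0}) := by
    refine isCoprime_linearProduct hp hR fun c hc d hd => ?_
    rwa [(mem_residuePart.1 hc).2, Multiset.mem_singleton.1 hd, Int.cast_zero]
  have commute : Commute (f (b.E i)) (f (b.x k)) := (Commute.all (b.E i) (b.x k)).map f
  refine eq_zero_of_isCoprime coprime commute (hb.aeval_mul_map_E f i k) ?_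
  rw [linearProduct_singleton_zero, aeval_X, hk, mul_zero]

theorem map_E_mul_mul_map_E [DecidableEq ι] (hb : b.IsSpectral R cs) {f : B →ₐ[R] A} {ψ : A}
    {j k : ι}
    (hx : ∀ m, Straightens (f : B →+* A) ψ (b.x m) (b.x (Equiv.swap j k m)) (b.ε j k m))
    {i i' : ι → ZMod p} (hi : i' ≠ i ∘ Equiv.swap j k) : f (b.E i') * ψ * f (b.E i) = 0 := by
  obtain ⟨m, hm⟩ := Function.ne_iff.1 hi
  refine eq_zero_of_isCoprime (isCoprime_residuePart hp hR (cs := cs) (ds := cs) hm)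
    (x := f (b.x (Equiv.swap j k m))) (y := f (b.x m)) ?_ ?_ ?_
  · have defect : f (b.E i') * f (b.ε j k m) * f (b.E i) = 0 := by
      rw [← map_mul, ← map_mul, b.E_mul_ε_mul_E hi, map_zero]
    have hψ : f (b.x m) * ψ = ψ * f (b.x (Equiv.swap j k m)) + f (b.ε j k m) := hx m
    have swap_E (i m) : f (b.E i) * f (b.x m) = f (b.x m) * f (b.E i) :=
      ((Commute.all (b.E i) (b.x m)).map f).eq
    calc f (b.E i') * ψ * f (b.E i) * f (b.x (Equiv.swap j k m))
        = f (b.E i') * (ψ * f (b.x (Equiv.swap j k m))) * f (b.E i) := by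
          simp only [mul_assoc, swap_E]
      _ = f (b.E i') * (f (b.x m) * ψ) * f (b.E i) := by
          rw [hψ, mul_add, add_mul, defect, add_zero]
      _ = f (b.x m) * (f (b.E i') * ψ * f (b.E i)) := by
          simp only [← mul_assoc, swap_E]
  · rw [mul_assoc, ← mul_assoc, hb.aeval_mul_map_E, zero_mul]
  · rw [mul_assoc, Function.comp_apply, hb.map_E_mul_aeval, mul_zero]

variable [DecidableEq ι] [NeZero p]

theorem map_E_eq [Fintype ι] (hb : b.IsSpectral R cs) {f : B →ₐ[R] A} {e : (ι → ZMod p) → A}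
    (he : CompleteOrthogonalIdempotents e) (comm : ∀ k i, Commute (f (b.x k)) (e i))
    (hx : ∀ k i, aeval (f (b.x k)) (linearProduct R (residuePart cs (i k))) * e i = 0)
    (i : ι → ZMod p) : f (b.E i) = e i := by
  have disjoint {i j : ι → ZMod p} (hij : j ≠ i) : f (b.E i) * e j = 0 := by
    obtain ⟨m, hm⟩ := Function.ne_iff.1 hij
    have commute : Commute (f (b.E i) * e j) (f (b.x m)) :=
      ((Commute.all (b.E i) (b.x m)).map f).mul_left (comm m j).symm
    refine eq_zero_of_isCoprime (isCoprime_residuePart hp hR (cs := cs) (ds := cs) hm.symm)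
      commute ?_ ?_
    · rw [← mul_assoc, hb.aeval_mul_map_E, zero_mul]
    · have comm_j := semiconjBy_aeval (comm m j).symm (linearProduct R (residuePart cs (j m)))
      rw [mul_assoc, comm_j.eq, hx, mul_zero]
  calc f (b.E i) = f (b.E i) * ∑ j, e j := by rw [he.complete, mul_one]
    _ = f (b.E i) * e i := by
      rw [Finset.mul_sum]
      exact Fintype.sum_eq_single i fun j hij => disjoint hij
    _ = (∑ j, f (b.E j)) * e i := by
      rw [Finset.sum_mul]
      exact (Fintype.sum_eq_single i fun j hij => disjoint hij.symm).symm
    _ = e i := by rw [← map_sum, b.sum_E, map_one, one_mul]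

theorem intertwines [Finite ι] (hb : b.IsSpectral R cs) {f : B →ₐ[R] A} {ψ : A} {j k : ι}
    (hx : ∀ m, Straightens (f : B →+* A) ψ (b.x m) (b.x (Equiv.swap j k m)) (b.ε j k m)) :
    Intertwines b (f : B →+* A) ψ j k where
  x := hx
  T g := by
    refine b.ext_map_E_mul (f : B →+* A) fun i' => b.ext_mul_map_E (f : B →+* A) fun i => ?_
    have left : f (b.E i') * f (b.T g) = g i' * f (b.E i') := by
      rw [← map_mul, mul_comm, b.T_mul_E, map_mul, map_intCast]
    have right : f (b.T fun i => g (i ∘ Equiv.swap j k)) * f (b.E i) =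
        g (i ∘ Equiv.swap j k) * f (b.E i) := by
      rw [← map_mul, b.T_mul_E, map_mul, map_intCast]
    suffices g i' * (f (b.E i') * ψ * f (b.E i)) =
        g (i ∘ Equiv.swap j k) * (f (b.E i') * ψ * f (b.E i)) by
      simp only [RingHom.coe_coe, map_zero, add_zero, mul_assoc, right]
      simp only [← mul_assoc, left]
      simp only [mul_assoc] at this ⊢
      rw [this, ← mul_assoc, Int.cast_comm]
      simp only [mul_assoc, Int.cast_comm]
    by_cases hi : i' = i ∘ Equiv.swap j k
    · rw [hi]
    · rw [hb.map_E_mul_mul_map_E hp hR hx hi, mul_zero, mul_zero]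

end ResidueGrading.IsSpectral

end Spectral

/-! ## Spectral gradings from polynomial equations -/

section Idempotents

variable {I B : Type*} [Fintype I] [CommRing B]

theorem exists_completeOrthogonalIdempotents {g : I → B}
    (coprime : Pairwise (Function.onFun IsCoprime g)) (prod_eq_zero : ∏ a, g a = 0) :
    ∃ e : I → B, CompleteOrthogonalIdempotents e ∧ ∀ a, g a * e a = 0 := by
  rcases isEmpty_or_nonempty I with hI | hI
  · refine ⟨g, CompleteOrthogonalIdempotents.iff_ortho_complete.2 ⟨fun a => hI.elim a, ?_⟩,
      fun a => hI.elim a⟩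
    rw [Fintype.sum_empty, ← prod_eq_zero, Fintype.prod_empty]
  obtain ⟨μ, hμ⟩ := exists_sum_eq_one_iff_pairwise_coprime'.2 coprime
  have factor (a : I) : g a * ∏ b ∈ {a}ᶜ, g b = 0 := by
    rw [← prod_eq_zero, Fintype.prod_eq_mul_prod_compl a]
  refine ⟨fun a => μ a * ∏ b ∈ {a}ᶜ, g b,
    CompleteOrthogonalIdempotents.iff_ortho_complete.2 ⟨fun a a' h => ?_, hμ⟩, fun a => ?_⟩
  · obtain ⟨t, ht⟩ : g a ∣ ∏ b ∈ {a'}ᶜ, g b := Finset.dvd_prod_of_mem g (by simpa using h)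
    rw [ht]
    linear_combination (μ a * μ a' * t) * factor a
  · linear_combination μ a * factor a

theorem completeOrthogonalIdempotents_prod {κ : Type*} [DecidableEq κ] [Fintype κ] {e : κ → I → B}
    (he : ∀ k, CompleteOrthogonalIdempotents (e k)) :
    CompleteOrthogonalIdempotents fun i : κ → I => ∏ k, e k (i k) := by
  refine CompleteOrthogonalIdempotents.iff_ortho_complete.2 ⟨fun i j hij => ?_, ?_⟩
  · obtain ⟨k, hk⟩ := Function.ne_iff.1 hij
    rw [← Finset.prod_mul_distrib]
    exact Finset.prod_eq_zero (Finset.mem_univ k) ((he k).ortho hk)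
  · rw [← Fintype.prod_sum]
    exact Finset.prod_eq_one fun k _ => (he k).complete

/-- The ring homomorphism from integral functions sending an indicator function to the
corresponding idempotent. -/
noncomputable def sumIdempotents {e : I → B} (he : CompleteOrthogonalIdempotents e) :
    (I → ℤ) →+* B where
  toFun g := ∑ i, g i * e i
  map_zero' := by simp
  map_one' := by simp [he.complete]
  map_add' g g' := by simp [add_mul, Finset.sum_add_distrib]
  map_mul' g g' := by
    rw [Finset.sum_mul]
    refine Finset.sum_congr rfl fun i _ => ?_
    rw [mul_assoc, Finset.mul_sum, Finset.sum_eq_single i]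
    · rw [Pi.mul_apply, Int.cast_mul]
      linear_combination -(g i * g' i : B) * (he.idem i).eq
    · intro j _ hji
      rw [mul_left_comm, he.ortho hji.symm, mul_zero]
    · simp

theorem sumIdempotents_single {e : I → B} (he : CompleteOrthogonalIdempotents e) (i : I) :
    sumIdempotents he (Pi.single i 1) = e i := by
  simp [sumIdempotents, Pi.single_apply]

end Idempotents

section Existence

open Polynomial

universe u

variable {R ι : Type*} {B : Type u} {p : ℕ} [CommRing R] [CommRing B] [Algebra R B]

theorem natCast_mem_jacobson_of_isIntegral [Algebra.IsIntegral R B]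
    (hR : (p : R) ∈ Ideal.jacobson (⊥ : Ideal R)) : (p : B) ∈ Ideal.jacobson (⊥ : Ideal B) := by
  rw [Ideal.jacobson, Ideal.mem_sInf] at hR ⊢
  intro m hm
  have := hm.2
  have := hR ⟨bot_le, Ideal.isMaximal_comap_of_isIntegral_of_isMaximal (R := R) m⟩
  simpa using this

namespace ResidueGrading

variable {b : ResidueGrading ι p B} {cs : Multiset ℤ}

theorem IsSpectral.map_x (hb : b.IsSpectral R cs) {K : Type*} [CommRing K] [IsDomain K]
    {π : B →+* K} (φ : ZMod p →+* K) {i : ι → ZMod p} (hi : π (b.E i) = 1) (k : ι) :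
    π (b.x k) = φ (i k) := by
  have root := congrArg π (hb i k)
  rw [map_mul, hi, mul_one, map_zero, aeval_linearProduct, map_multiset_prod, Multiset.map_map,
    Multiset.prod_eq_zero_iff, Multiset.mem_map] at root
  obtain ⟨c, hc, hc'⟩ := root
  rw [← (mem_residuePart.1 hc).2, map_intCast]
  simpa [sub_eq_zero] using hc'

variable [Finite ι] [NeZero p]

variable (b) in
theorem exists_isComponent {K : Type*} [CommRing K] [IsDomain K] (π : B →+* K) :
    ∃ i, b.IsComponent i π ∧ π (b.E i) = 1 := by
  have := Fintype.ofFinite ι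
  obtain ⟨i, hi⟩ : ∃ i, π (b.E i) ≠ 0 := by
    by_contra! h
    simpa [h] using congrArg π b.sum_E
  have hE : π (b.E i) = 1 := by
    have := congrArg π (b.E_mul_self i)
    rw [map_mul] at this
    exact mul_left_cancel₀ hi (this.trans (mul_one _).symm)
  refine ⟨i, fun t => ?_, hE⟩
  simpa [hE] using congrArg π (b.T_mul_E t i)

variable (hp : p.Prime) (hB : (p : B) ∈ Ideal.jacobson (⊥ : Ideal B))

include hp hB

theorem IsSpectral.isUnit (hb : b.IsSpectral R cs) {u : B}
    (hu : ∀ (K : Type u) [Field K] (π : B →+* K) (φ : ZMod p →+* K) (i : ι → ZMod p),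
      (∀ k, π (b.x k) = φ (i k)) → b.IsComponent i π → π u ≠ 0) : IsUnit u := by
  by_contra hnu
  obtain ⟨m, hm, hum⟩ := exists_max_ideal_of_mem_nonunits hnu
  let _ : Field (B ⧸ m) := Ideal.Quotient.field m
  let π := Ideal.Quotient.mk m
  have hpK : (p : B ⧸ m) = 0 := by
    rw [← map_natCast π, Ideal.Quotient.eq_zero_iff_mem]
    exact Ideal.mem_sInf.1 hB ⟨bot_le, hm⟩
  have : CharP (B ⧸ m) p := (CharP.charP_iff_prime_eq_zero hp).2 hpK
  obtain ⟨i, hi, hE⟩ := b.exists_isComponent π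
  exact hu (B ⧸ m) π (ZMod.castHom dvd_rfl _) i (hb.map_x _ hE) hi
    (Ideal.Quotient.eq_zero_iff_mem.2 hum)

theorem IsSpectral.exists_partialInverse (hb : b.IsSpectral R cs) (k l : ι) :
    ∃ P : B, P * (b.x k - b.x l) = 1 - b.d k l ∧ P * b.d k l = 0 := by
  have unit : IsUnit ((b.x k - b.x l) * (1 - b.d k l) + b.d k l) := by
    refine hb.isUnit hp hB fun K _ π φ i hx hi => ?_
    simp only [map_add, map_mul, map_sub, map_one, hi.map_d, hx]
    have : Fact p.Prime := ⟨hp⟩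
    by_cases h : i k = i l
    · simp [h]
    · simp [h, sub_eq_zero, φ.injective.eq_iff]
  obtain ⟨v, hv⟩ := unit.exists_left_inv
  have hd := b.d_mul_self k l
  refine ⟨v * (1 - b.d k l), ?_, ?_⟩
  · linear_combination (1 - b.d k l) * hv - (v * (b.x k - b.x l) - v) * hd
  · linear_combination (-v) * hd

theorem IsSpectral.isUnit_w (hb : b.IsSpectral R cs) {k l : ι} {P : B}
    (hP : P * (b.x k - b.x l) = 1 - b.d k l) (hPd : P * b.d k l = 0) :
    IsUnit (1 - b.adj k l - P - (b.x k - b.x l) * b.d k l) := by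
  refine hb.isUnit hp hB fun K _ π φ i hx hi => ?_
  have hP' := congrArg π hP
  have hPd' := congrArg π hPd
  simp only [map_sub, map_mul, map_one, map_zero, hi.map_d, hi.map_adj, hx] at hP' hPd' ⊢
  have : Fact p.Prime := ⟨hp⟩
  by_cases h : i k = i l
  · simp_all
  by_cases h' : i k = i l + 1
  · simp_all
  intro hw
  have one : π P = 1 := by simpa [h, h', sub_eq_zero, eq_comm (a := (1 : K))] using hw
  have : φ (i k) = φ (i l + 1) := by
    rw [one, if_neg h] at hP'
    rw [map_add, map_one]
    linear_combination hP'
  exact h' (φ.injective this)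

end ResidueGrading

theorem exists_residueData [Finite ι] [NeZero p] [Algebra.IsIntegral R B]
    (hp : p.Prime) (hR : (p : R) ∈ Ideal.jacobson (⊥ : Ideal R)) {cs : Multiset ℤ} {x : ι → B}
    (hx : ∀ k, aeval (x k) (linearProduct R cs) = 0) :
    ∃ b : ResidueData ι p B, b.x = x ∧ b.IsSpectral R cs := by
  have := Fintype.ofFinite ι
  have idempotents (k : ι) : ∃ e : ZMod p → B, CompleteOrthogonalIdempotents e ∧
      ∀ a, aeval (x k) (linearProduct R (residuePart cs a)) * e a = 0 := by
    refine exists_completeOrthogonalIdempotents (fun a a' h => ?_) ?_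
    · exact (isCoprime_residuePart hp hR h).map (aeval (x k)).toRingHom
    · rw [← map_prod, prod_linearProduct_residuePart, hx]
  choose e he hkill using idempotents
  let b : ResidueGrading ι p B := ⟨sumIdempotents (completeOrthogonalIdempotents_prod he), x⟩
  have spectral : b.IsSpectral R cs := fun i k => by
    have : b.E i = ∏ k, e k (i k) := by
      rw [ResidueGrading.E, ← sumIdempotents_single (completeOrthogonalIdempotents_prod he) i]
    rw [this, ← Finset.mul_prod_erase _ _ (Finset.mem_univ k), ← mul_assoc, hkill, zero_mul]
  have hB := natCast_mem_jacobson_of_isIntegral (B := B) hR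
  choose P hP hPd using spectral.exists_partialInverse hp hB
  exact ⟨⟨b, P, hP, hPd, fun k l => spectral.isUnit_w hp hB (hP k l) (hPd k l)⟩, rfl, spectral⟩

end Existence

/-! ## The universal commutative ring with prescribed spectra -/

section SpectralRing

open Polynomial

/-- The commutative algebra on generators indexed by `ι`, each of which is a root of the polynomial
with roots `cs`. -/
abbrev SpectralRing (ι R : Type*) [CommRing R] (cs : Multiset ℤ) : Type _ :=
  MvPolynomial ι R ⧸ Ideal.span (Set.range fun k : ι =>
    aeval (MvPolynomial.X k : MvPolynomial ι R) (linearProduct R cs))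

namespace SpectralRing

variable {ι R : Type*} [CommRing R] (cs : Multiset ℤ)

/-- The generators of the universal ring. -/
noncomputable def x (k : ι) : SpectralRing ι R cs :=
  Ideal.Quotient.mk _ (MvPolynomial.X k)

variable {cs}

theorem aeval_x (k : ι) : aeval (x cs k : SpectralRing ι R cs) (linearProduct R cs) = 0 := by
  have hx : (x cs k : SpectralRing ι R cs) = Ideal.Quotient.mkₐ R _ (MvPolynomial.X k) := rfl
  rw [hx, aeval_algHom_apply, Ideal.Quotient.mkₐ_eq_mk, Ideal.Quotient.eq_zero_iff_mem]
  exact Ideal.subset_span ⟨k, rfl⟩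

theorem algHom_ext {A : Type*} [Semiring A] [Algebra R A] {f g : SpectralRing ι R cs →ₐ[R] A}
    (h : ∀ k, f (x cs k) = g (x cs k)) : f = g :=
  Ideal.Quotient.algHom_ext R (MvPolynomial.algHom_ext h)

instance : Algebra.IsIntegral R (SpectralRing ι R cs) where
  isIntegral a := by
    obtain ⟨q, rfl⟩ := Ideal.Quotient.mk_surjective a
    induction q using MvPolynomial.induction_on with
    | C r => exact isIntegral_algebraMap
    | add q q' hq hq' => simpa only [map_add] using hq.add hq'
    | mul_X q k hq =>
      rw [map_mul]
      exact hq.mul ⟨linearProduct R cs, monic_linearProduct R cs, aeval_x k⟩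

theorem exists_algHom_of_commute {A : Type*} [Ring A] [Algebra R A] {y : ι → A}
    (comm : ∀ k l, Commute (y k) (y l)) (hy : ∀ k, aeval (y k) (linearProduct R cs) = 0) :
    ∃ f : SpectralRing ι R cs →ₐ[R] A, ∀ k, f (x cs k) = y k := by
  have mul_comm_adjoin := Algebra.isMulCommutative_adjoin R (s := Set.range y) <| by
    rintro _ ⟨k, rfl⟩ _ ⟨l, rfl⟩
    exact comm k l
  let _ : CommRing (Algebra.adjoin R (Set.range y)) :=
    { (inferInstance : Ring (Algebra.adjoin R (Set.range y))) with mul_comm := mul_comm' }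
  let z (k : ι) : Algebra.adjoin R (Set.range y) := ⟨y k, Algebra.subset_adjoin ⟨k, rfl⟩⟩
  have hz (k : ι) : aeval (z k) (linearProduct R cs) = 0 := by
    refine Subtype.ext ?_
    rw [aeval_subalgebra_coe]
    exact hy k
  have kernel : ∀ a ∈ Ideal.span (Set.range fun k : ι =>
      aeval (MvPolynomial.X k : MvPolynomial ι R) (linearProduct R cs)),
      MvPolynomial.aeval z a = 0 := by
    refine fun a ha => (Ideal.span_le (I := RingHom.ker (MvPolynomial.aeval z))).2 ?_ ha
    rintro _ ⟨k, rfl⟩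
    rw [SetLike.mem_coe, RingHom.mem_ker, ← aeval_algHom_apply, MvPolynomial.aeval_X, hz]
  refine ⟨(Algebra.adjoin R (Set.range y)).val.comp
    (Ideal.Quotient.liftₐ _ (MvPolynomial.aeval z) kernel), fun k => ?_⟩
  exact congrArg Subtype.val (MvPolynomial.aeval_X z k)

end SpectralRing

end SpectralRing

/-! ## Families of quiver Hecke generators -/

section Family

variable {n p : ℕ} {A B : Type*} [Ring A] [CommRing B]

theorem pL_ne_pR (r : Fin (n - 1)) : pL r ≠ pR r := by
  simp [pL, pR]

theorem pL_ne_pM (r : Fin (n - 1)) (hr : r.1 + 1 < n - 1) : pL r ≠ pM r hr := by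
  simp [pL, pM]

theorem pR_ne_pM (r : Fin (n - 1)) (hr : r.1 + 1 < n - 1) : pR r ≠ pM r hr := by
  simp [pR, pM]

/-- The elements `ψ r` satisfy, together with the image of the graded ring `B`, the relations of the
quiver Hecke algebra other than the cyclotomic one. -/
structure QuiverHeckeFamily (b : ResidueGrading (Fin n) p B) (f : B →+* A)
    (ψ : Fin (n - 1) → A) : Prop where
  intertwines : ∀ r, Intertwines b f (ψ r) (pL r) (pR r)
  sq : ∀ r, ψ r * ψ r = f (b.Q (pL r) (pR r))
  far : ∀ r u : Fin (n - 1), r.1 + 1 < u.1 → Commute (ψ r) (ψ u)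
  braid : ∀ (r : Fin (n - 1)) (hr : r.1 + 1 < n - 1),
    ψ r * ψ ⟨r.1 + 1, hr⟩ * ψ r - ψ ⟨r.1 + 1, hr⟩ * ψ r * ψ ⟨r.1 + 1, hr⟩ =
      f (b.d (pL r) (pM r hr) * (b.adj (pL r) (pR r) - b.adj (pR r) (pL r)))

theorem ResidueData.reflect_bijective (b : ResidueData (Fin n) p B) (f : B →+* A) (j k : Fin n) :
    Function.Bijective fun ψ => b.reflect f ψ j k :=
  (Equiv.subRight (f (b.c j k))).bijective.comp
    (IsUnit.isUnit_iff_mulRight_bijective.1 ((b.isUnit_w j k).map f))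

theorem quiverHeckeFamily_iff [NeZero p] [Fact (2 < p)] {b : ResidueData (Fin n) p B} {f : B →+* A}
    {ψ : Fin (n - 1) → A} (hψ : ∀ r, Intertwines b.toResidueGrading f (ψ r) (pL r) (pR r)) :
    QuiverHeckeFamily b.toResidueGrading f ψ ↔
      SymmetricRelations fun r => b.reflect f (ψ r) (pL r) (pR r) := by
  have sq_iff (r : Fin (n - 1)) := reflect_mul_self_iff (hψ r) (pL_ne_pR r)
  have far_iff (r u : Fin (n - 1)) (h : r.1 + 1 < u.1) := commute_reflect_iff (hψ r) (hψ u)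
    (by simp [pL, Fin.ext_iff]; omega) (by simp [pL, pR, Fin.ext_iff]; omega)
    (by simp [pL, pR, Fin.ext_iff]; omega) (by simp [pR, Fin.ext_iff]; omega)
  have braid_iff (r : Fin (n - 1)) (hr : r.1 + 1 < n - 1) :=
    reflect_braid_iff (hψ r) (hψ ⟨r.1 + 1, hr⟩) (pL_ne_pR r) (pL_ne_pM r hr) (pR_ne_pM r hr)
  constructor
  · intro h
    refine ⟨fun r => (sq_iff r).2 (h.sq r), fun r hr => ?_,
      fun r u hru => (far_iff r u hru).2 (h.far r u hru)⟩
    rw [mul_assoc, mul_assoc]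
    exact (braid_iff r hr (h.sq _) (h.sq _)).2 (h.braid r hr)
  · intro h
    have sq (r : Fin (n - 1)) := (sq_iff r).1 (h.sq r)
    refine ⟨hψ, sq, fun r u hru => (far_iff r u hru).1 (h.far r u hru), fun r hr => ?_⟩
    refine (braid_iff r hr (sq _) (sq _)).1 ?_
    rw [← mul_assoc, ← mul_assoc]
    exact h.braid r hr

end Family

/-! ## The defining relations -/

section Relations

variable {n p : ℕ} {A : Type*} [Ring A]

theorem swapSeq_eq_comp_swap (i : Fin n → ZMod p) (r : Fin (n - 1)) :
    swapSeq i r = i ∘ Equiv.swap (pL r) (pR r) := by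
  ext k
  simp only [swapSeq, Function.comp_apply, Equiv.swap_apply_def, apply_ite i]

/-- The value of `ψ²` on a component where the two exchanged strands have residues `a`, `c` and dots
`u`, `v`. -/
noncomputable def quadCoeff (a c : ZMod p) (u v : A) : A :=
  (if a = c then 0 else 1) +
    ((if c = a + 1 then 1 else 0) - if a = c + 1 then 1 else 0) * ((u + a.val) - (v + c.val))

/-- The value of the braid defect on a component where the three strands have residues
`a`, `c`, `d`. -/
noncomputable def braidCoeff (a c d : ZMod p) : ℤ :=
  (if a = d then 1 else 0) * ((if a = c + 1 then 1 else 0) - if c = a + 1 then 1 else 0)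

theorem quadCoeff_comm (a c : ZMod p) (u v : A) : quadCoeff a c u v = quadCoeff c a v u := by
  rw [quadCoeff, quadCoeff]
  simp only [eq_comm (a := a) (b := c)]
  noncomm_ring

theorem quadCoeff_self (a : ZMod p) (u v : A) : quadCoeff a a u v = 0 := by
  simp [quadCoeff]

theorem quadCoeff_of_ne {a c : ZMod p} (h : a ≠ c) (h' : c ≠ a + 1) (h'' : a ≠ c + 1) (u v : A) :
    quadCoeff a c u v = 1 := by
  simp [quadCoeff, h, h', h'']

section Odd

variable [Fact (2 < p)]

theorem quadCoeff_add_one (a : ZMod p) (u v : A) :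
    quadCoeff a (a + 1) u v = if a + 1 = 0 then u + p - v else u - v := by
  have : Fact (1 < p) := ⟨(Nat.lt_succ_self 1).trans Fact.out⟩
  have hval : (a + 1).val = (a.val + 1) % p := by rw [ZMod.val_add, ZMod.val_one]
  rw [quadCoeff, if_neg (add_one_ne_self a).symm, if_pos rfl,
    if_neg (add_one_add_one_ne_self a).symm]
  split_ifs with h
  · have hp : a.val + 1 = p := by
      have := a.val_lt
      rw [h, ZMod.val_zero] at hval
      exact (Nat.le_of_dvd a.val.succ_pos (Nat.dvd_of_mod_eq_zero hval.symm)).antisymm' this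
    have hpA : (p : A) = a.val + 1 := by exact_mod_cast congrArg (Nat.cast (R := A)) hp.symm
    rw [h, ZMod.val_zero, hpA]
    push_cast
    noncomm_ring
  · have hlt : a.val + 1 < p := by
      refine lt_of_le_of_ne a.val_lt fun hp => h ?_
      rwa [hp, Nat.mod_self, ZMod.val_eq_zero] at hval
    rw [hval, Nat.mod_eq_of_lt hlt]
    push_cast
    noncomm_ring

end Odd

/-- The relations of the presentation other than the cyclotomic one, with the case distinctions on
residues absorbed into `quadCoeff` and `braidCoeff`. -/
structure KLRFamily [NeZero p] (e : (Fin n → ZMod p) → A) (ψ : Fin (n - 1) → A) (y : Fin n → A) :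
    Prop where
  complete : CompleteOrthogonalIdempotents e
  commute_y_e : ∀ k i, Commute (y k) (e i)
  commute_y : ∀ k m, Commute (y k) (y m)
  ψ_mul_e : ∀ r i, ψ r * e i = e (i ∘ Equiv.swap (pL r) (pR r)) * ψ r
  ψ_mul_y : ∀ r i, ψ r * y (pR r) * e i =
    (y (pL r) * ψ r + if i (pL r) = i (pR r) then 1 else 0) * e i
  y_mul_ψ : ∀ r i, y (pR r) * ψ r * e i =
    (ψ r * y (pL r) + if i (pL r) = i (pR r) then 1 else 0) * e i
  commute_ψ_y : ∀ r k, k ≠ pL r → k ≠ pR r → Commute (ψ r) (y k)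
  far : ∀ r u : Fin (n - 1), r.1 + 1 < u.1 → Commute (ψ r) (ψ u)
  sq : ∀ r i, ψ r * ψ r * e i =
    quadCoeff (i (pL r)) (i (pR r)) (y (pL r)) (y (pR r)) * e i
  braid : ∀ (r : Fin (n - 1)) (hr : r.1 + 1 < n - 1) i,
    (ψ r * ψ ⟨r.1 + 1, hr⟩ * ψ r - ψ ⟨r.1 + 1, hr⟩ * ψ r * ψ ⟨r.1 + 1, hr⟩) * e i =
      braidCoeff (i (pL r)) (i (pR r)) (i (pM r hr)) * e i

/-- The cyclotomic relation for the weight `Λ₀`. -/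
def IsCyclotomic (e : (Fin n → ZMod p) → A) (y : Fin n → A) : Prop :=
  ∀ (h : 0 < n) (i : Fin n → ZMod p),
    (i ⟨0, h⟩ = 0 → y ⟨0, h⟩ * e i = 0) ∧ (i ⟨0, h⟩ ≠ 0 → e i = 0)

section Presentation

variable {R : Type*} [CommRing R] [Algebra R A] [NeZero p]
  {φ : FreeAlgebra R (KLRGen n p) →ₐ[R] A}

theorem isCyclotomic_of_s1Rel (hφ : ∀ a c, S1Rel R n p a c → φ a = φ c) :
    IsCyclotomic (fun i => φ (kE R i)) fun k => φ (kY R k) := fun h0 i => by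
  refine ⟨fun hi => ?_, fun hi => ?_⟩
  · simpa using hφ _ _ (S1Rel.cyc0 h0 i hi)
  · simpa using hφ _ _ (S1Rel.cyc1 h0 i hi)

namespace KLRFamily

variable (h : KLRFamily (fun i => φ (kE R i)) (fun r => φ (kPsi R r)) fun k => φ (kY R k))

include h

theorem map_kPsi_sq_mul_kE (r : Fin (n - 1)) (i : Fin n → ZMod p) :
    φ (kPsi R r ^ 2 * kE R i) =
      quadCoeff (i (pL r)) (i (pR r)) (φ (kY R (pL r))) (φ (kY R (pR r))) * φ (kE R i) := by
  simpa only [map_mul, map_pow, pow_two] using h.sq r i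

theorem map_braid_mul_kE (r : Fin (n - 1)) (hr : r.1 + 1 < n - 1) (i : Fin n → ZMod p) :
    φ ((kPsi R r * kPsi R ⟨r.1 + 1, hr⟩ * kPsi R r -
        kPsi R ⟨r.1 + 1, hr⟩ * kPsi R r * kPsi R ⟨r.1 + 1, hr⟩) * kE R i) =
      braidCoeff (i (pL r)) (i (pR r)) (i (pM r hr)) * φ (kE R i) := by
  simpa only [map_mul, map_sub] using h.braid r hr i

variable [Fact (2 < p)]

theorem map_eq_of_s1Rel (cyc : IsCyclotomic (fun i => φ (kE R i)) fun k => φ (kY R k))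
    {a c : FreeAlgebra R (KLRGen n p)} (hac : S1Rel R n p a c) : φ a = φ c := by
  have sq_e := h.map_kPsi_sq_mul_kE
  have braid_e := h.map_braid_mul_kE
  induction hac with
  | cyc0 h0 i hi => simpa using (cyc h0 i).1 hi
  | cyc1 h0 i hi => simpa using (cyc h0 i).2 hi
  | orth i j hij => simpa using h.complete.ortho hij
  | idem i => simpa using (h.complete.idem i).eq
  | complete => simpa using h.complete.complete
  | yE k i => simpa using (h.commute_y_e k i).eq
  | psiE r i => simpa [swapSeq_eq_comp_swap] using h.ψ_mul_e r i
  | yy k m => simpa using (h.commute_y k m).eq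
  | psiyEq r i hi => simpa [hi] using h.ψ_mul_y r i
  | psiyNe r i hi => simpa [hi] using h.ψ_mul_y r i
  | ypsiEq r i hi => simpa [hi] using h.y_mul_ψ r i
  | ypsiNe r i hi => simpa [hi] using h.y_mul_ψ r i
  | psiyFar r k hk =>
    simpa using (h.commute_ψ_y r k (Fin.ne_of_val_ne hk.1) (Fin.ne_of_val_ne hk.2)).eq
  | psipsiFar r s hrs =>
    simpa using hrs.elim (fun hr => (h.far r s hr).eq) fun hs => (h.far s r hs).symm.eq
  | quadEq r i hi => rw [sq_e, hi, quadCoeff_self, zero_mul, map_zero]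
  | quadRne r i hi h0 =>
    rw [sq_e, hi, quadCoeff_add_one, if_neg (hi ▸ h0), map_mul, map_sub]
  | quadR0 r i hi h0 =>
    rw [sq_e, hi, quadCoeff_add_one, if_pos (hi ▸ h0), map_mul, map_sub, map_add, map_natCast]
  | quadLne r i hi h0 =>
    rw [sq_e, quadCoeff_comm, hi, quadCoeff_add_one, if_neg (hi ▸ h0), map_mul, map_sub]
  | quadL0 r i hi h0 =>
    rw [sq_e, quadCoeff_comm, hi, quadCoeff_add_one, if_pos (hi ▸ h0), map_mul, map_sub, map_add,
      map_natCast]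
  | quadNone r i h1 h2 h3 => rw [sq_e, quadCoeff_of_ne h1 h2 h3, one_mul]
  | braidR r hr i h0 hi =>
    simp [braid_e, braidCoeff, h0, hi, (add_one_add_one_ne_self _).symm]
  | braidL r hr i h0 hi =>
    simp [braid_e, braidCoeff, h0, hi, (add_one_add_one_ne_self _).symm]
  | braidNone r hr i hi =>
    rw [braid_e, braidCoeff]
    by_cases h0 : i (pM r hr) = i (pL r) <;> simp_all [eq_comm]

end KLRFamily

variable [Fact (2 < p)] (hφ : ∀ a c, S1Rel R n p a c → φ a = φ c)

include hφ

theorem map_sq_of_s1Rel (r : Fin (n - 1)) (i : Fin n → ZMod p) :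
    φ (kPsi R r ^ 2 * kE R i) =
      quadCoeff (i (pL r)) (i (pR r)) (φ (kY R (pL r))) (φ (kY R (pR r))) * φ (kE R i) := by
  by_cases h : i (pL r) = i (pR r)
  · rw [hφ _ _ (S1Rel.quadEq r i h), h, quadCoeff_self, zero_mul, map_zero]
  by_cases hR : i (pR r) = i (pL r) + 1
  · rw [hR, quadCoeff_add_one, ← hR]
    by_cases h0 : i (pR r) = 0
    · simp [hφ _ _ (S1Rel.quadR0 r i hR h0), h0]
    · simp [hφ _ _ (S1Rel.quadRne r i hR h0), h0]
  by_cases hL : i (pL r) = i (pR r) + 1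
  · rw [quadCoeff_comm, hL, quadCoeff_add_one, ← hL]
    by_cases h0 : i (pL r) = 0
    · simp [hφ _ _ (S1Rel.quadL0 r i hL h0), h0]
    · simp [hφ _ _ (S1Rel.quadLne r i hL h0), h0]
  · rw [hφ _ _ (S1Rel.quadNone r i h hR hL), quadCoeff_of_ne h hR hL, one_mul]

theorem map_braid_of_s1Rel (r : Fin (n - 1)) (hr : r.1 + 1 < n - 1) (i : Fin n → ZMod p) :
    φ ((kPsi R r * kPsi R ⟨r.1 + 1, hr⟩ * kPsi R r -
        kPsi R ⟨r.1 + 1, hr⟩ * kPsi R r * kPsi R ⟨r.1 + 1, hr⟩) * kE R i) =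
      braidCoeff (i (pL r)) (i (pR r)) (i (pM r hr)) * φ (kE R i) := by
  by_cases h : i (pM r hr) = i (pL r) ∧ (i (pR r) = i (pL r) + 1 ∨ i (pL r) = i (pR r) + 1)
  · obtain ⟨h0, hR | hL⟩ := h
    · rw [hφ _ _ (S1Rel.braidR r hr i h0 hR)]
      simp [braidCoeff, h0, hR, (add_one_add_one_ne_self _).symm]
    · rw [hφ _ _ (S1Rel.braidL r hr i h0 hL)]
      simp [braidCoeff, h0, hL, (add_one_add_one_ne_self _).symm]
  · rw [hφ _ _ (S1Rel.braidNone r hr i h), map_zero, braidCoeff]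
    by_cases h0 : i (pM r hr) = i (pL r) <;> simp_all [eq_comm]

theorem klrFamily_of_s1Rel :
    KLRFamily (fun i => φ (kE R i)) (fun r => φ (kPsi R r)) fun k => φ (kY R k) where
  complete := CompleteOrthogonalIdempotents.iff_ortho_complete.2
    ⟨fun i j hij => by simpa using hφ _ _ (S1Rel.orth i j hij),
      by simpa using hφ _ _ S1Rel.complete⟩
  commute_y_e k i := by simpa [Commute, SemiconjBy] using hφ _ _ (S1Rel.yE k i)
  commute_y k m := by simpa [Commute, SemiconjBy] using hφ _ _ (S1Rel.yy k m)
  ψ_mul_e r i := by simpa [swapSeq_eq_comp_swap] using hφ _ _ (S1Rel.psiE r i)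
  ψ_mul_y r i := by
    by_cases h : i (pL r) = i (pR r)
    · simpa [h] using hφ _ _ (S1Rel.psiyEq r i h)
    · simpa [h] using hφ _ _ (S1Rel.psiyNe r i h)
  y_mul_ψ r i := by
    by_cases h : i (pL r) = i (pR r)
    · simpa [h] using hφ _ _ (S1Rel.ypsiEq r i h)
    · simpa [h] using hφ _ _ (S1Rel.ypsiNe r i h)
  commute_ψ_y r k hL hR := by
    simpa [Commute, SemiconjBy] using
      hφ _ _ (S1Rel.psiyFar r k ⟨fun h => hL (Fin.ext h), fun h => hR (Fin.ext h)⟩)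
  far r u hru := by simpa [Commute, SemiconjBy] using hφ _ _ (S1Rel.psipsiFar r u (Or.inl hru))
  sq r i := by simpa only [map_mul, map_pow, pow_two] using map_sq_of_s1Rel hφ r i
  braid r hr i := by simpa only [map_mul, map_sub] using map_braid_of_s1Rel hφ r hr i

end Presentation

end Relations

/-! ## Quiver Hecke families and the defining relations -/

section Comparison

variable {n p : ℕ} {ι A B : Type*} [Ring A] [CommRing B]

theorem map_quadCoeff (f : B →+* A) (a c : ZMod p) (u v : B) :
    f (quadCoeff a c u v) = quadCoeff a c (f u) (f v) := by
  simp [quadCoeff, apply_ite f]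

namespace ResidueGrading

variable (b : ResidueGrading ι p B) (i : ι → ZMod p)

/-- The quiver Hecke generator `y k`, namely `x k` minus its residue in `{0, …, p - 1}`. -/
noncomputable def y (k : ι) : B :=
  b.x k - b.T fun i => (i k).val

theorem y_mul_E (k : ι) : b.y k * b.E i = (b.x k - (i k).val) * b.E i := by
  rw [y, sub_mul, b.T_mul_E, sub_mul, Int.cast_natCast]

theorem Q_mul_E (k l : ι) :
    b.Q k l * b.E i = quadCoeff (i k) (i l) (b.y k) (b.y l) * b.E i := by
  have hd := b.T_mul_E (fun i => if i k = i l then 1 else 0) i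
  have hkl := b.T_mul_E (fun i => if i k = i l + 1 then 1 else 0) i
  have hlk := b.T_mul_E (fun i => if i l = i k + 1 then 1 else 0) i
  have hk := b.y_mul_E i k
  have hl := b.y_mul_E i l
  rw [Q, d, adj, adj, quadCoeff]
  push_cast at hd hkl hlk
  have hdiff : (if i k = i l then (0 : B) else 1) = 1 - if i k = i l then 1 else 0 := by
    split_ifs <;> simp
  rw [hdiff]
  linear_combination (b.x k - b.x l) * (hlk - hkl) - hd -
    ((if i l = i k + 1 then 1 else 0) - if i k = i l + 1 then 1 else 0) * (hk - hl)

theorem d_mul_adj_sub_adj_mul_E (k l m : ι) :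
    b.d k m * (b.adj k l - b.adj l k) * b.E i = braidCoeff (i k) (i l) (i m) * b.E i := by
  rw [d, adj, adj, ← map_sub, ← map_mul, b.T_mul_E, braidCoeff, Pi.mul_apply, Pi.sub_apply]

theorem completeOrthogonalIdempotents_E [DecidableEq ι] [Fintype ι] [NeZero p] :
    CompleteOrthogonalIdempotents b.E :=
  CompleteOrthogonalIdempotents.iff_ortho_complete.2
    ⟨fun _ _ => b.E_mul_E_of_ne, b.sum_E⟩

theorem map_d_mul_map_E (f : B →+* A) (j k : ι) :
    f (b.d j k) * f (b.E i) = (if i j = i k then 1 else 0) * f (b.E i) := by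
  rw [← map_mul, d, b.T_mul_E, map_mul, map_intCast, Int.cast_ite, Int.cast_one, Int.cast_zero]

end ResidueGrading

section Exchange

variable [DecidableEq ι]

variable {b : ResidueGrading ι p B} {f : B →+* A} {ψ : A} {j k : ι}

theorem Intertwines.mul_map_E (h : Intertwines b f ψ j k) (i : ι → ZMod p) :
    ψ * f (b.E i) = f (b.E (i ∘ Equiv.swap j k)) * ψ := by
  have single_comp : (fun i' : ι → ZMod p =>
      (Pi.single (i ∘ Equiv.swap j k) 1 : (ι → ZMod p) → ℤ) (i' ∘ Equiv.swap j k)) =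
      Pi.single i 1 := by
    ext i'
    have : i' ∘ Equiv.swap j k = i ∘ Equiv.swap j k ↔ i' = i :=
      (Equiv.swap j k).surjective.injective_comp_right.eq_iff
    simp only [Pi.single_apply, this]
  have hT := (h.T (Pi.single (i ∘ Equiv.swap j k) 1)).eq
  rw [single_comp, map_zero, add_zero] at hT
  exact hT.symm

theorem Intertwines.y (h : Intertwines b f ψ j k) (m : ι) :
    Straightens f ψ (b.y m) (b.y (Equiv.swap j k m)) (b.ε j k m) := by
  have hy := (h.x m).sub (h.T fun i => (i m).val)
  rwa [sub_zero] at hy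

theorem intertwines_of_y [Finite ι] [NeZero p]
    (hE : ∀ i, ψ * f (b.E i) = f (b.E (i ∘ Equiv.swap j k)) * ψ)
    (hy : ∀ m, Straightens f ψ (b.y m) (b.y (Equiv.swap j k m)) (b.ε j k m)) :
    Intertwines b f ψ j k := by
  have hT (g : (ι → ZMod p) → ℤ) :
      Straightens f ψ (b.T g) (b.T fun i => g (i ∘ Equiv.swap j k)) 0 := by
    refine b.ext_mul_map_E f fun i => ?_
    rw [map_zero, add_zero, mul_assoc, hE, ← mul_assoc, ← map_mul, b.T_mul_E, mul_assoc, ← map_mul,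
      b.T_mul_E, map_mul, map_intCast, map_mul, map_intCast, mul_assoc, ← hE, ← mul_assoc,
      ← mul_assoc, Int.cast_comm]
  have x_eq (m : ι) : b.x m = b.y m + b.T fun i => (i m).val := (sub_add_cancel _ _).symm
  refine ⟨hT, fun m => ?_⟩
  rw [x_eq, x_eq, ← add_zero (b.ε j k m)]
  exact (hy m).add (hT fun i => (i m).val)

end Exchange

variable [NeZero p] {b : ResidueGrading (Fin n) p B} {f : B →+* A} {ψ : Fin (n - 1) → A}

theorem QuiverHeckeFamily.klrFamily (h : QuiverHeckeFamily b f ψ) :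
    KLRFamily (fun i => f (b.E i)) ψ fun k => f (b.y k) where
  complete := b.completeOrthogonalIdempotents_E.map f
  commute_y_e k i := (Commute.all (b.y k) (b.E i)).map f
  commute_y k m := (Commute.all (b.y k) (b.y m)).map f
  ψ_mul_e r i := (h.intertwines r).mul_map_E i
  ψ_mul_y r i := by
    have hy := ((h.intertwines r).y (pL r)).eq
    rw [Equiv.swap_apply_left, b.ε_left (pL_ne_pR r), map_neg, ← sub_eq_add_neg] at hy
    rw [hy, add_mul, sub_mul, b.map_d_mul_map_E, sub_add_cancel]
  y_mul_ψ r i := by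
    have hy := ((h.intertwines r).y (pR r)).eq
    rw [Equiv.swap_apply_right, b.ε_right (pL_ne_pR r)] at hy
    rw [hy, add_mul, add_mul, b.map_d_mul_map_E]
  commute_ψ_y r k hL hR := by
    have hy := ((h.intertwines r).y k).eq
    rw [Equiv.swap_apply_of_ne_of_ne hL hR, b.ε_of_ne hL hR, map_zero, add_zero] at hy
    exact hy.symm
  far := h.far
  sq r i := by rw [h.sq, ← map_mul, b.Q_mul_E, map_mul, map_quadCoeff]
  braid r hr i := by
    rw [h.braid, ← map_mul, b.d_mul_adj_sub_adj_mul_E, map_mul, map_intCast]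

theorem KLRFamily.quiverHeckeFamily
    (h : KLRFamily (fun i => f (b.E i)) ψ fun k => f (b.y k)) : QuiverHeckeFamily b f ψ where
  intertwines r := by
    refine intertwines_of_y (h.ψ_mul_e r) fun m => b.ext_mul_map_E f fun i => ?_
    by_cases hL : m = pL r
    · rw [hL, Equiv.swap_apply_left, b.ε_left (pL_ne_pR r), map_neg, add_mul, h.ψ_mul_y r i,
        neg_mul, b.map_d_mul_map_E, add_mul, add_neg_cancel_right]
    by_cases hR : m = pR r
    · rw [hR, Equiv.swap_apply_right, b.ε_right (pL_ne_pR r), h.y_mul_ψ r i, add_mul, add_mul,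
        b.map_d_mul_map_E]
    · rw [Equiv.swap_apply_of_ne_of_ne hL hR, b.ε_of_ne hL hR, map_zero, add_zero,
        (h.commute_ψ_y r m hL hR).eq]
  sq r := b.ext_mul_map_E f fun i => by
    rw [h.sq r i, ← map_mul, b.Q_mul_E, map_mul, map_quadCoeff]
  far := h.far
  braid r hr := b.ext_mul_map_E f fun i => by
    rw [h.braid r hr i, ← map_mul, b.d_mul_adj_sub_adj_mul_E, map_mul, map_intCast]

end Comparison

/-! ## Jucys–Murphy spectra -/

section Spectra

open Polynomial

variable {R A : Type*} [CommRing R] [Ring A] [Algebra R A]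

theorem aeval_linearProduct_map_mul {x y u v : A} (hxy : Commute x y) (hux : Commute u x)
    (huy : Commute u y) {d : ℤ} (h : u * ((y - x - d) * v) = 0) (cs : Multiset ℤ) :
    u * (aeval y (linearProduct R (cs.map (· + d))) * v) =
      u * (aeval x (linearProduct R cs) * v) := by
  induction cs using Multiset.induction_on with
  | empty => simp [linearProduct]
  | cons c cs ih =>
    set g := aeval x (linearProduct R cs)
    have hg : Commute (y - x - d) g :=
      semiconjBy_aeval ((hxy.symm.sub_left (Commute.refl x)).sub_left (Int.cast_commute d x)) _
    have hug : Commute u g := semiconjBy_aeval hux _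
    have huc : Commute u (y - (c + d : ℤ)) := huy.sub_right (Int.commute_cast u _)
    have shift : y - (c + d : ℤ) = (y - x - d) + (x - c) := by
      push_cast
      abel
    calc u * (aeval y (linearProduct R ((c ::ₘ cs).map (· + d))) * v)
        = (y - (c + d : ℤ)) * (u * (aeval y (linearProduct R (cs.map (· + d))) * v)) := by
          rw [Multiset.map_cons, linearProduct_cons, map_mul, ← mul_assoc, ← mul_assoc,
            ← mul_assoc, ← huc.eq]
          simp [mul_assoc]
      _ = u * ((y - (c + d : ℤ)) * (g * v)) := by rw [ih, ← mul_assoc, ← huc.eq, mul_assoc]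
      _ = g * (u * ((y - x - d) * v)) + u * ((x - c) * g * v) := by
          rw [shift, add_mul, mul_add, ← mul_assoc _ g v, hg.eq, mul_assoc g, ← mul_assoc u,
            hug.eq, mul_assoc, mul_assoc]
      _ = u * (aeval x (linearProduct R (c ::ₘ cs)) * v) := by
          rw [h, mul_zero, zero_add, linearProduct_cons, map_mul]
          simp [g]

/- The intertwiner `φ = ψ (x - y) + e` satisfies `y φ = φ x` and `φ² = e - ψ² (x - y)²`. -/
theorem aeval_mul_sub_sq_eq_zero {x y ψ e : A} (hxy : Commute x y) (hex : Commute e x)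
    (hey : Commute e y) (idem : e * e = e) (eψ : e * ψ = ψ) (ψe : ψ * e = ψ)
    (hψy : ψ * y = x * ψ + e) (hyψ : y * ψ = ψ * x + e) {P : R[X]} (hP : aeval x P * e = 0) :
    aeval y P * (e - ψ * ψ * ((x - y) * (x - y))) = 0 := by
  set φ := ψ * (x - y) + e with hφ
  have e_comm : Commute e (x - y) := hex.sub_right hey
  have intertwine : SemiconjBy φ x y := by
    have x_comm : (x - y) * x = x * (x - y) := by rw [sub_mul, mul_sub, hxy.eq]
    rw [SemiconjBy, hφ, add_mul, mul_add, ← mul_assoc y, hyψ, ← hey.eq, mul_assoc, x_comm, add_mul,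
      mul_sub e, mul_assoc]
    abel
  have swap : (x - y) * ψ = -(ψ * (x - y)) - (e + e) := by
    rw [sub_mul, hyψ, ← sub_eq_iff_eq_add.2 hψy, mul_sub]
    abel
  have φ_sq : φ * φ = e - ψ * ψ * ((x - y) * (x - y)) := by
    calc φ * φ = ψ * ((x - y) * ψ) * (x - y) + ψ * ((x - y) * e) + (e * ψ) * (x - y) + e * e := by
          rw [hφ]
          noncomm_ring
      _ = ψ * ((x - y) * ψ) * (x - y) + (ψ * e) * (x - y) + (e * ψ) * (x - y) + e * e := by
          rw [← e_comm.eq, mul_assoc ψ e]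
      _ = _ := by
          rw [swap, mul_sub ψ, mul_neg, mul_add, eψ, ψe, idem]
          noncomm_ring
  have e_φ : e * φ = φ := by rw [hφ, mul_add, ← mul_assoc, eψ, idem]
  rw [← φ_sq, ← mul_assoc, ← (semiconjBy_aeval intertwine P).eq, mul_assoc, ← e_φ, ← mul_assoc _ e,
    hP, zero_mul, mul_zero]

end Spectra

/-! ## Jucys–Murphy elements -/

/-- Integers `c`, with repetitions, for which `∏ (X - c)` annihilates the Jucys–Murphy element in
position `k`, counted from `0`. Besides the contents of nodes it has entries which the induction
in `IsJucysMurphy.aeval_contents` adds: `k + 1` inherits all of `k` and both of its shifts. -/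
def contents : ℕ → Multiset ℤ
  | 0 => {0}
  | k + 1 => contents k + (contents k).map (· + 1) + (contents k).map (· + -1)

theorem contents_mono : Monotone contents :=
  monotone_nat_of_le_succ fun k => by
    rw [contents, add_assoc]
    exact Multiset.le_add_right _ _

section JucysMurphy

open Polynomial

variable {n : ℕ} {R A : Type*} [CommRing R] [Ring A] [Algebra R A]

theorem position_induction {motive : Fin n → Prop} (zero : ∀ h : 0 < n, motive ⟨0, h⟩)
    (succ : ∀ r : Fin (n - 1), motive (pL r) → motive (pR r)) (k : Fin n) : motive k := by
  obtain ⟨k, hk⟩ := k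
  induction k with
  | zero => exact zero hk
  | succ k ih => exact succ ⟨k, Nat.lt_sub_of_add_lt hk⟩ (ih _)

/-- The elements `x k` are the Jucys–Murphy elements built from the Coxeter generators `s r`. -/
structure IsJucysMurphy (s : Fin (n - 1) → A) (x : Fin n → A) : Prop where
  zero : ∀ h : 0 < n, x ⟨0, h⟩ = 0
  succ : ∀ r, x (pR r) = s r * x (pL r) * s r + s r

theorem exists_isJucysMurphy (s : Fin (n - 1) → A) : ∃ x : Fin n → A, IsJucysMurphy s x := by
  let x (k : ℕ) : A := Nat.rec 0
    (fun r x => if h : r < n - 1 then s ⟨r, h⟩ * x * s ⟨r, h⟩ + s ⟨r, h⟩ else 0) k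
  exact ⟨fun k => x k.1, fun _ => rfl, fun r => dif_pos r.2⟩

theorem commute_conj_of_braid {a c l : A} (braid : a * c * a = c * a * c) (sq : c * c = 1)
    (comm : Commute c l) : Commute a (c * (a * l * a + a) * c + c) := by
  have left : a * (c * (a * l * a + a) * c) = c * a * l * c * a * c + c * a := by
    calc a * (c * (a * l * a + a) * c) = a * c * a * l * a * c + a * c * a * c := by noncomm_ring
      _ = c * a * (c * l) * a * c + c * a * (c * c) := by
        rw [braid]
        noncomm_ring
      _ = c * a * l * c * a * c + c * a := by
        rw [comm.eq, sq, mul_one]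
        noncomm_ring
  have right : c * (a * l * a + a) * c * a = c * a * l * c * a * c + a * c := by
    calc c * (a * l * a + a) * c * a = c * a * l * (a * c * a) + c * (a * c * a) := by noncomm_ring
      _ = c * a * l * c * a * c + c * c * a * c := by
        rw [braid]
        noncomm_ring
      _ = c * a * l * c * a * c + a * c := by rw [sq, one_mul]
  rw [Commute, SemiconjBy, mul_add, add_mul, left, right, add_assoc, add_assoc,
    add_comm (c * a)]

namespace IsJucysMurphy

variable {s : Fin (n - 1) → A} {x : Fin n → A} (hx : IsJucysMurphy s x)

include hx

theorem unique {x' : Fin n → A} (hx' : IsJucysMurphy s x') : x = x' :=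
  funext <| position_induction (fun h => by rw [hx.zero h, hx'.zero h])
    fun r ih => by rw [hx.succ, hx'.succ, ih]

theorem map {A' : Type*} [Ring A'] (f : A →+* A') :
    IsJucysMurphy (fun r => f (s r)) fun k => f (x k) where
  zero h := by rw [hx.zero, map_zero]
  succ r := by rw [hx.succ, map_add, map_mul, map_mul]

variable (hs : SymmetricRelations s)

include hs

theorem mul_right (r : Fin (n - 1)) : s r * x (pR r) = x (pL r) * s r + 1 := by
  rw [hx.succ, mul_add, hs.sq, mul_assoc, ← mul_assoc, hs.sq, one_mul]

theorem right_mul (r : Fin (n - 1)) : x (pR r) * s r = s r * x (pL r) + 1 := by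
  rw [hx.succ, add_mul, hs.sq, mul_assoc, hs.sq, mul_one]

theorem commute_of_lt {k : Fin n} {r : Fin (n - 1)} (h : k.1 < r.1) : Commute (s r) (x k) := by
  induction k using position_induction generalizing r with
  | zero =>
    rw [hx.zero]
    exact Commute.zero_right _
  | succ u ih =>
    have comm : Commute (s r) (s u) := (hs.far u r h).symm
    rw [hx.succ]
    exact ((comm.mul_right (ih (Nat.lt_of_succ_lt h))).mul_right comm).add_right comm

theorem commute_of_gt {k : Fin n} {r : Fin (n - 1)} (h : r.1 + 1 < k.1) : Commute (s r) (x k) := by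
  induction k using position_induction generalizing r with
  | zero => exact absurd h (Nat.not_lt_zero _)
  | succ u ih =>
    rw [hx.succ]
    obtain hru | hru : r.1 + 1 < u.1 ∨ r.1 + 1 = u.1 :=
      (Nat.le_of_lt_succ h).lt_or_eq
    · have comm : Commute (s r) (s u) := hs.far r u hru
      exact ((comm.mul_right (ih hru)).mul_right comm).add_right comm
    · have hr : r.1 + 1 < n - 1 := hru.trans_lt u.2
      obtain rfl : u = ⟨r.1 + 1, hr⟩ := Fin.ext hru.symm
      have : x (pL ⟨r.1 + 1, hr⟩) = s r * x (pL r) * s r + s r := hx.succ r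
      rw [this]
      exact commute_conj_of_braid (hs.braid r hr) (hs.sq _)
        (hx.commute_of_lt hs (Nat.lt_succ_self r.1))

theorem commute_of_ne {k : Fin n} {r : Fin (n - 1)} (hL : k ≠ pL r) (hR : k ≠ pR r) :
    Commute (s r) (x k) := by
  rw [Ne, Fin.ext_iff] at hL hR
  obtain h | h := lt_or_gt_of_ne hL
  · exact hx.commute_of_lt hs h
  · exact hx.commute_of_gt hs (lt_of_le_of_ne h (Ne.symm hR))

theorem commute (k l : Fin n) : Commute (x k) (x l) := by
  have of_lt {k l : Fin n} (h : k.1 < l.1) : Commute (x k) (x l) := by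
    induction k using position_induction with
    | zero =>
      rw [hx.zero]
      exact Commute.zero_left _
    | succ r ih =>
      have comm : Commute (s r) (x l) := hx.commute_of_gt hs h
      rw [hx.succ]
      exact ((comm.mul_left (ih (Nat.lt_of_succ_lt h))).mul_left comm).add_left comm
  obtain h | h | h := lt_trichotomy k.1 l.1
  · exact of_lt h
  · rw [Fin.ext h]
  · exact (of_lt h).symm

theorem aeval_contents (k : Fin n) : aeval (x k) (linearProduct R (contents k.1)) = 0 := by
  induction k using position_induction with
  | zero h => rw [contents, linearProduct_singleton_zero, aeval_X, hx.zero]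
  | succ r ih =>
    have comm := hx.commute hs (pL r) (pR r)
    have commL (P : R[X]) : Commute (aeval (x (pR r)) P) (x (pL r)) :=
      (semiconjBy_aeval comm P).symm
    have commR (P : R[X]) : Commute (aeval (x (pR r)) P) (x (pR r)) :=
      (semiconjBy_aeval (Commute.refl (x (pR r))) P).symm
    set cs := contents r.1
    have defect := aeval_mul_sub_sq_eq_zero comm (Commute.one_left _) (Commute.one_left _)
      (one_mul 1) (one_mul _) (mul_one _) (hx.mul_right hs r) (hx.right_mul hs r)
      (P := linearProduct R cs) (by rw [mul_one]; exact ih)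
    have factored : aeval (x (pR r)) (linearProduct R cs) *
        ((x (pR r) - x (pL r) - (1 : ℤ)) * (x (pR r) - x (pL r) - (-1 : ℤ))) = 0 := by
      rw [hs.sq, one_mul] at defect
      rw [← neg_eq_zero, ← defect]
      push_cast
      noncomm_ring
    have shift_up := aeval_linearProduct_map_mul (R := R) comm (commL _) (commR _) factored cs
    have killed : aeval (x (pL r)) (linearProduct R cs) = 0 := ih
    rw [killed, zero_mul, mul_zero, ← mul_assoc, ← map_mul, ← linearProduct_add] at shift_up
    have shift_down := aeval_linearProduct_map_mul (R := R) comm (commL _) (commR _) (v := 1)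
      (d := -1) (by rw [mul_one, shift_up]) cs
    rwa [killed, zero_mul, mul_zero, mul_one, ← map_mul, ← linearProduct_add] at shift_down

end IsJucysMurphy

end JucysMurphy

/-! ## Spectra of the generators of the presentation -/

section Dots

open Polynomial

variable {n p : ℕ} {R A : Type*} [CommRing R] [Ring A] [Algebra R A]

theorem residuePart_le {cs ds : Multiset ℤ} (h : cs ≤ ds) (a : ZMod p) :
    residuePart cs a ≤ residuePart ds a :=
  Multiset.filter_le_filter _ h

theorem map_add_residuePart (cs : Multiset ℤ) (a : ZMod p) (d : ℤ) :
    (residuePart cs a).map (· + d) = residuePart (cs.map (· + d)) (a + (d : ZMod p)) := by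
  simp [residuePart, Multiset.filter_map]

theorem residuePart_add_map_le (k : ℕ) (a : ZMod p) {d : ℤ} (hd : d = 1 ∨ d = -1) :
    residuePart (contents k) (a + (d : ZMod p)) + (residuePart (contents k) a).map (· + d) ≤
      residuePart (contents (k + 1)) (a + (d : ZMod p)) := by
  rw [map_add_residuePart, residuePart, residuePart, ← Multiset.filter_add]
  refine residuePart_le ?_ _
  obtain rfl | rfl := hd
  · exact Multiset.le_add_right _ _
  · rw [contents, add_right_comm]
    exact Multiset.le_add_right _ _

theorem aeval_mul_eq_zero_of_le {x e : A} {cs ds : Multiset ℤ} (h : cs ≤ ds)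
    (hx : aeval x (linearProduct R cs) * e = 0) : aeval x (linearProduct R ds) * e = 0 := by
  obtain ⟨q, hq⟩ := linearProduct_dvd_of_le R h
  rw [hq, mul_comm, map_mul, mul_assoc, hx, mul_zero]

theorem add_intCast_ne_self [Fact (2 < p)] {d : ℤ} (hd : d = 1 ∨ d = -1) (a : ZMod p) :
    a + d ≠ a := by
  have one_ne_zero : (1 : ZMod p) ≠ 0 := by simpa using add_one_ne_self (0 : ZMod p)
  obtain rfl | rfl := hd <;> simpa using one_ne_zero

theorem sub_eq_neg_mul_quadCoeff [Fact (2 < p)] {d : ℤ} (hd : d = 1 ∨ d = -1) {a c : ZMod p}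
    (h : c = a + d) (u v : A) :
    v + c.val - (u + a.val) - d = -d * quadCoeff a c u v := by
  have hc (a : ZMod p) := add_one_ne_self a
  have hcc (a : ZMod p) := add_one_add_one_ne_self a
  subst h
  obtain rfl | rfl := hd
  · push_cast
    rw [quadCoeff, if_neg (hc a).symm, if_pos rfl, if_neg (hcc a).symm]
    noncomm_ring
  · obtain ⟨c, rfl⟩ : ∃ c, a = c + 1 := ⟨a - 1, by ring⟩
    push_cast
    rw [add_neg_cancel_right, quadCoeff, if_neg (hc c), if_neg (hcc c).symm, if_pos rfl]
    noncomm_ring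

namespace KLRFamily

variable [NeZero p] {e : (Fin n → ZMod p) → A} {ψ : Fin (n - 1) → A} {y : Fin n → A}
  (h : KLRFamily e ψ y)

include h

theorem aeval_right_mul_of_eq {i : Fin n → ZMod p} {r : Fin (n - 1)}
    (hi : i (pL r) = i (pR r)) {P : R[X]}
    (hP : aeval (y (pL r) + (i (pL r)).val) P * e i = 0) :
    aeval (y (pR r) + (i (pR r)).val) P * e i = 0 := by
  have swap_i : i ∘ Equiv.swap (pL r) (pR r) = i := by
    rw [Equiv.comp_swap_eq_update, hi, Function.update_eq_self, ← hi, Function.update_eq_self]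
  have idem := (h.complete.idem i).eq
  have ψe : ψ r * e i = e i * ψ r := by rw [h.ψ_mul_e, swap_i]
  have e_y (k : Fin n) : Commute (e i) (y k + (i k).val) :=
    (h.commute_y_e k i).symm.add_right (Nat.commute_cast _ _)
  have y_y : Commute (y (pL r) + ((i (pL r)).val : A)) (y (pR r) + (i (pR r)).val) :=
    ((h.commute_y _ _).add_left (Nat.cast_commute _ _)).add_right (Nat.commute_cast _ _)
  have eψe : e i * (ψ r * e i) = ψ r * e i := by rw [ψe, ← mul_assoc, idem]
  have ψee : ψ r * e i * e i = ψ r * e i := by rw [mul_assoc, idem]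
  have sq : ψ r * e i * (ψ r * e i) = 0 := by
    rw [mul_assoc, eψe, ← mul_assoc, h.sq, hi, quadCoeff_self, zero_mul]
  have hψy := h.ψ_mul_y r i
  have hyψ := h.y_mul_ψ r i
  rw [if_pos hi, add_mul, one_mul] at hψy hyψ
  have defect := aeval_mul_sub_sq_eq_zero y_y (e_y _) (e_y _) idem eψe ψee ?_ ?_ hP
  · rwa [sq, zero_mul, sub_zero] at defect
  · rw [mul_assoc, (e_y _).eq, ← mul_assoc, mul_add, add_mul, hψy, ← hi, add_mul,
      ← (Nat.cast_commute _ (ψ r)).eq, add_right_comm, mul_assoc, mul_assoc]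
  · rw [mul_assoc (ψ r), (e_y _).eq, add_mul, ← mul_assoc, hyψ, ← hi, ← mul_assoc,
      (Nat.cast_commute _ (ψ r)).eq, add_mul, mul_add, mul_assoc, mul_assoc, add_right_comm]

theorem quadCoeff_mul_aeval_right {i : Fin n → ZMod p} {r : Fin (n - 1)}
    (hi : i (pL r) ≠ i (pR r)) {P : R[X]}
    (hP : aeval (y (pL r) + (i (pR r)).val) P * e (i ∘ Equiv.swap (pL r) (pR r)) = 0) :
    quadCoeff (i (pL r)) (i (pR r)) (y (pL r)) (y (pR r)) *
      (aeval (y (pR r) + (i (pR r)).val) P * e i) = 0 := by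
  have e_y : Commute (e i) (y (pR r) + (i (pR r)).val) :=
    (h.commute_y_e _ i).symm.add_right (Nat.commute_cast _ _)
  have e_aeval := (semiconjBy_aeval e_y P).eq
  have hψy := h.ψ_mul_y r i
  rw [if_neg hi, add_zero] at hψy
  have semiconj : SemiconjBy (ψ r * e i) (y (pR r) + (i (pR r)).val)
      (y (pL r) + (i (pR r)).val) := by
    rw [SemiconjBy, mul_assoc, e_y.eq, ← mul_assoc, mul_add, add_mul, hψy, add_mul,
      ← (Nat.cast_commute _ (ψ r)).eq, mul_assoc, mul_assoc]
  have hψ : ψ r * e i * aeval (y (pR r) + ((i (pR r)).val : A)) P = 0 := by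
    rw [(semiconjBy_aeval semiconj P).eq, h.ψ_mul_e, ← mul_assoc, hP, zero_mul]
  rw [← e_aeval, ← mul_assoc, ← h.sq, mul_assoc (ψ r), mul_assoc (ψ r), hψ, mul_zero]

theorem aeval_right_mul_of_adj [Fact (2 < p)] {i : Fin n → ZMod p} {r : Fin (n - 1)} {d : ℤ}
    (hd : d = 1 ∨ d = -1) (hi : i (pR r) = i (pL r) + d) {k : ℕ}
    (hL : ∀ i, aeval (y (pL r) + (i (pL r)).val)
      (linearProduct R (residuePart (contents k) (i (pL r)))) * e i = 0) :
    aeval (y (pR r) + (i (pR r)).val)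
      (linearProduct R (residuePart (contents (k + 1)) (i (pR r)))) * e i = 0 := by
  have ne : i (pL r) ≠ i (pR r) := hi ▸ (add_intCast_ne_self hd _).symm
  have hswap := hL (i ∘ Equiv.swap (pL r) (pR r))
  rw [Function.comp_apply, Equiv.swap_apply_left] at hswap
  have hquad := h.quadCoeff_mul_aeval_right ne hswap
  set xL := y (pL r) + ((i (pL r)).val : A)
  set xR := y (pR r) + ((i (pR r)).val : A)
  have x_x : Commute xL xR :=
    ((h.commute_y _ _).add_left (Nat.cast_commute _ _)).add_right (Nat.commute_cast _ _)
  have comm (P : R[X]) {z : A} (hz : Commute xR z) : Commute (aeval xR P) z :=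
    (semiconjBy_aeval hz.symm P).symm
  have diff : xR - xL - d = -d * quadCoeff (i (pL r)) (i (pR r)) (y (pL r)) (y (pR r)) :=
    sub_eq_neg_mul_quadCoeff hd hi _ _
  have factored : aeval xR (linearProduct R (residuePart (contents k) (i (pR r)))) *
      ((xR - xL - d) * e i) = 0 := by
    rw [← mul_assoc, (comm _ (((Commute.refl xR).sub_right x_x.symm).sub_right
      (Int.commute_cast _ d))).eq, mul_assoc, diff, mul_assoc, hquad, mul_zero]
  have shifted := aeval_linearProduct_map_mul (R := R) x_x (comm _ x_x.symm)
    (comm _ (Commute.refl xR)) factored (residuePart (contents k) (i (pL r)))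
  rw [hL, mul_zero, ← mul_assoc, ← map_mul, ← linearProduct_add] at shifted
  refine aeval_mul_eq_zero_of_le ?_ shifted
  rw [hi]
  exact residuePart_add_map_le k _ hd

theorem aeval_mul_eq_zero [Fact (2 < p)] (cyc : IsCyclotomic e y) (k : Fin n) (i : Fin n → ZMod p) :
    aeval (y k + (i k).val) (linearProduct R (residuePart (contents k.1) (i k))) * e i = 0 := by
  induction k using position_induction generalizing i with
  | zero h0 =>
    by_cases hi : i ⟨0, h0⟩ = 0
    · rw [hi, residuePart, contents, Multiset.filter_singleton, if_pos Int.cast_zero,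
        linearProduct_singleton_zero, aeval_X, ZMod.val_zero, Nat.cast_zero, add_zero,
        (cyc h0 i).1 hi]
    · rw [(cyc h0 i).2 hi, mul_zero]
  | succ r ih =>
    by_cases hi : i (pL r) = i (pR r)
    · have mono := residuePart_le (contents_mono r.1.le_succ) (i (pR r))
      refine aeval_mul_eq_zero_of_le mono (h.aeval_right_mul_of_eq hi ?_)
      rw [← hi]
      exact ih i
    by_cases up : i (pR r) = i (pL r) + (1 : ℤ)
    · exact h.aeval_right_mul_of_adj (Or.inl rfl) up ih
    by_cases down : i (pR r) = i (pL r) + (-1 : ℤ)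
    · exact h.aeval_right_mul_of_adj (Or.inr rfl) down ih
    · have mono := residuePart_le (contents_mono r.1.le_succ) (i (pR r))
      refine aeval_mul_eq_zero_of_le mono ?_
      have hswap := ih (i ∘ Equiv.swap (pL r) (pR r))
      rw [Function.comp_apply, Equiv.swap_apply_left] at hswap
      have hquad := h.quadCoeff_mul_aeval_right hi hswap
      rwa [quadCoeff_of_ne hi, one_mul] at hquad
      · simpa using up
      · intro hi'
        exact down (by simp [hi'])

end KLRFamily

end Dots

/-! ## Comparison of the two presentations -/

section ShiftedDot

open Polynomial

variable {n p : ℕ} {R A : Type*} [CommRing R] [Ring A] [Algebra R A] [NeZero p]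

/-- The dot `y k` corrected by the residue of the `k`-th strand; it corresponds to the `k`-th
Jucys–Murphy element. -/
noncomputable def shiftedDot (e : (Fin n → ZMod p) → A) (y : Fin n → A) (k : Fin n) : A :=
  y k + ∑ i, ((i k).val : A) * e i

theorem commute_sum_mul {e : (Fin n → ZMod p) → A} {x : A} (hx : ∀ i, Commute x (e i))
    (k : Fin n) : Commute x (∑ i, ((i k).val : A) * e i) :=
  Commute.sum_right _ _ _ fun i _ => (Nat.commute_cast x _).mul_right (hx i)

namespace KLRFamily

variable {e : (Fin n → ZMod p) → A} {ψ : Fin (n - 1) → A} {y : Fin n → A} (h : KLRFamily e ψ y)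

include h

theorem shiftedDot_mul_e (k : Fin n) (i : Fin n → ZMod p) :
    shiftedDot e y k * e i = (y k + (i k).val) * e i := by
  have (j : Fin n → ZMod p) :
      ((j k).val : A) * e j * e i = if j = i then ((i k).val : A) * e i else 0 := by
    rw [mul_assoc, h.complete.mul_eq]
    split_ifs with hji
    · rw [hji]
    · rw [mul_zero]
  rw [shiftedDot, add_mul, add_mul, Finset.sum_mul]
  simp only [this, Finset.sum_ite_eq', Finset.mem_univ, if_true]

theorem commute_shiftedDot_e (k : Fin n) (i : Fin n → ZMod p) :
    Commute (shiftedDot e y k) (e i) := by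
  refine (h.commute_y_e k i).add_left ?_
  refine (commute_sum_mul (fun j => ?_) k).symm
  by_cases hij : i = j
  · rw [hij]
  · rw [Commute, SemiconjBy, h.complete.ortho hij, h.complete.ortho (Ne.symm hij)]

theorem commute_shiftedDot (k l : Fin n) : Commute (shiftedDot e y k) (shiftedDot e y l) := by
  refine Commute.add_right ?_ (commute_sum_mul (h.commute_shiftedDot_e k) l)
  exact (h.commute_y k l).add_left (commute_sum_mul (h.commute_y_e l) k).symm

theorem aeval_shiftedDot_mul_e [Fact (2 < p)] (cyc : IsCyclotomic e y) (k : Fin n)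
    (i : Fin n → ZMod p) :
    aeval (shiftedDot e y k) (linearProduct R (residuePart (contents n) (i k))) * e i = 0 := by
  have e_y : Commute (e i) (y k + (i k).val) :=
    (h.commute_y_e k i).symm.add_right (Nat.commute_cast _ _)
  have semiconj : SemiconjBy (e i) (y k + (i k).val) (shiftedDot e y k) := by
    rw [SemiconjBy, h.shiftedDot_mul_e, e_y.eq]
  rw [← (semiconjBy_aeval semiconj _).eq, (semiconjBy_aeval e_y _).eq]
  exact aeval_mul_eq_zero_of_le (residuePart_le (contents_mono k.2.le) _)
    (h.aeval_mul_eq_zero cyc k i)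

theorem aeval_shiftedDot [Fact (2 < p)] (cyc : IsCyclotomic e y) (k : Fin n) :
    aeval (shiftedDot e y k) (linearProduct R (contents n)) = 0 := by
  rw [← mul_one (aeval _ _), ← h.complete.complete, Finset.mul_sum]
  exact Finset.sum_eq_zero fun i _ =>
    aeval_mul_eq_zero_of_le (Multiset.filter_le _ _) (h.aeval_shiftedDot_mul_e cyc k i)

end KLRFamily

end ShiftedDot

section Straightening

variable {n : ℕ} {A B : Type*} [Ring A] [CommRing B] {f : B →+* A} {s : Fin (n - 1) → A}
  (hs : SymmetricRelations s) {x : Fin n → B}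

include hs

theorem IsJucysMurphy.straightens (hx : IsJucysMurphy s fun k => f (x k)) (r : Fin (n - 1))
    (m : Fin n) : Straightens f (s r) (x m) (x (Equiv.swap (pL r) (pR r) m))
      ((Pi.single (pR r) 1 - Pi.single (pL r) 1 : Fin n → B) m) := by
  rw [Straightens]
  by_cases hL : m = pL r
  · rw [hL, Equiv.swap_apply_left, hx.mul_right hs]
    simp [pL_ne_pR]
  by_cases hR : m = pR r
  · rw [hR, Equiv.swap_apply_right, hx.right_mul hs]
    simp [(pL_ne_pR r).symm]
  · rw [Equiv.swap_apply_of_ne_of_ne hL hR, (hx.commute_of_ne hs hL hR).eq]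
    simp [hL, hR]

theorem isJucysMurphy_of_straightens (h0 : ∀ h : 0 < n, f (x ⟨0, h⟩) = 0)
    (h : ∀ r, Straightens f (s r) (x (pR r)) (x (pL r)) 1) :
    IsJucysMurphy s fun k => f (x k) where
  zero := h0
  succ r := by
    rw [← one_mul (s r * _ * s r + s r), ← mul_one (f _), ← hs.sq r, ← mul_assoc, (h r).eq]
    rw [hs.sq, one_mul, map_one, add_mul, one_mul]

end Straightening

section Universal

open Polynomial

variable {n p : ℕ} {R A : Type*} [CommRing R] [Ring A] [Algebra R A]

theorem ResidueGrading.map_x {ι B : Type*} [DecidableEq ι] [Fintype ι] [NeZero p] [CommRing B]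
    [Algebra R B] (b : ResidueGrading ι p B) (f : B →ₐ[R] A) (k : ι) :
    f (b.x k) = f (b.y k) + ∑ i, ((i k).val : A) * f (b.E i) := by
  simp only [y, b.T_eq_sum, map_sub, map_sum, map_mul, Int.cast_natCast, map_natCast,
    sub_add_cancel]

theorem ResidueData.map_reflect {ι B A' : Type*} [CommRing B] [Ring A'] (b : ResidueData ι p B)
    (f : B →+* A) (F : A →+* A') (ψ : A) (j k : ι) :
    F (b.reflect f ψ j k) = b.reflect (F.comp f) (F ψ) j k := by
  simp only [reflect, reflection, map_sub, map_mul, RingHom.comp_apply]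

variable {b : ResidueData (Fin n) p (SpectralRing (Fin n) R (contents n))}
  (hx : b.x = SpectralRing.x (contents n))

include hx

theorem algHom_ext_of_isJucysMurphy {s : Fin (n - 1) → A}
    {f f' : SpectralRing (Fin n) R (contents n) →ₐ[R] A}
    (hf : IsJucysMurphy s fun k => f (b.x k)) (hf' : IsJucysMurphy s fun k => f' (b.x k)) :
    f = f' :=
  SpectralRing.algHom_ext fun k => hx ▸ congrFun (hf.unique hf') k

theorem algHom_ext_of_y_E [NeZero p] {f f' : SpectralRing (Fin n) R (contents n) →ₐ[R] A}
    (hE : ∀ i, f (b.E i) = f' (b.E i)) (hy : ∀ k, f (b.y k) = f' (b.y k)) : f = f' :=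
  SpectralRing.algHom_ext fun k => by
    simp only [← hx, b.map_x, hE, hy]

variable [NeZero p] [Fact (2 < p)] (hp : p.Prime) (hR : (p : R) ∈ Ideal.jacobson (⊥ : Ideal R))
  (hb : b.IsSpectral R (contents n))

include hp hR hb

theorem KLRFamily.exists_algHom {e : (Fin n → ZMod p) → A} {ψ : Fin (n - 1) → A} {y : Fin n → A}
    (h : KLRFamily e ψ y) (cyc : IsCyclotomic e y) :
    ∃ f : SpectralRing (Fin n) R (contents n) →ₐ[R] A,
      (∀ i, f (b.E i) = e i) ∧ ∀ k, f (b.y k) = y k := by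
  obtain ⟨f, hf⟩ := SpectralRing.exists_algHom_of_commute h.commute_shiftedDot
    (h.aeval_shiftedDot (R := R) cyc)
  rw [← hx] at hf
  have map_E (i) : f (b.E i) = e i := hb.map_E_eq hp hR h.complete
    (fun k i => hf k ▸ h.commute_shiftedDot_e k i)
    (fun k i => hf k ▸ h.aeval_shiftedDot_mul_e cyc k i) i
  refine ⟨f, map_E, fun k => ?_⟩
  have hk := hf k
  rw [b.map_x] at hk
  simpa only [map_E, shiftedDot, add_left_inj] using hk

theorem SymmetricRelations.exists_quiverHeckeFamily {s : Fin (n - 1) → A}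
    (hs : SymmetricRelations s) :
    ∃ (g : SpectralRing (Fin n) R (contents n) →ₐ[R] A) (ψ : Fin (n - 1) → A),
      QuiverHeckeFamily b.toResidueGrading (g : _ →+* A) ψ ∧
      (∀ r, b.reflect (g : _ →+* A) (ψ r) (pL r) (pR r) = s r) ∧
      IsJucysMurphy s fun k => g (b.x k) := by
  obtain ⟨x, jm⟩ := exists_isJucysMurphy s
  have root (k : Fin n) : aeval (x k) (linearProduct R (contents n)) = 0 := by
    rw [← mul_one (aeval _ _)]
    refine aeval_mul_eq_zero_of_le (contents_mono k.2.le) ?_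
    rw [jm.aeval_contents hs, zero_mul]
  obtain ⟨g, hg⟩ := SpectralRing.exists_algHom_of_commute (jm.commute hs) root
  rw [← hx] at hg
  choose ψ hψ using fun r => (b.reflect_bijective (g : _ →+* A) (pL r) (pR r)).surjective (s r)
  have intertwines (r : Fin (n - 1)) :
      Intertwines b.toResidueGrading (g : _ →+* A) (ψ r) (pL r) (pR r) := by
    refine hb.intertwines hp hR fun m => (straightens_reflect_iff m).1 ?_
    rw [show b.reflect (g : _ →+* A) (ψ r) (pL r) (pR r) = s r from hψ r]
    exact IsJucysMurphy.straightens hs (by simpa only [RingHom.coe_coe, hg] using jm) r m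
  refine ⟨g, ψ, (quiverHeckeFamily_iff intertwines).2 ?_, hψ, ?_⟩
  · simpa only [hψ] using hs
  · simpa only [hg] using jm

end Universal

section Presentation

variable {n p : ℕ} {R A : Type*} [CommRing R] [Ring A] [Algebra R A]

theorem groupAlgebra_algHom_ext {F F' : MonoidAlgebra R (Equiv.Perm (Fin n)) →ₐ[R] A}
    (h : ∀ r : Fin (n - 1), F (MonoidAlgebra.of R (Equiv.Perm (Fin n)) (simpleReflection r)) =
      F' (MonoidAlgebra.of R (Equiv.Perm (Fin n)) (simpleReflection r))) : F = F' := by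
  refine (MonoidAlgebra.lift R A _).symm.injective
    (MonoidHom.eq_of_eqOn_denseM (closure_range_simpleReflection n) ?_)
  rintro _ ⟨r, rfl⟩
  exact h r

theorem SymmetricRelations.exists_algHom {s : Fin (n - 1) → A} (hs : SymmetricRelations s) :
    ∃ Θ : MonoidAlgebra R (Equiv.Perm (Fin n)) →ₐ[R] A,
      ∀ r, Θ (MonoidAlgebra.of R (Equiv.Perm (Fin n)) (simpleReflection r)) = s r := by
  obtain ⟨φ, hφ⟩ := hs.exists_monoidHom
  exact ⟨MonoidAlgebra.lift R A _ φ, fun r => by rw [MonoidAlgebra.lift_of, hφ]⟩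

theorem symmetricRelations_of (R : Type*) [CommRing R] (n : ℕ) :
    SymmetricRelations fun r : Fin (n - 1) =>
      MonoidAlgebra.of R (Equiv.Perm (Fin n)) (simpleReflection r) where
  sq r := by rw [← map_mul, (symmetricRelations_simpleReflection n).sq, map_one]
  braid r hr := by
    simpa only [map_mul] using congrArg (MonoidAlgebra.of R _)
      ((symmetricRelations_simpleReflection n).braid r hr)
  far r u h := ((symmetricRelations_simpleReflection n).far r u h).map (MonoidAlgebra.of R _)

variable [NeZero p]

/-- The quotient map from the free algebra on the generators to the presented algebra. -/
noncomputable abbrev klrMk (R : Type*) [CommRing R] (n p : ℕ) [NeZero p] :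
    FreeAlgebra R (KLRGen n p) →ₐ[R] RingQuot (S1Rel R n p) :=
  RingQuot.mkAlgHom R (S1Rel R n p)

theorem klrMk_eq_of_s1Rel (a c : FreeAlgebra R (KLRGen n p)) (h : S1Rel R n p a c) :
    klrMk R n p a = klrMk R n p c :=
  RingQuot.mkAlgHom_rel R h

theorem presented_algHom_ext {F F' : RingQuot (S1Rel R n p) →ₐ[R] A}
    (hE : ∀ i, F (klrMk R n p (kE R i)) = F' (klrMk R n p (kE R i)))
    (hψ : ∀ r, F (klrMk R n p (kPsi R r)) = F' (klrMk R n p (kPsi R r)))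
    (hy : ∀ k, F (klrMk R n p (kY R k)) = F' (klrMk R n p (kY R k))) : F = F' := by
  refine RingQuot.ringQuot_ext' R _ _ (FreeAlgebra.hom_ext (funext fun g => ?_))
  cases g with
  | idem i => exact hE i
  | psi r => exact hψ r
  | y k => exact hy k

theorem KLRFamily.exists_presented_algHom [Fact (2 < p)] {e : (Fin n → ZMod p) → A}
    {ψ : Fin (n - 1) → A} {y : Fin n → A} (h : KLRFamily e ψ y) (cyc : IsCyclotomic e y) :
    ∃ Ψ : RingQuot (S1Rel R n p) →ₐ[R] A, (∀ i, Ψ (klrMk R n p (kE R i)) = e i) ∧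
      (∀ r, Ψ (klrMk R n p (kPsi R r)) = ψ r) ∧ ∀ k, Ψ (klrMk R n p (kY R k)) = y k := by
  let φ : FreeAlgebra R (KLRGen n p) →ₐ[R] A := FreeAlgebra.lift R fun
    | .idem i => e i
    | .psi r => ψ r
    | .y k => y k
  have hE (i) : φ (kE R i) = e i := FreeAlgebra.lift_ι_apply _ _
  have hψ (r) : φ (kPsi R r) = ψ r := FreeAlgebra.lift_ι_apply _ _
  have hy (k) : φ (kY R k) = y k := FreeAlgebra.lift_ι_apply _ _
  have hφ {a c} (hac : S1Rel R n p a c) : φ a = φ c :=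
    KLRFamily.map_eq_of_s1Rel (φ := φ) (by simpa only [hE, hψ, hy] using h)
      (by simpa only [hE, hy] using cyc) hac
  refine ⟨RingQuot.liftAlgHom R ⟨φ, fun _ _ => hφ⟩, fun i => ?_, fun r => ?_, fun k => ?_⟩
  · rw [RingQuot.liftAlgHom_mkAlgHom_apply, hE]
  · rw [RingQuot.liftAlgHom_mkAlgHom_apply, hψ]
  · rw [RingQuot.liftAlgHom_mkAlgHom_apply, hy]

end Presentation

section Cyclotomic

variable {n p : ℕ} {A B : Type*} [Ring A] [CommRing B]

theorem IsCyclotomic.map_x_zero [NeZero p] {b : ResidueGrading (Fin n) p B} {f : B →+* A}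
    (cyc : IsCyclotomic (fun i => f (b.E i)) fun k => f (b.y k)) (h0 : 0 < n) :
    f (b.x ⟨0, h0⟩) = 0 := by
  refine b.ext_mul_map_E f fun i => ?_
  have hy := congrArg f (b.y_mul_E i ⟨0, h0⟩)
  rw [map_mul, map_mul, map_sub, map_natCast] at hy
  by_cases hi : i ⟨0, h0⟩ = 0
  · rw [zero_mul, ← (cyc h0 i).1 hi, hy, hi, ZMod.val_zero, Nat.cast_zero, sub_zero]
  · have hE : f (b.E i) = 0 := (cyc h0 i).2 hi
    rw [hE, mul_zero, mul_zero]

theorem ResidueGrading.IsSpectral.isCyclotomic {R : Type*} [CommRing R] [Algebra R A] [Algebra R B]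
    (hp : p.Prime) (hR : (p : R) ∈ Ideal.jacobson (⊥ : Ideal R)) {b : ResidueGrading (Fin n) p B}
    {cs : Multiset ℤ} (hb : b.IsSpectral R cs) {f : B →ₐ[R] A}
    (hf : ∀ h0 : 0 < n, f (b.x ⟨0, h0⟩) = 0) :
    IsCyclotomic (fun i => f (b.E i)) fun k => f (b.y k) := fun h0 i => by
  refine ⟨fun hi => ?_, fun hi => hb.map_E_eq_zero hp hR (hf h0) hi⟩
  rw [← map_mul, b.y_mul_E, map_mul, map_sub, hf h0, hi, ZMod.val_zero, Nat.cast_zero, map_zero,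
    sub_zero, zero_mul]

theorem KLRFamily.exists_reflections {R : Type*} [CommRing R] [Algebra R A] [NeZero p]
    [Fact (2 < p)] (hp : p.Prime) (hR : (p : R) ∈ Ideal.jacobson (⊥ : Ideal R))
    {b : ResidueData (Fin n) p (SpectralRing (Fin n) R (contents n))}
    (hx : b.x = SpectralRing.x (contents n)) (hb : b.IsSpectral R (contents n))
    {e : (Fin n → ZMod p) → A} {ψ : Fin (n - 1) → A} {y : Fin n → A}
    (h : KLRFamily e ψ y) (cyc : IsCyclotomic e y) :
    ∃ f : SpectralRing (Fin n) R (contents n) →ₐ[R] A,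
      (∀ i, f (b.E i) = e i) ∧ (∀ k, f (b.y k) = y k) ∧
      SymmetricRelations (fun r => b.reflect (f : _ →+* A) (ψ r) (pL r) (pR r)) ∧
      IsJucysMurphy (fun r => b.reflect (f : _ →+* A) (ψ r) (pL r) (pR r))
        fun k => f (b.x k) := by
  obtain ⟨f, hE, hy⟩ := h.exists_algHom hx hp hR hb cyc
  obtain rfl : (fun i => f (b.E i)) = e := funext hE
  obtain rfl : (fun k => f (b.y k)) = y := funext hy
  have family : QuiverHeckeFamily b.toResidueGrading (f : _ →+* A) ψ := h.quiverHeckeFamily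
  have hs := (quiverHeckeFamily_iff family.intertwines).1 family
  have x_zero (h0 : 0 < n) : (f : _ →+* A) (b.x ⟨0, h0⟩) = 0 :=
    IsCyclotomic.map_x_zero (b := b.toResidueGrading) cyc h0
  refine ⟨f, hE, hy, hs, isJucysMurphy_of_straightens hs x_zero fun r => ?_⟩
  have hr := (straightens_reflect_iff (pR r)).2 ((family.intertwines r).x (pR r))
  simpa [(pL_ne_pR r).symm] using hr

end Cyclotomic

theorem natCast_mem_jacobson_of_isLocalization {p : ℕ} (hp : p.Prime) (Zp : Type*) [CommRing Zp]
    [Algebra ℤ Zp] {S : Submonoid ℤ} (hS : (S : Set ℤ) = {x : ℤ | ¬(p : ℤ) ∣ x})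
    [IsLocalization S Zp] : (p : Zp) ∈ Ideal.jacobson (⊥ : Ideal Zp) := by
  have prime : (Ideal.span {(p : ℤ)}).IsPrime :=
    (Ideal.span_singleton_prime (mod_cast hp.ne_zero)).2 (Nat.prime_iff_prime_int.1 hp)
  obtain rfl : S = (Ideal.span {(p : ℤ)}).primeCompl := SetLike.ext' <| hS.trans <| Set.ext fun x =>
    (not_congr Ideal.mem_span_singleton).symm
  have := IsLocalization.AtPrime.isLocalRing Zp (Ideal.span {(p : ℤ)})
  rw [IsLocalRing.jacobson_eq_maximalIdeal ⊥ bot_ne_top]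
  simpa only [map_natCast] using
    (IsLocalization.AtPrime.to_map_mem_maximal_iff Zp (Ideal.span {(p : ℤ)}) (p : ℤ)).2
      (Ideal.mem_span_singleton_self _)

theorem symmetric_group_KLR_presentation_general (p : ℕ) (hp : p.Prime) (hodd : Odd p) [NeZero p]
    (n : ℕ) (R : Type*) [CommRing R] (hR : (p : R) ∈ Ideal.jacobson (⊥ : Ideal R)) :
    Nonempty (MonoidAlgebra R (Equiv.Perm (Fin n)) ≃ₐ[R] RingQuot (S1Rel R n p)) := by
  have : Fact (2 < p) := ⟨hp.two_le.lt_of_ne (hodd.ne_two_of_dvd_nat dvd_rfl).symm⟩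
  obtain ⟨b, hx, hb⟩ := exists_residueData hp hR (SpectralRing.aeval_x (ι := Fin n) (R := R)
    (cs := contents n))
  have cyc := isCyclotomic_of_s1Rel (klrMk_eq_of_s1Rel (R := R) (n := n) (p := p))
  have klr := klrFamily_of_s1Rel (klrMk_eq_of_s1Rel (R := R) (n := n) (p := p))
  obtain ⟨f, fE, fy, symm, jm⟩ := klr.exists_reflections hp hR hx hb cyc
  obtain ⟨Θ, hΘ⟩ := symm.exists_algHom (R := R)
  obtain ⟨g, ψ, family, hψ, jm'⟩ :=
    (symmetricRelations_of R n).exists_quiverHeckeFamily hx hp hR hb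
  have cyc' := hb.isCyclotomic hp hR jm'.zero
  obtain ⟨Ψ, ΨE, Ψψ, Ψy⟩ := family.klrFamily.exists_presented_algHom (R := R) cyc'
  have Θg : Θ.comp g = f := algHom_ext_of_isJucysMurphy hx
    (by simpa only [AlgHom.comp_apply, RingHom.coe_coe, hΘ] using
      jm'.map (Θ : _ →+* RingQuot (S1Rel R n p))) jm
  have Ψf : Ψ.comp f = g := algHom_ext_of_y_E hx
    (fun i => (congrArg Ψ (fE i)).trans (ΨE i)) fun k => (congrArg Ψ (fy k)).trans (Ψy k)
  have Θψ (r) : Θ (ψ r) = klrMk R n p (kPsi R r) := by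
    refine (b.reflect_bijective (f : _ →+* _) (pL r) (pR r)).injective ?_
    refine Eq.trans ?_ ((congrArg Θ (hψ r)).trans (hΘ r))
    exact Θg ▸ (b.map_reflect (g : _ →+* _) (Θ : _ →+* RingQuot (S1Rel R n p)) (ψ r) _ _).symm
  refine ⟨AlgEquiv.ofAlgHom Θ Ψ (presented_algHom_ext (fun i => ?_) (fun r => ?_) fun k => ?_)
    (groupAlgebra_algHom_ext fun r => ?_)⟩
  · exact (congrArg Θ (ΨE i)).trans ((DFunLike.congr_fun Θg _).trans (fE i))
  · exact (congrArg Θ (Ψψ r)).trans (Θψ r)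
  · exact (congrArg Θ (Ψy k)).trans ((DFunLike.congr_fun Θg _).trans (fy k))
  · refine (congrArg Ψ (hΘ r)).trans (Eq.trans ?_ (hψ r))
    rw [← Ψf, ← Ψψ r]
    exact b.map_reflect (f : _ →+* _)
      (Ψ : RingQuot (S1Rel R n p) →+* MonoidAlgebra R (Equiv.Perm (Fin n))) _ _ _

/-- for an odd prime `p`, the group algebra `ℤ_(p) S_n` (where
`ℤ_(p)` is any model of the localisation of `ℤ` at the submonoid of integers prime
to `p`) is isomorphic as a `ℤ_(p)`-algebra to the algebra presented by the generators
`f_i, ψ_r, y_k` and the listed relations. -/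
theorem symmetric_group_KLR_presentation
    (p : ℕ) (hp : p.Prime) (hodd : Odd p) [NeZero p] (n : ℕ)
    (Zp : Type) [CommRing Zp] [Algebra ℤ Zp] (S : Submonoid ℤ)
    (hS : (S : Set ℤ) = {x : ℤ | ¬(p : ℤ) ∣ x}) [IsLocalization S Zp] :
    Nonempty (MonoidAlgebra Zp (Equiv.Perm (Fin n)) ≃ₐ[Zp] RingQuot (S1Rel Zp n p)) := by
  exact symmetric_group_KLR_presentation_general p hp hodd n Zp
    (natCast_mem_jacobson_of_isLocalization hp Zp hS)

end Paper
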